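/- arXiv:2212.14265 — 4 statements merged into one kernel-verified Lean document; each statement's English description precedes it below -/
import Mathlib

section
/- Let q₁,…,q₆ ∈ ℝ² be six points in convex position, and let G be the set of the 12 pairs of {1,…,6} other than {1,4}, {2,5}, {3,6} (the graph of an octahedron). If the three lines through q₁,q₄, through q₂,q₅ and through q₃,q₆ have a common point, then the rows of C₃(q₁,…,q₆) indexed by G form a circuit: they are linearly dependent but the rows indexed by any proper subset of G are linearly independent. If the three lines do not have a common point, then the rows indexed by G are linearly independent (and form a basis of the row space of C₃(q)). -/
open scoped BigOperators

/-- A pair `{i,j}` of distinct vertices of the `n`-gon.  Vertices `1,…,n` are represented by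
`Fin n` (vertex `i` corresponds to `i-1 : Fin n`), and a pair is recorded with its endpoints
in increasing order. -/
abbrev Pair (n : ℕ) := {p : Fin n × Fin n // p.1 < p.2}

/-- Two pairs `{i,j}` (`i<j`) and `{k,l}` (`k<l`) cross if `i<k<j<l` or `k<i<l<j`. -/
def Cross {n : ℕ} (e f : Pair n) : Prop :=
  (e.val.1 < f.val.1 ∧ f.val.1 < e.val.2 ∧ e.val.2 < f.val.2) ∨
  (f.val.1 < e.val.1 ∧ e.val.1 < f.val.2 ∧ f.val.2 < e.val.2)

/-- A set of pairs is `(k+1)`-crossing-free if it contains no `k+1` pairwise crossing pairs. -/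
def CrossingFree (n k : ℕ) (S : Set (Pair n)) : Prop :=
  ¬ ∃ C : Finset (Pair n), ↑C ⊆ S ∧ C.card = k + 1 ∧
      ∀ e ∈ C, ∀ f ∈ C, e ≠ f → Cross e f

/-- A `k`-triangulation of the `n`-gon: an inclusion-maximal `(k+1)`-crossing-free set. -/
def IsTriangulation (n k : ℕ) (T : Set (Pair n)) : Prop :=
  CrossingFree n k T ∧ ∀ S : Set (Pair n), CrossingFree n k S → T ⊆ S → S = T

/-- The length of a pair `{i,j}` with respect to the `N`-gon: `min (j-i) (N-(j-i))`. -/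
def pairLen (N : ℕ) {n : ℕ} (e : Pair n) : ℕ :=
  min ((e.val.2 : ℕ) - (e.val.1 : ℕ)) (N - ((e.val.2 : ℕ) - (e.val.1 : ℕ)))

/-- A pair is `k`-relevant in the `N`-gon if its length is at least `k+1`. -/
def Relevant (N k : ℕ) {n : ℕ} (e : Pair n) : Prop := k + 1 ≤ pairLen N e

/-- The 2×2 determinant `det (u v)` of two plane vectors. -/
def det2 (u v : ℝ × ℝ) : ℝ := u.1 * v.2 - u.2 * v.1

/-- Points in convex position, listed in counterclockwise order along their convex hull:
they are distinct and every triple `i<j<k` is positively oriented. -/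
def ConvexPosition {n : ℕ} (q : Fin n → ℝ × ℝ) : Prop :=
  Function.Injective q ∧
  ∀ i j k : Fin n, i < j → j < k → 0 < det2 (q j - q i) (q k - q i)

/-- `p` lies on the line through `a` and `b`. -/
def onLine (a b p : ℝ × ℝ) : Prop := det2 (b - a) (p - a) = 0

/-- Row of the bar-and-joint rigidity matrix `R(p)` indexed by the pair `e`:
`p_i - p_j` in block `i`, `p_j - p_i` in block `j`, zeros elsewhere. -/
def bjRow {n d : ℕ} (p : Fin n → Fin d → ℝ) (e : Pair n) : Fin n × Fin d → ℝ :=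
  fun ma =>
    if ma.1 = e.val.1 then p e.val.1 ma.2 - p e.val.2 ma.2
    else if ma.1 = e.val.2 then p e.val.2 ma.2 - p e.val.1 ma.2
    else 0

/-- Row of the hyperconnectivity matrix `H(p)` indexed by the pair `e`:
`p_j` in block `i`, `-p_i` in block `j`, zeros elsewhere. -/
def hypRow {n d : ℕ} (p : Fin n → Fin d → ℝ) (e : Pair n) : Fin n × Fin d → ℝ :=
  fun ma =>
    if ma.1 = e.val.1 then p e.val.2 ma.2
    else if ma.1 = e.val.2 then - p e.val.1 ma.2
    else 0

/-- The vector `c_{ij} = ((x_i-x_j)^{d-1}, (x_i-x_j)^{d-2}(y_i-y_j), …, (y_i-y_j)^{d-1})`. -/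
def cvec (d : ℕ) (qi qj : ℝ × ℝ) : Fin d → ℝ :=
  fun a => (qi.1 - qj.1) ^ (d - 1 - (a : ℕ)) * (qi.2 - qj.2) ^ (a : ℕ)

/-- Row of the cofactor rigidity matrix `C_d(q)` indexed by the pair `e`:
`c_{ij}` in block `i`, `-c_{ij}` in block `j`, zeros elsewhere. -/
def cofRow (d : ℕ) {n : ℕ} (q : Fin n → ℝ × ℝ) (e : Pair n) : Fin n × Fin d → ℝ :=
  fun ma =>
    if ma.1 = e.val.1 then cvec d (q e.val.1) (q e.val.2) ma.2
    else if ma.1 = e.val.2 then - cvec d (q e.val.1) (q e.val.2) ma.2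
    else 0

/-- `x_{ij} = X_i Z_j - Z_i X_j` for vectors in `ℝ³`. -/
def xQ (Qi Qj : ℝ × ℝ × ℝ) : ℝ := Qi.1 * Qj.2.2 - Qi.2.2 * Qj.1

/-- `y_{ij} = Y_i Z_j - Z_i Y_j` for vectors in `ℝ³`. -/
def yQ (Qi Qj : ℝ × ℝ × ℝ) : ℝ := Qi.2.1 * Qj.2.2 - Qi.2.2 * Qj.2.1

/-- The vector `c_{ij} = (x_{ij}^{d-1}, x_{ij}^{d-2} y_{ij}, …, y_{ij}^{d-1})`. -/
def gcvec (d : ℕ) (Qi Qj : ℝ × ℝ × ℝ) : Fin d → ℝ :=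
  fun a => (xQ Qi Qj) ^ (d - 1 - (a : ℕ)) * (yQ Qi Qj) ^ (a : ℕ)

/-- Row of the generalized cofactor rigidity matrix `C_d(Q)` for vectors in `ℝ³`. -/
def gcofRow (d : ℕ) {n : ℕ} (Q : Fin n → ℝ × ℝ × ℝ) (e : Pair n) : Fin n × Fin d → ℝ :=
  fun ma =>
    if ma.1 = e.val.1 then gcvec d (Q e.val.1) (Q e.val.2) ma.2
    else if ma.1 = e.val.2 then - gcvec d (Q e.val.1) (Q e.val.2) ma.2
    else 0

/-- The cone of all nonnegative linear combinations of `{v e : e ∈ S}`. -/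
def coneOf {n : ℕ} {V : Type*} [AddCommGroup V] [Module ℝ V]
    (v : Pair n → V) (S : Set (Pair n)) : Set V :=
  {x | ∃ c : Pair n → ℝ, (∀ e, 0 ≤ c e) ∧ (∀ e, c e ≠ 0 → e ∈ S) ∧ x = ∑ e, c e • v e}

/-- The vectors `(v e)` realize the `k`-associahedron of the `n`-gon as a complete
simplicial fan: (a) the vectors of every `k`-triangulation are linearly independent;
(b) cones of two `k`-triangulations intersect in the cone of their intersection;
(c) the union of all the cones is the linear span of all the vectors. -/
def RealizesFan (n k : ℕ) {V : Type*} [AddCommGroup V] [Module ℝ V]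
    (v : Pair n → V) : Prop :=
  (∀ T : Set (Pair n), IsTriangulation n k T →
      LinearIndependent ℝ (fun e : T => v e.val)) ∧
  (∀ T T' : Set (Pair n), IsTriangulation n k T → IsTriangulation n k T' →
      coneOf v T ∩ coneOf v T' = coneOf v (T ∩ T')) ∧
  (⋃ T ∈ {T : Set (Pair n) | IsTriangulation n k T}, coneOf v T) =
    (Submodule.span ℝ (Set.range v) : Set V)

/-- The octahedron graph: the 12 pairs of `{1,…,6}` other than `{1,4}`, `{2,5}`, `{3,6}`
(0-indexed: `(0,3)`, `(1,4)`, `(2,5)`). -/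
def G15 : Set (Pair 6) :=
  {e | e.val ≠ ((0 : Fin 6), (3 : Fin 6)) ∧ e.val ≠ ((1 : Fin 6), (4 : Fin 6)) ∧
       e.val ≠ ((2 : Fin 6), (5 : Fin 6))}

/-- Six points are in Desargues position: the lines `q₁q₄`, `q₂q₅` and `q₃q₆` are concurrent. -/
def DesarguesPos (q : Fin 6 → ℝ × ℝ) : Prop :=
  ∃ p : ℝ × ℝ, onLine (q 0) (q 3) p ∧ onLine (q 1) (q 4) p ∧ onLine (q 2) (q 5) p

def br15 (q : Fin 6 → ℝ × ℝ) (i j k : Fin 6) : ℝ := det2 (q j - q i) (q k - q i)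

lemma br15_ne {q : Fin 6 → ℝ × ℝ} (hq : ConvexPosition q) (i j k : Fin 6)
    (h1 : i ≠ j) (h2 : i ≠ k) (h3 : j ≠ k) : br15 q i j k ≠ 0 := by
  obtain ⟨_, h⟩ := hq
  simp only [det2, Prod.fst_sub, Prod.snd_sub] at h
  simp only [br15, det2, Prod.fst_sub, Prod.snd_sub]
  intro h0
  rcases lt_or_gt_of_ne h1 with a | a <;> rcases lt_or_gt_of_ne h2 with b | b <;>
    rcases lt_or_gt_of_ne h3 with c | c
  · linarith [h i j k a c]
  · linarith [h i k j b c]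
  · exact absurd (a.trans c) (not_lt.mpr b.le)
  · linarith [h k i j b a]
  · linarith [h j i k a b]
  · exact absurd (a.trans b) (not_lt.mpr c.le)
  · linarith [h j k i c b]
  · linarith [h k j i c a]

lemma rel15 (a b c d : ℝ × ℝ) (wa wb wc wd : ℝ)
    (h0 : wa * a.1 ^ 2 + wb * b.1 ^ 2 + wc * c.1 ^ 2 + wd * d.1 ^ 2 = 0)
    (h1 : wa * (a.1 * a.2) + wb * (b.1 * b.2) + wc * (c.1 * c.2) + wd * (d.1 * d.2) = 0)
    (h2 : wa * a.2 ^ 2 + wb * b.2 ^ 2 + wc * c.2 ^ 2 + wd * d.2 ^ 2 = 0) :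
    wa * det2 a c * det2 a d + wb * det2 b c * det2 b d = 0 := by
  simp only [det2]
  linear_combination (c.2 * d.2) * h0 - (c.1 * d.2 + c.2 * d.1) * h1 + c.1 * d.1 * h2

lemma inv15 (a b c d : ℝ × ℝ) (wa wb wc wd t : ℝ)
    (hab : det2 a b ≠ 0) (hac : det2 a c ≠ 0) (had : det2 a d ≠ 0)
    (hbc : det2 b c ≠ 0) (hbd : det2 b d ≠ 0) (hcd : det2 c d ≠ 0)
    (ha : wa * (det2 a b * det2 a c * det2 a d) = t)
    (hb : wb * (det2 b a * det2 b c * det2 b d) = t)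
    (hc : wc * (det2 c a * det2 c b * det2 c d) = t)
    (hd : wd * (det2 d a * det2 d b * det2 d c) = t) :
    wa * a.1 ^ 2 + wb * b.1 ^ 2 + wc * c.1 ^ 2 + wd * d.1 ^ 2 = 0 ∧
    wa * (a.1 * a.2) + wb * (b.1 * b.2) + wc * (c.1 * c.2) + wd * (d.1 * d.2) = 0 ∧
    wa * a.2 ^ 2 + wb * b.2 ^ 2 + wc * c.2 ^ 2 + wd * d.2 ^ 2 = 0 := by
  have sw : ∀ u v : ℝ × ℝ, det2 u v = - det2 v u := by intro u v; simp only [det2]; ring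
  rw [sw b a] at hb
  rw [sw c a, sw c b] at hc
  rw [sw d a, sw d b, sw d c] at hd
  have ea : wa = t / (det2 a b * det2 a c * det2 a d) := by
    rw [eq_div_iff (by positivity)]; exact ha
  have eb : wb = - t / (det2 a b * det2 b c * det2 b d) := by
    rw [eq_div_iff (by positivity)]; linear_combination -hb
  have ec : wc = t / (det2 a c * det2 b c * det2 c d) := by
    rw [eq_div_iff (by positivity)]; linear_combination hc
  have ed : wd = - t / (det2 a d * det2 b d * det2 c d) := by
    rw [eq_div_iff (by positivity)]; linear_combination -hd
  subst ea eb ec ed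
  refine ⟨?_, ?_, ?_⟩ <;>
  · field_simp
    simp only [det2]
    ring

/-- antisymmetric weight -/
def W15 (w : Pair 6 → ℝ) (i j : Fin 6) : ℝ :=
  if h : i < j then w ⟨(i, j), h⟩ else if h : j < i then - w ⟨(j, i), h⟩ else 0

lemma W15_anti (w : Pair 6 → ℝ) (i j : Fin 6) : W15 w j i = - W15 w i j := by
  unfold W15
  rcases lt_trichotomy i j with h | h | h
  · simp [h, h.not_gt]
  · simp [h]
  · simp [h, h.not_gt]

lemma sumPair15 (f : Pair 6 → ℝ) : ∑ e, f e =
    ∑ i : Fin 6, ∑ j : Fin 6, if h : i < j then f ⟨(i, j), h⟩ else 0 := by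
  rw [← Fintype.sum_prod_type' (f := fun i j : Fin 6 => if h : i < j then f ⟨(i, j), h⟩ else 0)]
  rw [← Finset.sum_filter_add_sum_filter_not Finset.univ (fun p : Fin 6 × Fin 6 => p.1 < p.2)]
  rw [Finset.sum_eq_zero (s := Finset.filter (fun p : Fin 6 × Fin 6 => ¬ p.1 < p.2) _), add_zero]
  · rw [Finset.sum_subtype (p := fun p : Fin 6 × Fin 6 => p.1 < p.2) _ (by simp)]
    exact Finset.sum_congr rfl fun e _ => by rw [dif_pos e.2]
  · intro p hp
    rw [dif_neg (Finset.mem_filter.mp hp).2]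

lemma rowSum15 (q : Fin 6 → ℝ × ℝ) (w : Pair 6 → ℝ) (i : Fin 6) (a : Fin 3) :
    (∑ e, w e • cofRow 3 q e) (i, a) = ∑ j, W15 w i j * cvec 3 (q j) (q i) a := by
  have hs : ∀ x y, cvec 3 x y a = cvec 3 y x a := by
    intro x y; fin_cases a <;> simp [cvec] <;> ring
  rw [Finset.sum_apply, sumPair15]
  fin_cases i <;>
    simp [Fin.sum_univ_six, cofRow, W15] <;> (try simp only [hs (q 1) (q 0), hs (q 2) (q 0), hs (q 3) (q 0), hs (q 4) (q 0), hs (q 5) (q 0), hs (q 2) (q 1), hs (q 3) (q 1), hs (q 4) (q 1), hs (q 5) (q 1), hs (q 3) (q 2), hs (q 4) (q 2), hs (q 5) (q 2), hs (q 4) (q 3), hs (q 5) (q 3), hs (q 5) (q 4)]) <;> first | ring1 | simp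

lemma sumRot15 (f : Fin 6 → ℝ) (i : Fin 6) (h0 : f i = 0) (h3 : f (i + 3) = 0) :
    ∑ j, f j = f (i + 1) + f (i + 2) + f (i + 4) + f (i + 5) := by
  rw [← Equiv.sum_comp (Equiv.addLeft i), Fin.sum_univ_six]
  simp [h0, h3]

/-- the equilibrium equations at a vertex -/
def Eq15 (q : Fin 6 → ℝ × ℝ) (W : Fin 6 → Fin 6 → ℝ) (i : Fin 6) : Prop :=
  (W i (i+1) * (q (i+1) - q i).1 ^ 2 + W i (i+2) * (q (i+2) - q i).1 ^ 2 +
    W i (i+4) * (q (i+4) - q i).1 ^ 2 + W i (i+5) * (q (i+5) - q i).1 ^ 2 = 0) ∧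
  (W i (i+1) * ((q (i+1) - q i).1 * (q (i+1) - q i).2) +
    W i (i+2) * ((q (i+2) - q i).1 * (q (i+2) - q i).2) +
    W i (i+4) * ((q (i+4) - q i).1 * (q (i+4) - q i).2) +
    W i (i+5) * ((q (i+5) - q i).1 * (q (i+5) - q i).2) = 0) ∧
  (W i (i+1) * (q (i+1) - q i).2 ^ 2 + W i (i+2) * (q (i+2) - q i).2 ^ 2 +
    W i (i+4) * (q (i+4) - q i).2 ^ 2 + W i (i+5) * (q (i+5) - q i).2 ^ 2 = 0)

lemma W15_self (w : Pair 6 → ℝ) (i : Fin 6) : W15 w i i = 0 := by simp [W15]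

lemma W15_opp (w : Pair 6 → ℝ) (hw : ∀ e, e ∉ G15 → w e = 0) (i : Fin 6) :
    W15 w i (i + 3) = 0 := by
  fin_cases i <;> simp [W15] <;> apply hw <;> simp [G15]

lemma stress_iff15 (q : Fin 6 → ℝ × ℝ) (w : Pair 6 → ℝ) (hw : ∀ e, e ∉ G15 → w e = 0) :
    (∑ e, w e • cofRow 3 q e = 0) ↔ ∀ i, Eq15 q (W15 w) i := by
  have key : ∀ i a, (∑ e, w e • cofRow 3 q e) (i, a) =
      W15 w i (i+1) * cvec 3 (q (i+1)) (q i) a + W15 w i (i+2) * cvec 3 (q (i+2)) (q i) a +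
      W15 w i (i+4) * cvec 3 (q (i+4)) (q i) a + W15 w i (i+5) * cvec 3 (q (i+5)) (q i) a := by
    intro i a
    rw [rowSum15, sumRot15 _ i (by rw [W15_self, zero_mul]) (by rw [W15_opp w hw, zero_mul])]
  constructor
  · intro h i
    have h0 := key i 0
    have h1 := key i 1
    have h2 := key i 2
    rw [h] at h0 h1 h2
    simp [cvec] at h0 h1 h2
    exact ⟨by simpa using h0.symm, by simpa using h1.symm, by simpa using h2.symm⟩
  · intro h
    funext ⟨i, a⟩
    obtain ⟨h0, h1, h2⟩ := h i
    rw [key]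
    fin_cases a
    · simpa [cvec] using h0
    · simpa [cvec] using h1
    · simpa [cvec] using h2

lemma all15 (a b c d : ℝ × ℝ) (wa wb wc wd : ℝ)
    (h0 : wa * a.1 ^ 2 + wb * b.1 ^ 2 + wc * c.1 ^ 2 + wd * d.1 ^ 2 = 0)
    (h1 : wa * (a.1 * a.2) + wb * (b.1 * b.2) + wc * (c.1 * c.2) + wd * (d.1 * d.2) = 0)
    (h2 : wa * a.2 ^ 2 + wb * b.2 ^ 2 + wc * c.2 ^ 2 + wd * d.2 ^ 2 = 0)
    (hbc : det2 b c ≠ 0) (hbd : det2 b d ≠ 0) (hcd : det2 c d ≠ 0) (ha : wa = 0) :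
    wb = 0 ∧ wc = 0 ∧ wd = 0 := by
  have sw : ∀ u v : ℝ × ℝ, det2 u v = - det2 v u := by intro u v; simp only [det2]; ring
  have r1 := rel15 a b c d wa wb wc wd h0 h1 h2
  have r2 := rel15 a c b d wa wc wb wd (by linarith) (by linarith) (by linarith)
  have r3 := rel15 a d b c wa wd wb wc (by linarith) (by linarith) (by linarith)
  rw [sw c b] at r2
  rw [sw d b, sw d c] at r3
  simp [ha, hbc, hbd, hcd] at r1 r2 r3
  exact ⟨r1, r2, r3⟩

lemma vert15 {q : Fin 6 → ℝ × ℝ} (hq : ConvexPosition q) (W : Fin 6 → Fin 6 → ℝ)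
    (hs : ∀ i, W i i = 0) (ho : ∀ i, W i (i + 3) = 0)
    (i : Fin 6) (hE : Eq15 q W i) (k : Fin 6) (hk : k ≠ i) (hk' : k ≠ i + 3) (h : W i k = 0) :
    ∀ j, W i j = 0 := by
  obtain ⟨h0, h1, h2⟩ := hE
  have n : ∀ x y : Fin 6, x ≠ 0 → y ≠ 0 → x ≠ y → det2 (q (i + x) - q i) (q (i + y) - q i) ≠ 0 :=
    fun x y hx hy hxy => br15_ne hq i (i + x) (i + y) (by simpa using hx)
      (by simpa using hy) (by simpa using hxy)
  have fin : W i (i+1) = 0 ∧ W i (i+2) = 0 ∧ W i (i+4) = 0 ∧ W i (i+5) = 0 := by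
    obtain ⟨x, rfl⟩ : ∃ x, k = i + x := ⟨k - i, by simp⟩
    have hx0 : x ≠ 0 := by simpa using hk
    have hx3 : x ≠ 3 := by simpa using hk'
    have hx : x = 1 ∨ x = 2 ∨ x = 4 ∨ x = 5 := by omega
    rcases hx with rfl | rfl | rfl | rfl
    · have := all15 _ _ _ _ _ _ _ _ h0 h1 h2 (n 2 4 (by decide) (by decide) (by decide))
        (n 2 5 (by decide) (by decide) (by decide)) (n 4 5 (by decide) (by decide) (by decide)) h
      tauto
    · have := all15 (q (i+2) - q i) (q (i+1) - q i) (q (i+4) - q i) (q (i+5) - q i) _ (W i (i+1)) (W i (i+4)) (W i (i+5))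
        (by linarith) (by linarith) (by linarith) (n 1 4 (by decide) (by decide) (by decide))
        (n 1 5 (by decide) (by decide) (by decide)) (n 4 5 (by decide) (by decide) (by decide)) h
      tauto
    · have := all15 (q (i+4) - q i) (q (i+1) - q i) (q (i+2) - q i) (q (i+5) - q i) _ (W i (i+1)) (W i (i+2)) (W i (i+5))
        (by linarith) (by linarith) (by linarith) (n 1 2 (by decide) (by decide) (by decide))
        (n 1 5 (by decide) (by decide) (by decide)) (n 2 5 (by decide) (by decide) (by decide)) h
      tauto
    · have := all15 (q (i+5) - q i) (q (i+1) - q i) (q (i+2) - q i) (q (i+4) - q i) _ (W i (i+1)) (W i (i+2)) (W i (i+4))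
        (by linarith) (by linarith) (by linarith) (n 1 2 (by decide) (by decide) (by decide))
        (n 1 4 (by decide) (by decide) (by decide)) (n 2 4 (by decide) (by decide) (by decide)) h
      tauto
  intro j
  obtain ⟨x, rfl⟩ : ∃ x, j = i + x := ⟨j - i, by simp⟩
  have hx : x = 0 ∨ x = 3 ∨ x = 1 ∨ x = 2 ∨ x = 4 ∨ x = 5 := by omega
  rcases hx with rfl | rfl | rfl | rfl | rfl | rfl
  · simpa using hs i
  · exact ho i
  all_goals tauto

lemma prop15 {q : Fin 6 → ℝ × ℝ} (hq : ConvexPosition q) (w : Pair 6 → ℝ)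
    (hw : ∀ e, e ∉ G15 → w e = 0) (hE : ∑ e, w e • cofRow 3 q e = 0)
    (e : Pair 6) (he : e ∈ G15) (h0 : w e = 0) : w = 0 := by
  rw [stress_iff15 q w hw] at hE
  have hv := fun i => vert15 hq (W15 w) (W15_self w) (W15_opp w hw) i (hE i)
  have start : ∀ j, W15 w e.1.1 j = 0 := by
    apply hv e.1.1 e.1.2 e.2.ne'
    · obtain ⟨⟨a, b⟩, hab⟩ := e
      simp only [G15, Set.mem_ofPred_eq, ne_eq, Prod.mk.injEq] at he hab ⊢
      omega
    · unfold W15; rw [dif_pos e.2]; exact h0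
  have step : ∀ i, (∀ j, W15 w i j = 0) → ∀ j, W15 w (i + 1) j = 0 := by
    intro i hi
    refine hv (i + 1) i (by simp) (by omega) ?_
    rw [W15_anti, hi, neg_zero]
  have s1 := step _ start
  have s2 := step _ s1
  have s3 := step _ s2
  have s4 := step _ s3
  have s5 := step _ s4
  simp only [add_assoc, Fin.reduceAdd] at s2 s3 s4 s5
  funext f
  have all : ∀ i j, W15 w i j = 0 := by
    intro i
    obtain ⟨x, rfl⟩ : ∃ x, i = e.1.1 + x := ⟨i - e.1.1, by simp⟩
    have hx : x = 0 ∨ x = 3 ∨ x = 1 ∨ x = 2 ∨ x = 4 ∨ x = 5 := by omega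
    rcases hx with rfl | rfl | rfl | rfl | rfl | rfl
    · simpa using start
    all_goals assumption
  have := all f.1.1 f.1.2
  unfold W15 at this
  rw [dif_pos f.2] at this
  exact this

/-- concurrency determinant -/
def D15 (q : Fin 6 → ℝ × ℝ) : ℝ :=
  det2 (q 5 - q 2) (q 0 - q 2) * det2 (q 3 - q 0) (q 4 - q 1) +
  det2 (q 5 - q 2) (q 3 - q 0) * det2 (q 1 - q 0) (q 4 - q 1)

lemma desargues_of_D15 {q : Fin 6 → ℝ × ℝ} (hq : ConvexPosition q) (h : D15 q = 0) :
    DesarguesPos q := by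
  have h1 := hq.2 0 3 4 (by decide) (by decide)
  have h2 := hq.2 0 1 3 (by decide) (by decide)
  have hne : det2 (q 3 - q 0) (q 4 - q 1) ≠ 0 := by
    have : det2 (q 3 - q 0) (q 4 - q 1) =
        det2 (q 3 - q 0) (q 4 - q 0) + det2 (q 1 - q 0) (q 3 - q 0) := by
      simp only [det2, Prod.fst_sub, Prod.snd_sub]; ring
    rw [this]; positivity
  set Δ := det2 (q 3 - q 0) (q 4 - q 1) with hΔ
  obtain ⟨s, hs⟩ : ∃ s, s * Δ = det2 (q 1 - q 0) (q 4 - q 1) := ⟨_, div_mul_cancel₀ _ hne⟩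
  unfold D15 at h
  rw [← hΔ, ← hs] at h
  refine ⟨q 0 + s • (q 3 - q 0), ?_, ?_, ?_⟩
  · simp [onLine, det2]; ring
  · simp only [onLine, det2, Prod.fst_sub, Prod.snd_sub, Prod.fst_add, Prod.snd_add,
      Prod.smul_fst, Prod.smul_snd, smul_eq_mul] at hs hΔ ⊢
    rw [hΔ] at hs
    linear_combination -hs
  · apply mul_right_cancel₀ hne
    rw [zero_mul, ← h]
    simp only [onLine, det2, Prod.fst_sub, Prod.snd_sub, Prod.fst_add, Prod.snd_add,
      Prod.smul_fst, Prod.smul_snd, smul_eq_mul]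
    ring

lemma D15_of_stress {q : Fin 6 → ℝ × ℝ} (hq : ConvexPosition q) (w : Pair 6 → ℝ)
    (hw : ∀ e, e ∉ G15 → w e = 0) (hE : ∑ e, w e • cofRow 3 q e = 0)
    (hne : ∀ e ∈ G15, w e ≠ 0) : D15 q = 0 := by
  rw [stress_iff15 q w hw] at hE
  have nz : ∀ i j k : Fin 6, i ≠ j → i ≠ k → j ≠ k → br15 q i j k ≠ 0 := br15_ne hq
  obtain ⟨a0, a1, a2⟩ := hE 0
  obtain ⟨b0, b1, b2⟩ := hE 1
  obtain ⟨c0, c1, c2⟩ := hE 2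
  simp only [Fin.reduceAdd] at a0 a1 a2 b0 b1 b2 c0 c1 c2
  have r0 := rel15 _ _ _ _ _ _ _ _ a0 a1 a2
  have r1 := rel15 (q 0 - q 1) (q 2 - q 1) (q 3 - q 1) (q 5 - q 1) (W15 w 1 0) (W15 w 1 2)
    (W15 w 1 3) (W15 w 1 5) (by linear_combination b0) (by linear_combination b1)
    (by linear_combination b2)
  have r2 := rel15 (q 0 - q 2) (q 1 - q 2) (q 3 - q 2) (q 4 - q 2) (W15 w 2 0) (W15 w 2 1)
    (W15 w 2 3) (W15 w 2 4) (by linear_combination c0) (by linear_combination c1)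
    (by linear_combination c2)
  rw [W15_anti w 0 1] at r1
  rw [W15_anti w 0 2, W15_anti w 1 2] at r2
  have n1 : W15 w 0 1 ≠ 0 := by
    simpa [W15] using hne ⟨(0, 1), by decide⟩ (by simp [G15])
  have n2 : W15 w 0 2 ≠ 0 := by
    simpa [W15] using hne ⟨(0, 2), by decide⟩ (by simp [G15])
  have n3 : W15 w 1 2 ≠ 0 := by
    simpa [W15] using hne ⟨(1, 2), by decide⟩ (by simp [G15])
  change _ * br15 q 0 1 4 * br15 q 0 1 5 + _ * br15 q 0 2 4 * br15 q 0 2 5 = 0 at r0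
  change _ * br15 q 1 0 3 * br15 q 1 0 5 + _ * br15 q 1 2 3 * br15 q 1 2 5 = 0 at r1
  change _ * br15 q 2 0 3 * br15 q 2 0 4 + _ * br15 q 2 1 3 * br15 q 2 1 4 = 0 at r2
  have e1 : br15 q 1 0 5 = - br15 q 0 1 5 := by simp [br15, det2]; ring
  have e2 : br15 q 2 0 4 = - br15 q 0 2 4 := by simp [br15, det2]; ring
  have e3 : br15 q 2 1 3 = - br15 q 1 2 3 := by simp [br15, det2]; ring
  rw [e1] at r1
  rw [e2, e3] at r2
  have m1 := nz 0 1 5 (by decide) (by decide) (by decide)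
  have m2 := nz 0 2 4 (by decide) (by decide) (by decide)
  have m3 := nz 1 2 3 (by decide) (by decide) (by decide)
  have m4 := nz 0 1 2 (by decide) (by decide) (by decide)
  generalize W15 w 0 1 = x at *
  generalize W15 w 0 2 = y at *
  generalize W15 w 1 2 = z at *
  have poly : br15 q 0 1 4 * br15 q 1 2 5 * br15 q 2 0 3 +
      br15 q 0 2 5 * br15 q 1 0 3 * br15 q 2 1 4 = br15 q 0 1 2 * D15 q := by
    simp only [br15, det2, D15, Prod.fst_sub, Prod.snd_sub]; ring
  have fin : (x * y * z * br15 q 0 1 5 * br15 q 0 2 4 * br15 q 1 2 3 * br15 q 0 1 2) * D15 q = 0 := by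
    generalize br15 q 0 1 5 = B1 at *
    generalize br15 q 0 2 4 = B2 at *
    generalize br15 q 1 2 3 = B3 at *
    generalize br15 q 0 1 4 = C1 at *
    generalize br15 q 1 2 5 = C2 at *
    generalize br15 q 2 0 3 = C3 at *
    generalize br15 q 0 2 5 = F1 at *
    generalize br15 q 1 0 3 = F2 at *
    generalize br15 q 2 1 4 = F3 at *
    linear_combination (z*B3*C2*(y*C3*B2)) * r0 - (y*B2*F1*(y*C3*B2)) * r1 + (y*B2*F1*(x*F2*B1)) * r2 - x*y*z*B1*B2*B3*poly
  simpa [n1, n2, n3, m1, m2, m3, m4] using fin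

/-- the explicit stress -/
noncomputable def U15 (q : Fin 6 → ℝ × ℝ) (i j : Fin 6) : ℝ :=
  (det2 (q i - q (i + 3)) (q j - q (j + 3)) * (br15 q i j (5 * (i + j)) * br15 q i j (5 * (i + j) + 3)))⁻¹

lemma U15_anti (q : Fin 6 → ℝ × ℝ) (i j : Fin 6) : U15 q j i = - U15 q i j := by
  have h1 : ∀ k, br15 q j i k = - br15 q i j k := by
    intro k; simp [br15, det2]; ring
  have h2 : det2 (q j - q (j + 3)) (q i - q (i + 3)) = - det2 (q i - q (i + 3)) (q j - q (j + 3)) := by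
    simp only [det2]; ring
  unfold U15
  rw [h1, h1, h2, add_comm j i, ← inv_neg]
  congr 1; ring

lemma U15_self (q : Fin 6 → ℝ × ℝ) (i : Fin 6) : U15 q i i = 0 := by
  have : det2 (q i - q (i + 3)) (q i - q (i + 3)) = 0 := by simp [det2]; ring
  simp [U15, this]

lemma add33 (i : Fin 6) : i + 3 + 3 = i := by omega

lemma U15_opp (q : Fin 6 → ℝ × ℝ) (i : Fin 6) : U15 q i (i + 3) = 0 := by
  have : det2 (q i - q (i + 3)) (q (i + 3) - q (i + 3 + 3)) = 0 := by
    rw [add33]; simp [det2]; ring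
  simp [U15, this]

lemma dd15 {q : Fin 6 → ℝ × ℝ} (p : ℝ × ℝ) (i j : Fin 6) (t : ℝ)
    (ht : q i - p = t • (q i - q (i + 3))) (hj : onLine (q j) (q (j + 3)) p) :
    br15 q i j (j + 3) = t * det2 (q i - q (i + 3)) (q j - q (j + 3)) := by
  have e1 := congrArg Prod.fst ht
  have e2 := congrArg Prod.snd ht
  simp [onLine, det2, br15] at *
  linear_combination ((q j).2 - (q (j+3)).2) * e1 - ((q j).1 - (q (j+3)).1) * e2 + hj

lemma comb15 : ∀ i j : Fin 6, j ≠ i → j ≠ i + 3 →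
    i ≠ 5 * (i + j) ∧ j ≠ 5 * (i + j) ∧ i ≠ 5 * (i + j) + 3 ∧ j ≠ 5 * (i + j) + 3 := by decide

lemma Ueq15 {q : Fin 6 → ℝ × ℝ} (hq : ConvexPosition q) (p : ℝ × ℝ) (i j : Fin 6) (t : ℝ)
    (ht : q i - p = t • (q i - q (i + 3))) (hj : onLine (q j) (q (j + 3)) p)
    (h1 : j ≠ i) (h2 : j ≠ i + 3) :
    U15 q i j * (br15 q i j (j + 3) * (br15 q i j (5 * (i + j)) * br15 q i j (5 * (i + j) + 3))) = t := by
  obtain ⟨c1, c2, c3, c4⟩ := comb15 i j h1 h2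
  have n0 := br15_ne hq i j (j + 3) h1.symm (by omega) (by simp)
  have n1 := br15_ne hq i j (5 * (i + j)) h1.symm c1 c2
  have n2 := br15_ne hq i j (5 * (i + j) + 3) h1.symm c3 c4
  have e := dd15 p i j t ht hj
  rw [e] at n0 ⊢
  have n3 := right_ne_zero_of_mul n0
  unfold U15
  field_simp

lemma onLine15 {q : Fin 6 → ℝ × ℝ} (h : ∃ p : ℝ × ℝ, onLine (q 0) (q 3) p ∧ onLine (q 1) (q 4) p ∧ onLine (q 2) (q 5) p) :
    ∃ p, ∀ i, onLine (q i) (q (i + 3)) p := by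
  obtain ⟨p, h0, h1, h2⟩ := h
  refine ⟨p, ?_⟩
  have sw : ∀ a b, onLine a b p → onLine b a p := by
    intro a b h; simp [onLine, det2] at *; linear_combination -h
  intro i
  fin_cases i
  · exact h0
  · exact h1
  · exact h2
  · exact sw _ _ h0
  · exact sw _ _ h1
  · exact sw _ _ h2

lemma exT15 {a b p : ℝ × ℝ} (hab : a ≠ b) (h : onLine a b p) : ∃ t : ℝ, a - p = t • (a - b) := by
  simp only [onLine, det2, Prod.fst_sub, Prod.snd_sub] at h
  by_cases h1 : a.1 - b.1 = 0
  · have h2 : a.2 - b.2 ≠ 0 := by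
      intro h2; exact hab (Prod.ext (by linarith) (by linarith))
    refine ⟨(a.2 - p.2) / (a.2 - b.2), Prod.ext ?_ ?_⟩ <;> simp <;> field_simp
    linear_combination -h
  · refine ⟨(a.1 - p.1) / (a.1 - b.1), Prod.ext ?_ ?_⟩ <;> simp <;> field_simp
    linear_combination h

lemma UEq15 {q : Fin 6 → ℝ × ℝ} (hq : ConvexPosition q) (hD : DesarguesPos q) (i : Fin 6) :
    Eq15 q (U15 q) i ∧ ∀ j, j ≠ i → j ≠ i + 3 → U15 q i j ≠ 0 := by
  obtain ⟨p, hp⟩ := onLine15 hD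
  obtain ⟨t, ht⟩ := exT15 (fun h => by simpa using hq.1 h) (hp i)
  have hU := fun j => Ueq15 hq p i j t ht (hp j)
  have t0 : t ≠ 0 := by
    rintro rfl
    have := dd15 p i (i + 1) 0 ht (hp _)
    rw [zero_mul] at this
    exact br15_ne hq i (i + 1) (i + 1 + 3) (by simp) (by omega) (by simp) this
  refine ⟨?_, ?_⟩
  · have n : ∀ x y : Fin 6, x ≠ 0 → y ≠ 0 → x ≠ y → det2 (q (i + x) - q i) (q (i + y) - q i) ≠ 0 :=
      fun x y hx hy hxy => br15_ne hq i (i + x) (i + y) (by simpa using hx)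
        (by simpa using hy) (by simpa using hxy)
    have u1 := hU (i + 1) (by simp) (by simp)
    have u2 := hU (i + 2) (by simp) (by simp)
    have u4 := hU (i + 4) (by simp) (by simp)
    have u5 := hU (i + 5) (by simp) (by simp)
    refine inv15 _ _ _ _ _ _ _ _ t (n _ _ (by decide) (by decide) (by decide))
     (n _ _ (by decide) (by decide) (by decide)) (n _ _ (by decide) (by decide) (by decide))
     (n _ _ (by decide) (by decide) (by decide)) (n _ _ (by decide) (by decide) (by decide))
     (n _ _ (by decide) (by decide) (by decide)) ?_ ?_ ?_ ?_
    · clear u2 u4 u5 hU n ht; rw [← u1]; congr 1; fin_cases i <;> simp [br15] <;> ring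
    · clear u1 u4 u5 hU n ht; rw [← u2]; congr 1; fin_cases i <;> simp [br15] <;> ring
    · clear u2 u1 u5 hU n ht; rw [← u4]; congr 1; fin_cases i <;> simp [br15] <;> ring
    · clear u2 u4 u1 hU n ht; rw [← u5]; congr 1; fin_cases i <;> simp [br15] <;> ring
  · intro j h1 h2 h0
    have := hU j h1 h2
    rw [h0, zero_mul] at this
    exact t0 this.symm

lemma exStress15 {q : Fin 6 → ℝ × ℝ} (hq : ConvexPosition q) (hD : DesarguesPos q) :
    ∃ w : Pair 6 → ℝ, (∀ e, e ∉ G15 → w e = 0) ∧ (∑ e, w e • cofRow 3 q e = 0) ∧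
      w ⟨(0, 1), by decide⟩ ≠ 0 := by
  have off : ∀ e : Pair 6, e ∉ G15 → U15 q e.1.1 e.1.2 = 0 := by
    rintro ⟨⟨a, b⟩, hab⟩ he
    have : b = a + 3 := by
      simp only [G15, Set.mem_ofPred_eq, ne_eq, Prod.mk.injEq] at he hab ⊢
      omega
    simp only [this, U15_opp]
  refine ⟨fun e => U15 q e.1.1 e.1.2, off, ?_, ?_⟩
  · rw [stress_iff15]
    · have : W15 (fun e => U15 q e.1.1 e.1.2) = U15 q := by
        funext i j
        unfold W15
        split_ifs with h1 h2
        · rfl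
        · exact (U15_anti q j i).symm
        · have : i = j := by omega
          rw [this, U15_self]
      rw [this]
      exact fun i => (UEq15 hq hD i).1
    · exact off
  · exact (UEq15 hq hD 0).2 1 (by decide) (by decide)

lemma indep15 {q : Fin 6 → ℝ × ℝ} (S : Set (Pair 6)) 
    (h : ∀ w : Pair 6 → ℝ, (∀ e, e ∉ S → w e = 0) → ∑ e, w e • cofRow 3 q e = 0 → w = 0) :
    LinearIndependent ℝ (fun e : S => cofRow 3 q e.val) := by
  change LinearIndepOn ℝ (cofRow 3 q) S
  rw [linearIndepOn_iff]
  intro l hl h0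
  have := h l (fun e he => by
    by_contra hne
    exact he (hl (Finsupp.mem_support_iff.mpr hne))) (by
      rw [Finsupp.linearCombination_apply, Finsupp.sum_fintype _ _ (by simp)] at h0
      exact h0)
  ext e
  exact congrFun this e

/-- trivial motions, as columns -/
def M15 (q : Fin 6 → ℝ × ℝ) : Matrix (Fin 6) (Fin 6 × Fin 3) ℝ := fun k ia =>
  let x := (q ia.1).1 - (q 0).1
  let y := (q ia.1).2 - (q 0).2
  (![![1, 0, 0], ![0, 1, 0], ![0, 0, 1], ![y, -x, 0], ![0, y, -x],
    ![y ^ 2, -2 * x * y, x ^ 2]] : Fin 6 → Fin 3 → ℝ) k ia.2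

lemma M15_zero {d e f x y : ℝ} (h : x ≠ 0 ∨ y ≠ 0) (h0 : d * y + f * y ^ 2 = 0)
    (h1 : -d * x + e * y - 2 * f * x * y = 0) (h2 : - e * x + f * x ^ 2 = 0) :
    d = - f * y ∧ e = f * x := by
  by_cases hx : x = 0
  · have hy : y ≠ 0 := by tauto
    subst hx
    constructor
    · apply mul_right_cancel₀ hy; linarith
    · apply mul_right_cancel₀ hy; linarith
  · have e1 : e = f * x := by apply mul_right_cancel₀ hx; linarith
    refine ⟨?_, e1⟩
    subst e1
    apply mul_right_cancel₀ hx; linarith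

lemma M15_indep {q : Fin 6 → ℝ × ℝ} (hq : ConvexPosition q) :
    LinearIndependent ℝ (M15 q).row := by
  rw [Fintype.linearIndependent_iff]
  intro g hg
  have ev : ∀ i a, ∑ k, g k * M15 q k (i, a) = 0 := by
    intro i a
    have := congrFun hg (i, a)
    simpa [Finset.sum_apply] using this
  have ev0 : ∀ i, _ := fun i => ev i 0
  have ev1 : ∀ i, _ := fun i => ev i 1
  have ev2 : ∀ i, _ := fun i => ev i 2
  simp [M15, Fin.sum_univ_six] at ev0 ev1 ev2
  have z0 := ev0 0
  have z1 := ev1 0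
  have z2 := ev2 0
  simp at z0 z1 z2
  simp only [z0, z1, z2, zero_add] at ev0 ev1 ev2
  have key : ∀ i, i ≠ 0 → g 3 = - g 5 * ((q i).2 - (q 0).2) ∧ g 4 = g 5 * ((q i).1 - (q 0).1) := by
    intro i hi
    apply M15_zero
    · by_contra hc
      push Not at hc
      exact hi (hq.1 (Prod.ext (by linarith [hc.1]) (by linarith [hc.2])))
    · linear_combination ev0 i
    · linear_combination ev1 i
    · linear_combination ev2 i
  obtain ⟨a1, a2⟩ := key 1 (by decide)
  obtain ⟨b1, b2⟩ := key 2 (by decide)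
  have z5 : g 5 = 0 := by
    by_contra hne
    have c1 : (q 1).2 = (q 2).2 := by
      apply mul_left_cancel₀ hne; linarith
    have c2 : (q 1).1 = (q 2).1 := by
      apply mul_left_cancel₀ hne; linarith
    exact absurd (hq.1 (Prod.ext c2 c1)) (by decide)
  rw [z5] at a1 a2
  intro i
  fin_cases i
  · exact z0
  · exact z1
  · exact z2
  · simpa using a1
  · simpa using a2
  · exact z5

lemma M15_mul (q : Fin 6 → ℝ × ℝ) :
    (Matrix.of (cofRow 3 q) : Matrix (Pair 6) (Fin 6 × Fin 3) ℝ) * (M15 q).transpose = 0 := by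
  ext ⟨⟨a, b⟩, hab⟩ k
  have hab' : a ≠ b := by intro h; simp [h] at hab
  have : ∀ i, ∑ c, cofRow 3 q ⟨(a, b), hab⟩ (i, c) * M15 q k (i, c) =
      (if i = a then ∑ c, cvec 3 (q a) (q b) c * M15 q k (i, c) else 0) +
      (if i = b then -∑ c, cvec 3 (q a) (q b) c * M15 q k (i, c) else 0) := by
    intro i
    by_cases h1 : i = a
    · subst h1
      simp [cofRow, hab']
    · by_cases h2 : i = b
      · subst h2
        simp [cofRow, hab'.symm]
      · simp [cofRow, h1, h2]
  simp only [Matrix.mul_apply, Matrix.transpose_apply, Matrix.of_apply, Matrix.zero_apply]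
  rw [Fintype.sum_prod_type]
  simp only [this, Finset.sum_add_distrib, Finset.sum_ite_eq', Finset.mem_univ, if_true]
  fin_cases k <;> simp [M15, cvec, Fin.sum_univ_three] <;> ring

lemma rank15 {q : Fin 6 → ℝ × ℝ} (hq : ConvexPosition q) :
    Module.finrank ℝ (Submodule.span ℝ (Set.range (cofRow 3 q))) ≤ 12 := by
  have h := Matrix.rank_add_rank_le_card_of_mul_eq_zero (M15_mul q)
  rw [Matrix.rank_transpose, (M15_indep hq).rank_matrix, Matrix.rank_eq_finrank_span_row] at h
  simp at h
  exact h

lemma card15 : Nat.card G15 = 12 := by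
  have h : G15 = ((Finset.univ.filter (fun e : Pair 6 => e.val ≠ ((0 : Fin 6), (3 : Fin 6)) ∧ e.val ≠ ((1 : Fin 6), (4 : Fin 6)) ∧
       e.val ≠ ((2 : Fin 6), (5 : Fin 6))) : Finset (Pair 6)) : Set (Pair 6)) := by
    ext e; simp [G15]
  rw [h, Nat.card_coe_set_eq, Set.ncard_coe_finset]
  decide +kernel

/-- For six points in convex position, the rows of `C₃(q)` indexed by the
octahedron graph form a circuit if the points are in Desargues position, and are linearly
independent (forming a basis of the row space) otherwise. -/
theorem stmt15 (q : Fin 6 → ℝ × ℝ) (hq : ConvexPosition q) :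
    (DesarguesPos q →
      ¬ LinearIndependent ℝ (fun e : G15 => cofRow 3 q e.val) ∧
      ∀ S : Set (Pair 6), S ⊂ G15 →
        LinearIndependent ℝ (fun e : S => cofRow 3 q e.val)) ∧
    (¬ DesarguesPos q →
      LinearIndependent ℝ (fun e : G15 => cofRow 3 q e.val) ∧
      Submodule.span ℝ (cofRow 3 q '' G15) =
        Submodule.span ℝ (Set.range (cofRow 3 q))) := by
  refine ⟨fun hD => ⟨fun hI => ?_, fun S hS => ?_⟩, fun hD => ?_⟩
  · obtain ⟨w, hw, h0, h1⟩ := exStress15 hq hD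
    change LinearIndepOn ℝ (cofRow 3 q) G15 at hI
    rw [linearIndepOn_iff] at hI
    have := hI (Finsupp.equivFunOnFinite.symm w) (by
        intro e he
        by_contra hne
        exact (Finsupp.mem_support_iff.mp he) (hw e hne)) (by
        rw [Finsupp.linearCombination_apply, Finsupp.sum_fintype _ _ (by simp)]
        exact h0)
    apply h1
    simpa using DFunLike.congr_fun this ⟨(0, 1), by decide⟩
  · apply indep15
    intro w hw h0
    obtain ⟨e, he, heS⟩ := Set.exists_of_ssubset hS
    exact prop15 hq w (fun f hf => hw f (fun h => hf (hS.1 h))) h0 e he (hw e heS)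
  · have hI : LinearIndependent ℝ (fun e : G15 => cofRow 3 q e.val) := by
      apply indep15
      intro w hw h0
      by_contra hne
      apply hD
      apply desargues_of_D15 hq
      apply D15_of_stress hq w hw h0
      intro e he hz
      exact hne (prop15 hq w hw h0 e he hz)
    refine ⟨hI, ?_⟩
    apply Submodule.eq_of_le_of_finrank_le
    · exact Submodule.span_mono (Set.image_subset_range _ _)
    · refine (rank15 hq).trans ?_
      have : Fintype G15 := Fintype.ofFinite _
      have h := finrank_span_eq_card hI
      rw [← Nat.card_eq_fintype_card, card15] at h
      rw [Set.image_eq_range]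
      exact h.ge
end

section
/- Let (t₁,…,t₆) = (1,3,4,6,7,9) and q_i = (t_i, t_i²) ∈ ℝ² for i = 1,…,6, and let G be the set of the 12 pairs of {1,…,6} other than {1,4}, {2,5}, {3,6}. Then the rows of C₃(q₁,…,q₆) indexed by G form a circuit: they are linearly dependent, but the rows indexed by any proper subset of G are linearly independent. -/
open scoped BigOperators

/-- The points `qᵢ = (tᵢ, tᵢ²)` on the parabola for `(t₁,…,t₆) = (1,3,4,6,7,9)`. -/
def q16 : Fin 6 → ℝ × ℝ := ![(1, 1), (3, 9), (4, 16), (6, 36), (7, 49), (9, 81)]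

abbrev P01 : Pair 6 := ⟨(0, 1), by decide⟩
abbrev P02 : Pair 6 := ⟨(0, 2), by decide⟩
abbrev P03 : Pair 6 := ⟨(0, 3), by decide⟩
abbrev P04 : Pair 6 := ⟨(0, 4), by decide⟩
abbrev P05 : Pair 6 := ⟨(0, 5), by decide⟩
abbrev P12 : Pair 6 := ⟨(1, 2), by decide⟩
abbrev P13 : Pair 6 := ⟨(1, 3), by decide⟩
abbrev P14 : Pair 6 := ⟨(1, 4), by decide⟩
abbrev P15 : Pair 6 := ⟨(1, 5), by decide⟩
abbrev P23 : Pair 6 := ⟨(2, 3), by decide⟩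
abbrev P24 : Pair 6 := ⟨(2, 4), by decide⟩
abbrev P25 : Pair 6 := ⟨(2, 5), by decide⟩
abbrev P34 : Pair 6 := ⟨(3, 4), by decide⟩
abbrev P35 : Pair 6 := ⟨(3, 5), by decide⟩
abbrev P45 : Pair 6 := ⟨(4, 5), by decide⟩

lemma univ_pair6 : (Finset.univ : Finset (Pair 6)) = {P01, P02, P03, P04, P05, P12, P13, P14, P15, P23, P24, P25, P34, P35, P45} := by decide

lemma sum_pair6 (f : Pair 6 → ℝ) : ∑ e, f e = f P01 + f P02 + f P03 + f P04 + f P05 + f P12 + f P13 + f P14 + f P15 + f P23 + f P24 + f P25 + f P34 + f P35 + f P45 := by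
  rw [univ_pair6]
  repeat rw [Finset.sum_insert (by decide)]
  rw [Finset.sum_singleton]
  ring

noncomputable def w16 : Fin 6 → Fin 6 → ℝ :=
  ![![0, 1, -32/45, 0, 1/9, -1/40], ![0, 0, 16, -16/9, 0, 1/9], ![0, 0, 0, 32/5, -16/9, 0], ![0, 0, 0, 0, 16, -32/45], ![0, 0, 0, 0, 0, 1], ![0, 0, 0, 0, 0, 0]]

lemma main_rel (c : Pair 6 → ℝ) :
    ∑ e, c e • cofRow 3 q16 e = 0 ↔ ∀ i a, ∑ e, c e * cofRow 3 q16 e (i, a) = 0 := by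
  rw [funext_iff]
  simp [Finset.sum_apply, Prod.forall]

lemma relA : ∑ e : Pair 6, w16 e.val.1 e.val.2 • cofRow 3 q16 e = 0 := by
  rw [main_rel]
  intro i a
  rw [sum_pair6]
  fin_cases i <;> fin_cases a <;> simp [w16, cofRow, cvec, q16, -mul_eq_zero] <;> norm_num

lemma relB (c : Pair 6 → ℝ) (h03 : c P03 = 0) (h14 : c P14 = 0) (h25 : c P25 = 0)
    (h : ∑ e, c e • cofRow 3 q16 e = 0) :
    c P01 = (1) * c P45 ∧ c P02 = (-32/45) * c P45 ∧ c P04 = (1/9) * c P45 ∧ c P05 = (-1/40) * c P45 ∧ c P12 = (16) * c P45 ∧ c P13 = (-16/9) * c P45 ∧ c P15 = (1/9) * c P45 ∧ c P23 = (32/5) * c P45 ∧ c P24 = (-16/9) * c P45 ∧ c P34 = (16) * c P45 ∧ c P35 = (-32/45) * c P45 ∧ c P45 = (1) * c P45 := by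
  rw [main_rel] at h
  simp only [sum_pair6, h03, h14, h25] at h
  have h00 := h 0 0
  have h01 := h 0 1
  have h02 := h 0 2
  have h10 := h 1 0
  have h11 := h 1 1
  have h12 := h 1 2
  have h20 := h 2 0
  have h21 := h 2 1
  have h22 := h 2 2
  have h30 := h 3 0
  have h31 := h 3 1
  have h32 := h 3 2
  have h40 := h 4 0
  have h41 := h 4 1
  have h42 := h 4 2
  have h50 := h 5 0
  have h51 := h 5 1
  have h52 := h 5 2
  clear h
  simp [cofRow, cvec, q16, -mul_eq_zero] at h00 h01 h02 h10 h11 h12 h20 h21 h22 h30 h31 h32 h40 h41 h42 h50 h51 h52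
  norm_num1 at h00 h01 h02 h10 h11 h12 h20 h21 h22 h30 h31 h32 h40 h41 h42 h50 h51 h52
  refine ⟨?_, ?_, ?_, ?_, ?_, ?_, ?_, ?_, ?_, ?_, ?_, ?_⟩ <;> linarith

theorem stmt16 :
    ¬ LinearIndependent ℝ (fun e : G15 => cofRow 3 q16 e.val) ∧
    ∀ S : Set (Pair 6), S ⊂ G15 →
      LinearIndependent ℝ (fun e : S => cofRow 3 q16 e.val) := by
  constructor
  · intro hli
    have hli' : LinearIndepOn ℝ (cofRow 3 q16) G15 := hli
    rw [linearIndepOn_iff] at hli'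
    have := hli' (Finsupp.equivFunOnFinite.symm fun e : Pair 6 => w16 e.val.1 e.val.2) ?_ ?_
    · have h := DFunLike.congr_fun this P45
      simp [w16] at h
    · rw [Finsupp.mem_supported']
      intro e he
      simp only [G15, Set.mem_setOf_eq] at he
      by_contra hne
      apply he
      refine ⟨?_, ?_, ?_⟩ <;> intro h <;> apply hne <;> simp [h, w16]
    · rw [Finsupp.linearCombination_apply, Finsupp.sum_fintype _ _ (by simp)]
      exact relA
  · intro S hS
    change LinearIndepOn ℝ (cofRow 3 q16) S
    rw [linearIndepOn_iff]
    intro l hl h0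
    rw [Finsupp.mem_supported'] at hl
    rw [Finsupp.linearCombination_apply, Finsupp.sum_fintype _ _ (by simp)] at h0
    have k03 : l P03 = 0 := hl _ fun h => (hS.1 h).1 rfl
    have k14 : l P14 = 0 := hl _ fun h => (hS.1 h).2.1 rfl
    have k25 : l P25 = 0 := hl _ fun h => (hS.1 h).2.2 rfl
    obtain ⟨k01, k02, k04, k05, k12, k13, k15, k23, k24, k34, k35, k45⟩ := relB l k03 k14 k25 h0
    obtain ⟨f, hfG, hfS⟩ := Set.exists_of_ssubset hS
    have hf := hl f hfS
    have mem : ∀ e : Pair 6, e = P01 ∨ e = P02 ∨ e = P03 ∨ e = P04 ∨ e = P05 ∨ e = P12 ∨ e = P13 ∨ e = P14 ∨ e = P15 ∨ e = P23 ∨ e = P24 ∨ e = P25 ∨ e = P34 ∨ e = P35 ∨ e = P45 := by decide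
    have z : l P45 = 0 := by
      rcases mem f with rfl | rfl | rfl | rfl | rfl | rfl | rfl | rfl | rfl | rfl | rfl | rfl | rfl | rfl | rfl
      · linarith
      · linarith
      · exact absurd rfl hfG.1
      · linarith
      · linarith
      · linarith
      · linarith
      · exact absurd rfl hfG.2.1
      · linarith
      · linarith
      · linarith
      · exact absurd rfl hfG.2.2
      · linarith
      · linarith
      · linarith
    ext e
    rcases mem e with rfl | rfl | rfl | rfl | rfl | rfl | rfl | rfl | rfl | rfl | rfl | rfl | rfl | rfl | rfl <;> simp only [Finsupp.coe_zero, Pi.zero_apply] <;> linarith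
end

section
/- Let k ≥ 1, n = 2k+3, and let q₁,…,qₙ ∈ ℝ² be points in convex position. For each k-relevant pair e of {1,…,n} (these are exactly the pairs of length k+1, i.e. of the form {a, a+k+1} with indices mod n), let H_e denote the big open half-plane of e: the open half-plane bounded by the line through the two points of e that contains the k+1 points q_m with m lying on the longer of the two arcs determined by e. Then the following are equivalent: (i) for every three pairwise disjoint k-relevant pairs e₁, e₂, e₃ such that the set of all pairs of {1,…,n} other than e₁, e₂, e₃ is (k+1)-crossing-free (i.e., is an octahedral k-triangulation), the intersection H_{e₁} ∩ H_{e₂} ∩ H_{e₃} is nonempty; (ii) the intersection of H_e over all k-relevant pairs e is nonempty. -/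
open scoped BigOperators

/-- Two pairs share no endpoint. -/
def PairDisjoint {n : ℕ} (e f : Pair n) : Prop :=
  e.val.1 ≠ f.val.1 ∧ e.val.1 ≠ f.val.2 ∧ e.val.2 ≠ f.val.1 ∧ e.val.2 ≠ f.val.2

/-- `m` lies on the longer of the two arcs determined by the pair `e` of the `n`-gon. -/
def OnLongArc {n : ℕ} (e : Pair n) (m : Fin n) : Prop :=
  if n < 2 * ((e.val.2 : ℕ) - (e.val.1 : ℕ)) then e.val.1 < m ∧ m < e.val.2
  else m < e.val.1 ∨ e.val.2 < m

/-- The big open half-plane of a pair `e`: the open half-plane bounded by the line through the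
two points of `e` containing the points `q m` for `m` on the longer arc of `e`. -/
def bigHalf {n : ℕ} (q : Fin n → ℝ × ℝ) (e : Pair n) : Set (ℝ × ℝ) :=
  {p | ∀ m : Fin n, OnLongArc e m →
    0 < det2 (q e.val.2 - q e.val.1) (p - q e.val.1) *
        det2 (q e.val.2 - q e.val.1) (q m - q e.val.1)}

/-- orientation determinant -/
def oD (a b p : ℝ × ℝ) : ℝ := det2 (b - a) (p - a)

theorem oD_cyc (a b c : ℝ × ℝ) : oD a b c = oD b c a := by
  simp only [oD, det2, Prod.fst_sub, Prod.snd_sub]; ring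

theorem oD_swap (a b c : ℝ × ℝ) : oD b a c = - oD a b c := by
  simp only [oD, det2, Prod.fst_sub, Prod.snd_sub]; ring

theorem oD_self_left (a b : ℝ × ℝ) : oD a b a = 0 := by
  simp only [oD, det2, Prod.fst_sub, Prod.snd_sub]; ring

theorem oD_self_right (a b : ℝ × ℝ) : oD a b b = 0 := by
  simp only [oD, det2, Prod.fst_sub, Prod.snd_sub]; ring

theorem oD_affine (a b x y : ℝ × ℝ) (s t : ℝ) (h : s + t = 1) :
    oD a b (s • x + t • y) = s * oD a b x + t * oD a b y := by
  obtain rfl : s = 1 - t := by linarith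
  simp only [oD, det2, Prod.fst_sub, Prod.snd_sub, Prod.fst_add, Prod.snd_add, Prod.smul_fst,
    Prod.smul_snd, smul_eq_mul]
  ring

/-- periodic extension -/
def perQ {k : ℕ} (q : Fin (2 * k + 3) → ℝ × ℝ) (m : ℕ) : ℝ × ℝ :=
  q ⟨m % (2 * k + 3), Nat.mod_lt _ (by omega)⟩

theorem perQ_add {k : ℕ} (q : Fin (2 * k + 3) → ℝ × ℝ) (m : ℕ) :
    perQ q (m + (2 * k + 3)) = perQ q m := by
  simp [perQ]

theorem perQ_fin {k : ℕ} (q : Fin (2 * k + 3) → ℝ × ℝ) (m : Fin (2 * k + 3)) :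
    perQ q (m : ℕ) = q m := by
  simp [perQ, Nat.mod_eq_of_lt m.2]

theorem perQ_lt {k : ℕ} {q : Fin (2 * k + 3) → ℝ × ℝ} (hq : ConvexPosition q)
    {a b c : ℕ} (h1 : a < b) (h2 : b < c) (h3 : c < 2 * k + 3) :
    0 < oD (perQ q a) (perQ q b) (perQ q c) := by
  have := hq.2 ⟨a, by omega⟩ ⟨b, by omega⟩ ⟨c, h3⟩ h1 h2
  rw [← perQ_fin q ⟨a, by omega⟩, ← perQ_fin q ⟨b, by omega⟩, ← perQ_fin q ⟨c, by omega⟩] at this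
  exact this

theorem perQ_pos {k : ℕ} {q : Fin (2 * k + 3) → ℝ × ℝ} (hq : ConvexPosition q) :
    ∀ (a : ℕ) {b c : ℕ}, a < b → b < c → c < a + (2 * k + 3) →
    0 < oD (perQ q a) (perQ q b) (perQ q c) := by
  intro a
  induction a using Nat.strong_induction_on with
  | _ a ih =>
    intro b c h1 h2 h3
    by_cases ha : a < 2 * k + 3
    · by_cases hc : c < 2 * k + 3
      · exact perQ_lt hq h1 h2 hc
      · obtain ⟨c', rfl⟩ : ∃ c', c = c' + (2 * k + 3) := ⟨c - (2 * k + 3), by omega⟩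
        rw [perQ_add]
        by_cases hb : b < 2 * k + 3
        · rw [oD_cyc, oD_cyc]
          exact perQ_lt hq (by omega) h1 hb
        · obtain ⟨b', rfl⟩ : ∃ b', b = b' + (2 * k + 3) := ⟨b - (2 * k + 3), by omega⟩
          rw [perQ_add, oD_cyc]
          exact perQ_lt hq (by omega) (by omega) ha
    · obtain ⟨c', rfl⟩ : ∃ c', c = c' + (2 * k + 3) := ⟨c - (2 * k + 3), by omega⟩
      obtain ⟨b', rfl⟩ : ∃ c', b = c' + (2 * k + 3) := ⟨b - (2 * k + 3), by omega⟩
      obtain ⟨a', rfl⟩ : ∃ c', a = c' + (2 * k + 3) := ⟨a - (2 * k + 3), by omega⟩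
      rw [perQ_add, perQ_add, perQ_add]
      exact ih a' (by omega) (by omega) (by omega) (by omega)

/-- half-plane indexed by start vertex -/
def hF {k : ℕ} (q : Fin (2 * k + 3) → ℝ × ℝ) (t : ℕ) : Set (ℝ × ℝ) :=
  {p | 0 < oD (perQ q t) (perQ q (t + k + 1)) p}

theorem hF_add {k : ℕ} (q : Fin (2 * k + 3) → ℝ × ℝ) (t : ℕ) :
    hF q (t + (2 * k + 3)) = hF q t := by
  have : t + (2 * k + 3) + k + 1 = (t + k + 1) + (2 * k + 3) := by ring
  simp only [hF, this, perQ_add]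

theorem hF_convex {k : ℕ} (q : Fin (2 * k + 3) → ℝ × ℝ) (t : ℕ) : Convex ℝ (hF q t) := by
  intro x hx y hy s u hs hu hsu
  simp only [hF, Set.mem_ofPred_eq] at *
  rw [oD_affine _ _ _ _ _ _ hsu]
  rcases hs.eq_or_lt with rfl | hs'
  · have : u = 1 := by linarith
    subst this; simpa using hy
  · have h1 := mul_pos hs' hx
    have h2 := mul_nonneg hu hy.le
    linarith

theorem mem_hF {k : ℕ} {q : Fin (2 * k + 3) → ℝ × ℝ} (hq : ConvexPosition q) {t m : ℕ}
    (h1 : t + k + 1 < m) (h2 : m < t + (2 * k + 3)) : perQ q m ∈ hF q t :=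
  perQ_pos hq t (by omega) h1 h2

/-- midpoint membership -/
theorem mid_mem {k : ℕ} {q : Fin (2 * k + 3) → ℝ × ℝ} (hq : ConvexPosition q) {t m : ℕ}
    (h1 : t + k + 1 ≤ m) (h2 : m + 1 ≤ t + (2 * k + 3)) (hk : 1 ≤ k) :
    (1/2 : ℝ) • perQ q m + (1/2 : ℝ) • perQ q (m + 1) ∈ hF q t := by
  simp only [hF, Set.mem_ofPred_eq]
  rw [oD_affine _ _ _ _ _ _ (by norm_num)]
  rcases h1.eq_or_lt with rfl | h1'
  · have := mem_hF hq (t := t) (m := t + k + 1 + 1) (by omega) (by omega)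
    simp only [hF, Set.mem_ofPred_eq] at this
    rw [oD_self_right]; linarith
  · have h3 := mem_hF hq (t := t) (m := m) h1' (by omega)
    simp only [hF, Set.mem_ofPred_eq] at h3
    rcases h2.eq_or_lt with h2' | h2'
    · rw [h2', perQ_add, oD_self_left]; linarith
    · have := mem_hF hq (t := t) (m := m + 1) (by omega) (by omega)
      simp only [hF, Set.mem_ofPred_eq] at this
      linarith

theorem core1 {k : ℕ} (hk : 1 ≤ k) {q : Fin (2 * k + 3) → ℝ × ℝ} (hq : ConvexPosition q)
    {a b c : ℕ} (h1 : a < b) (h2 : b < c) (h3 : c < a + (2 * k + 3)) (h : a + k + 2 ≤ b) :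
    ∃ p, p ∈ hF q a ∧ p ∈ hF q b ∧ p ∈ hF q c := by
  rcases h.eq_or_lt with h' | h'
  · refine ⟨_, ?_, mid_mem hq (m := b + 2 * k + 2) (by omega) (by omega) hk,
      mid_mem hq (by omega) (by omega) hk⟩
    rw [← hF_add]
    exact mid_mem hq (by omega) (by omega) hk
  · refine ⟨perQ q (b + 2 * k + 2), ?_, mem_hF hq (by omega) (by omega),
      mem_hF hq (by omega) (by omega)⟩
    rw [← hF_add]
    exact mem_hF hq (by omega) (by omega)

theorem core2 {k : ℕ} (hk : 1 ≤ k) {q : Fin (2 * k + 3) → ℝ × ℝ} (hq : ConvexPosition q)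
    {a b c : ℕ} (h1 : b = a + k + 1) (h2 : b < c) (h4 : c ≤ b + k + 1)
    (h3 : c < a + (2 * k + 3)) :
    ∃ p, p ∈ hF q a ∧ p ∈ hF q b ∧ p ∈ hF q c := by
  have ha := mid_mem hq (t := a) (m := a + 2 * k + 2) (by omega) (by omega) hk
  have hb := mid_mem hq (t := b) (m := a + 2 * k + 2) (by omega) (by omega) hk
  have hc : perQ q (b + (2 * k + 3)) ∈ hF q c := mem_hF hq (by omega) (by omega)
  rw [perQ_add] at hc
  have ea : oD (perQ q a) (perQ q (a + k + 1)) (perQ q b) = 0 := by rw [h1, oD_self_right]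
  have eb : oD (perQ q b) (perQ q (b + k + 1)) (perQ q b) = 0 := by rw [oD_self_left]
  generalize (1/2 : ℝ) • perQ q (a + 2 * k + 2) + (1/2 : ℝ) • perQ q (a + 2 * k + 2 + 1) = M at *
  simp only [hF, Set.mem_ofPred_eq] at *
  set d := oD (perQ q c) (perQ q (c + k + 1)) (perQ q b) with hd
  set m := oD (perQ q c) (perQ q (c + k + 1)) M with hm
  have hs : 0 < d + |m| := by positivity
  have he : 0 < d / (2 * (d + |m|)) := by positivity
  have key : d / (2 * (d + |m|)) * (d + |m|) = d / 2 := by field_simp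
  refine ⟨(1 - d / (2 * (d + |m|))) • perQ q b + (d / (2 * (d + |m|))) • M, ?_, ?_, ?_⟩
  · rw [oD_affine _ _ _ _ _ _ (by ring), ea]; have := mul_pos he ha; linarith
  · rw [oD_affine _ _ _ _ _ _ (by ring), eb]; have := mul_pos he hb; linarith
  · rw [oD_affine _ _ _ _ _ _ (by ring), ← hd, ← hm]
    generalize d / (2 * (d + |m|)) = ε at *
    have := mul_le_mul_of_nonneg_left (neg_abs_le m) he.le
    nlinarith

/-- start vertex of a relevant pair -/
def stt (k : ℕ) (e : Pair (2 * k + 3)) : ℕ :=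
  if (e.val.2 : ℕ) = e.val.1 + k + 1 then e.val.1 else e.val.2

theorem rel_cases {k : ℕ} {e : Pair (2 * k + 3)} (h : Relevant (2 * k + 3) k e) :
    (e.val.2 : ℕ) = e.val.1 + k + 1 ∨ (e.val.2 : ℕ) = e.val.1 + k + 2 := by
  have h1 : (e.val.1 : ℕ) < e.val.2 := e.2
  have h2 := e.val.2.2
  simp only [Relevant, pairLen] at h
  omega

theorem bigHalf_eq {k : ℕ} {q : Fin (2 * k + 3) → ℝ × ℝ} (hq : ConvexPosition q)
    {e : Pair (2 * k + 3)} (h : Relevant (2 * k + 3) k e) : bigHalf q e = hF q (stt k e) := by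
  obtain ⟨⟨i, j⟩, hij⟩ := e
  have hc := rel_cases h
  simp only at hc hij
  have hj := j.2
  have hij' : (i : ℕ) < j := hij
  ext p
  simp only [bigHalf, hF, Set.mem_ofPred_eq, stt, OnLongArc]
  change (∀ m, _ → 0 < oD (q i) (q j) p * oD (q i) (q j) (q m)) ↔ _
  rcases hc with hc | hc
  · simp only [if_neg (show ¬ (2 * k + 3 < 2 * ((j : ℕ) - i)) by omega)]
    rw [if_pos hc, ← hc, perQ_fin, perQ_fin]
    have hm : ∀ m : Fin (2 * k + 3), (m < i ∨ j < m) → 0 < oD (q i) (q j) (q m) := by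
      rintro m (hm | hm)
      · rw [oD_cyc, oD_cyc]; exact hq.2 _ _ _ hm hij
      · exact hq.2 _ _ _ hij hm
    constructor
    · intro H
      obtain ⟨m, hm'⟩ : ∃ m : Fin (2 * k + 3), m < i ∨ j < m := by
        by_cases h0 : 0 < (i : ℕ)
        · exact ⟨⟨0, by omega⟩, Or.inl h0⟩
        · exact ⟨⟨2 * k + 2, by omega⟩, Or.inr (by rw [Fin.lt_def]; simp only; omega)⟩
      exact pos_of_mul_pos_left (H m hm') (hm m hm').le
    · intro H m hm'
      exact mul_pos H (hm m hm')
  · have e1 : (j : ℕ) + k + 1 = i + (2 * k + 3) := by omega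
    simp only [if_pos (show (2 * k + 3 < 2 * ((j : ℕ) - i)) by omega)]
    rw [if_neg (show ¬ ((j : ℕ) = i + k + 1) by omega), e1, perQ_add, perQ_fin, perQ_fin, oD_swap (q i) (q j) p]
    have hm : ∀ m : Fin (2 * k + 3), (i < m ∧ m < j) → oD (q i) (q j) (q m) < 0 := by
      rintro m ⟨hm, hm'⟩
      have : 0 < oD (q i) (q m) (q j) := hq.2 _ _ _ hm hm'
      have h2 : oD (q i) (q j) (q m) = - oD (q i) (q m) (q j) := by rw [oD_cyc, oD_cyc, oD_swap]
      linarith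
    constructor
    · intro H
      have hm' : i < (⟨i + 1, by omega⟩ : Fin (2 * k + 3)) ∧
          (⟨i + 1, by omega⟩ : Fin (2 * k + 3)) < j := by
        constructor <;> rw [Fin.lt_def] <;> simp only <;> omega
      have h1 := H _ hm'
      have h2 := hm _ hm'
      by_contra h3
      have : 0 ≤ oD (q i) (q j) p := by linarith
      have := mul_nonpos_of_nonneg_of_nonpos this h2.le
      linarith
    · intro H m hm'
      exact mul_pos_of_neg_of_neg (by linarith) (hm m hm')

theorem exists_pair {k t : ℕ} (ht : t < 2 * k + 3) :
    ∃ e : Pair (2 * k + 3), Relevant (2 * k + 3) k e ∧ stt k e = t := by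
  by_cases h : t + k + 1 < 2 * k + 3
  · refine ⟨⟨(⟨t, ht⟩, ⟨t + k + 1, h⟩), by rw [Fin.lt_def]; simp only; omega⟩, ?_, ?_⟩
    · simp only [Relevant, pairLen]; omega
    · simp [stt]
  · refine ⟨⟨(⟨t - (k + 2), by omega⟩, ⟨t, ht⟩), by rw [Fin.lt_def]; simp only; omega⟩, ?_, ?_⟩
    · simp only [Relevant, pairLen]; omega
    · simp only [stt]; rw [if_neg (by omega)]

theorem rel_of_crossing {k : ℕ} (C : Finset (Pair (2 * k + 3))) (hC : C.card = k + 1)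
    (hx : ∀ e ∈ C, ∀ f ∈ C, e ≠ f → Cross e f) {e : Pair (2 * k + 3)} (he : e ∈ C) :
    Relevant (2 * k + 3) k e := by
  classical
  have hcard : (C.erase e).card = k := by rw [Finset.card_erase_of_mem he]; omega
  have hee : (e.val.1 : ℕ) < e.val.2 := e.2
  have he2 := e.val.2.2
  have hx' : ∀ f ∈ C, ∀ g ∈ C, f ≠ g →
      ((f.val.1 : ℕ) < g.val.1 ∧ (g.val.1 : ℕ) < f.val.2 ∧ (f.val.2 : ℕ) < g.val.2) ∨
      ((g.val.1 : ℕ) < f.val.1 ∧ (f.val.1 : ℕ) < g.val.2 ∧ (g.val.2 : ℕ) < f.val.2) :=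
    fun f hf g hg h => hx f hf g hg h
  have A : (C.erase e).card ≤ (Finset.Ioo (e.val.1 : ℕ) e.val.2).card := by
    apply Finset.card_le_card_of_injOn
      (fun f => if (e.val.1 : ℕ) < f.val.1 then (f.val.1 : ℕ) else f.val.2)
    · intro f hf
      have hf' := Finset.mem_erase.1 hf
      have := hx' e he f hf'.2 (Ne.symm hf'.1)
      simp only [Finset.coe_Ioo, Set.mem_Ioo]
      split_ifs <;> omega
    · intro f hf g hg hfg
      have hf' := (Finset.mem_erase.1 hf)
      have hg' := (Finset.mem_erase.1 hg)
      by_contra hne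
      have := hx' f hf'.2 g hg'.2 hne
      simp only at hfg
      split_ifs at hfg <;> omega
  have B : (C.erase e).card ≤ (Finset.range (2 * k + 3) \ Finset.Icc (e.val.1 : ℕ) e.val.2).card := by
    apply Finset.card_le_card_of_injOn
      (fun f => if (e.val.1 : ℕ) < f.val.1 then (f.val.2 : ℕ) else f.val.1)
    · intro f hf
      have hf' := Finset.mem_erase.1 hf
      have := hx' e he f hf'.2 (Ne.symm hf'.1)
      have h1 := f.val.2.2
      have h2 := f.val.1.2
      simp only [Finset.coe_sdiff, Set.mem_sdiff, Finset.coe_range, Set.mem_Iio, Finset.coe_Icc,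
        Set.mem_Icc]
      split_ifs <;> omega
    · intro f hf g hg hfg
      have hf' := (Finset.mem_erase.1 hf)
      have hg' := (Finset.mem_erase.1 hg)
      by_contra hne
      have := hx' f hf'.2 g hg'.2 hne
      simp only at hfg
      split_ifs at hfg <;> omega
  rw [Finset.card_sdiff_of_subset (by intro x; simp; omega)] at B
  simp only [Nat.card_Ioo, Nat.card_Icc, Finset.card_range, hcard] at A B
  simp only [Relevant, pairLen]
  omega

/-- shift by `a` modulo `n` -/
def shf (k a t : ℕ) : ℕ := if a ≤ t then t - a else t + (2 * k + 3) - a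

/-- pigeonhole label, `a = 0` -/
def lab (k b c t : ℕ) : ℕ :=
  if t < b then t else if t < k + 2 then t - 1 else if t < c then t - k - 1 else t - k - 2

theorem octa {k a b c : ℕ} (hab : a < b) (hbc : b < c) (hc : c < 2 * k + 3)
    (h1 : b ≤ a + k) (h2 : c ≤ b + k) (h3 : a + (2 * k + 3) ≤ c + k)
    (C : Finset (Pair (2 * k + 3))) (hC : C.card = k + 1)
    (hx : ∀ e ∈ C, ∀ f ∈ C, e ≠ f → Cross e f)
    (hn : ∀ e ∈ C, stt k e ≠ a ∧ stt k e ≠ b ∧ stt k e ≠ c) : False := by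
  have hmaps : ∀ e ∈ C, lab k (b - a) (c - a) (shf k a (stt k e)) ∈ Finset.Icc 1 k := by
    intro e he
    have h := rel_cases (rel_of_crossing C hC hx he)
    have h0 := hn e he
    have hlt : stt k e < 2 * k + 3 := by
      have := e.val.2.2
      have := e.val.1.2
      simp only [stt]; split_ifs <;> omega
    generalize stt k e = t at *
    rw [Finset.mem_Icc]
    simp only [lab, shf]
    split_ifs <;> omega
  obtain ⟨e, he, f, hf, hne, hl⟩ := Finset.exists_ne_map_eq_of_card_lt_of_maps_to
    (by rw [hC]; simp) hmaps
  have hre := rel_cases (rel_of_crossing C hC hx he)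
  have hrf := rel_cases (rel_of_crossing C hC hx hf)
  have hne0 := hn e he
  have hnf0 := hn f hf
  have hcr : ((e.val.1 : ℕ) < f.val.1 ∧ (f.val.1 : ℕ) < e.val.2 ∧ (e.val.2 : ℕ) < f.val.2) ∨
      ((f.val.1 : ℕ) < e.val.1 ∧ (e.val.1 : ℕ) < f.val.2 ∧ (f.val.2 : ℕ) < e.val.2) :=
    hx e he f hf hne
  have b1 := e.val.2.2
  have b2 := f.val.2.2
  obtain ⟨s, hs⟩ : ∃ s, s = stt k e := ⟨_, rfl⟩
  obtain ⟨t, ht⟩ : ∃ s, s = stt k f := ⟨_, rfl⟩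
  rw [← hs] at hl hne0
  rw [← ht] at hl hnf0
  have hs' : ((e.val.1 : ℕ) = s ∧ (e.val.2 : ℕ) = s + k + 1) ∨
    ((e.val.2 : ℕ) = s ∧ (e.val.1 : ℕ) + k + 2 = s) := by
    rw [stt] at hs; split_ifs at hs <;> omega
  have ht' : ((f.val.1 : ℕ) = t ∧ (f.val.2 : ℕ) = t + k + 1) ∨
    ((f.val.2 : ℕ) = t ∧ (f.val.1 : ℕ) + k + 2 = t) := by
    rw [stt] at ht; split_ifs at ht <;> omega
  clear hs ht hre hrf
  have key : s ≠ t ∧ s ≠ t + k + 1 ∧ t ≠ s + k + 1 ∧ s ≠ t + k + 2 ∧ t ≠ s + k + 2 := by omega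
  have bs : s < 2 * k + 3 := by omega
  have bt : t < 2 * k + 3 := by omega
  clear hcr b1 b2 hs' ht'
  have key' : shf k a s ≠ shf k a t ∧ shf k a s ≠ shf k a t + k + 1 ∧
      shf k a t ≠ shf k a s + k + 1 ∧ shf k a s ≠ shf k a t + k + 2 ∧
      shf k a t ≠ shf k a s + k + 2 ∧ shf k a s < 2 * k + 3 ∧ shf k a t < 2 * k + 3 ∧
      shf k a s ≠ 0 ∧ shf k a t ≠ 0 ∧ shf k a s ≠ b - a ∧ shf k a t ≠ b - a ∧
      shf k a s ≠ c - a ∧ shf k a t ≠ c - a := by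
    simp only [shf]; split_ifs <;> omega
  generalize shf k a s = x at *
  generalize shf k a t = y at *
  obtain ⟨b', rfl⟩ : ∃ b', b = a + b' := ⟨b - a, by omega⟩
  obtain ⟨c', rfl⟩ : ∃ b', c = a + b' := ⟨c - a, by omega⟩
  simp only [Nat.add_sub_cancel_left] at *
  clear key hne0 hnf0 hmaps
  simp only [lab] at hl
  split_ifs at hl <;> omega

theorem disj_of {k a b : ℕ} (hab : a < b) (h1 : b ≤ a + k ∨ a + k + 3 ≤ b)
    {e f : Pair (2 * k + 3)} (he : Relevant (2 * k + 3) k e) (hf : Relevant (2 * k + 3) k f)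
    (hea : stt k e = a) (hfb : stt k f = b) : PairDisjoint e f := by
  have h1 := rel_cases he
  have h2 := rel_cases hf
  have b1 := e.val.2.2
  have b2 := f.val.2.2
  simp only [PairDisjoint, ne_eq, Fin.ext_iff]
  simp only [stt] at hea hfb
  split_ifs at hea hfb <;> omega

theorem triple {k : ℕ} (hk : 1 ≤ k) {q : Fin (2 * k + 3) → ℝ × ℝ} (hq : ConvexPosition q)
    (H : ∀ e₁ e₂ e₃ : Pair (2 * k + 3),
        Relevant (2 * k + 3) k e₁ → Relevant (2 * k + 3) k e₂ →
        Relevant (2 * k + 3) k e₃ →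
        PairDisjoint e₁ e₂ → PairDisjoint e₁ e₃ → PairDisjoint e₂ e₃ →
        CrossingFree (2 * k + 3) k {e | e ≠ e₁ ∧ e ≠ e₂ ∧ e ≠ e₃} →
        (bigHalf q e₁ ∩ bigHalf q e₂ ∩ bigHalf q e₃).Nonempty)
    {a b c : ℕ} (hab : a < b) (hbc : b < c) (hc : c < 2 * k + 3) :
    ∃ p, p ∈ hF q a ∧ p ∈ hF q b ∧ p ∈ hF q c := by
  have rot1 : (∃ p, p ∈ hF q b ∧ p ∈ hF q c ∧ p ∈ hF q (a + (2 * k + 3))) →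
      ∃ p, p ∈ hF q a ∧ p ∈ hF q b ∧ p ∈ hF q c := by
    rintro ⟨p, h1, h2, h3⟩; rw [hF_add] at h3; exact ⟨p, h3, h1, h2⟩
  have rot2 : (∃ p, p ∈ hF q c ∧ p ∈ hF q (a + (2 * k + 3)) ∧ p ∈ hF q (b + (2 * k + 3))) →
      ∃ p, p ∈ hF q a ∧ p ∈ hF q b ∧ p ∈ hF q c := by
    rintro ⟨p, h1, h2, h3⟩; rw [hF_add] at h2 h3; exact ⟨p, h2, h3, h1⟩
  by_cases A1 : a + k + 2 ≤ b
  · exact core1 hk hq hab hbc (by omega) A1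
  by_cases A2 : b + k + 2 ≤ c
  · exact rot1 (core1 hk hq hbc (by omega) (by omega) A2)
  by_cases A3 : c + k + 2 ≤ a + (2 * k + 3)
  · exact rot2 (core1 hk hq (by omega) (by omega) (by omega) A3)
  by_cases B1 : b = a + k + 1
  · exact core2 hk hq B1 hbc (by omega) (by omega)
  by_cases B2 : c = b + k + 1
  · exact rot1 (core2 hk hq B2 (by omega) (by omega) (by omega))
  by_cases B3 : a + (2 * k + 3) = c + k + 1
  · exact rot2 (core2 hk hq B3 (by omega) (by omega) (by omega))
  obtain ⟨e₁, r1, s1⟩ := exists_pair (k := k) (t := a) (by omega)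
  obtain ⟨e₂, r2, s2⟩ := exists_pair (k := k) (t := b) (by omega)
  obtain ⟨e₃, r3, s3⟩ := exists_pair (k := k) (t := c) (by omega)
  have hst : ∀ e f : Pair (2 * k + 3), Relevant (2 * k + 3) k e → Relevant (2 * k + 3) k f →
      stt k e = stt k f → e = f := by
    intro e f he hf hh
    have h1 := rel_cases he
    have h2 := rel_cases hf
    have b1 := e.val.2.2
    have b2 := f.val.2.2
    apply Subtype.ext
    apply Prod.ext <;> apply Fin.ext <;> simp only [stt] at hh <;> split_ifs at hh <;> omega
  obtain ⟨p, ⟨hp1, hp2⟩, hp3⟩ := H e₁ e₂ e₃ r1 r2 r3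
    (disj_of hab (by omega) r1 r2 s1 s2) (disj_of (hab.trans hbc) (by omega) r1 r3 s1 s3)
    (disj_of hbc (by omega) r2 r3 s2 s3) (by
      rintro ⟨C, hsub, hC, hx⟩
      refine octa hab hbc hc (by omega) (by omega) (by omega) C hC hx ?_
      intro e he
      have hr := rel_of_crossing C hC hx he
      have hm := hsub he
      simp only [Set.mem_ofPred_eq] at hm
      exact ⟨fun h => hm.1 (hst _ _ hr r1 (h.trans s1.symm)),
        fun h => hm.2.1 (hst _ _ hr r2 (h.trans s2.symm)),
        fun h => hm.2.2 (hst _ _ hr r3 (h.trans s3.symm))⟩)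
  rw [bigHalf_eq hq r1, s1] at hp1
  rw [bigHalf_eq hq r2, s2] at hp2
  rw [bigHalf_eq hq r3, s3] at hp3
  exact ⟨p, hp1, hp2, hp3⟩

theorem exists_sorted {I : Finset ℕ} (h : I.card = 3) :
    ∃ a b c, a < b ∧ b < c ∧ I = {a, b, c} := by
  let f := I.orderEmbOfFin h
  refine ⟨f 0, f 1, f 2, f.strictMono (by decide), f.strictMono (by decide), ?_⟩
  ext x
  have h1 : x ∈ I ↔ ∃ i, f i = x := by
    rw [← Finset.mem_coe, ← Finset.range_orderEmbOfFin I h]; rfl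
  rw [h1]
  constructor
  · rintro ⟨i, rfl⟩
    fin_cases i <;> simp
  · intro hx
    simp only [Finset.mem_insert, Finset.mem_singleton] at hx
    rcases hx with rfl | rfl | rfl <;> exact ⟨_, rfl⟩

/-- For `n = 2k+3` points in convex position: the big half-planes of the three
missing edges of every octahedral `k`-triangulation have a common point iff the big half-planes
of all `k`-relevant pairs have a common point. -/
theorem stmt17 (k : ℕ) (hk : 1 ≤ k) (q : Fin (2 * k + 3) → ℝ × ℝ)
    (hq : ConvexPosition q) :
    (∀ e₁ e₂ e₃ : Pair (2 * k + 3),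
        Relevant (2 * k + 3) k e₁ → Relevant (2 * k + 3) k e₂ →
        Relevant (2 * k + 3) k e₃ →
        PairDisjoint e₁ e₂ → PairDisjoint e₁ e₃ → PairDisjoint e₂ e₃ →
        CrossingFree (2 * k + 3) k {e | e ≠ e₁ ∧ e ≠ e₂ ∧ e ≠ e₃} →
        (bigHalf q e₁ ∩ bigHalf q e₂ ∩ bigHalf q e₃).Nonempty) ↔
      (⋂ e : {e : Pair (2 * k + 3) // Relevant (2 * k + 3) k e},
        bigHalf q e.val).Nonempty := by
  constructor
  · intro H
    have hfr : Module.finrank ℝ (ℝ × ℝ) = 2 := by simp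
    have := Convex.helly_theorem (𝕜 := ℝ) (F := fun t => hF q t) (s := Finset.range (2 * k + 3))
      (by rw [hfr]; simp) (fun i _ => hF_convex q i) (by
        intro I hI hcard
        rw [hfr] at hcard
        obtain ⟨a, b, c, hab, hbc, rfl⟩ := exists_sorted hcard
        have hc : c < 2 * k + 3 := Finset.mem_range.1 (hI (by simp))
        obtain ⟨p, h1, h2, h3⟩ := triple hk hq H hab hbc hc
        refine ⟨p, ?_⟩
        simp only [Set.mem_iInter]
        intro i hi
        simp only [Finset.mem_insert, Finset.mem_singleton] at hi
        rcases hi with rfl | rfl | rfl <;> assumption)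
    obtain ⟨p, hp⟩ := this
    refine ⟨p, ?_⟩
    simp only [Set.mem_iInter] at hp ⊢
    rintro ⟨e, he⟩
    simp only
    rw [bigHalf_eq hq he]
    apply hp
    have := e.val.2.2
    have := e.val.1.2
    simp only [stt, Finset.mem_range]; split_ifs <;> omega
  · rintro ⟨p, hp⟩ e₁ e₂ e₃ h1 h2 h3 - - - -
    simp only [Set.mem_iInter] at hp
    exact ⟨p, ⟨hp ⟨e₁, h1⟩, hp ⟨e₂, h2⟩⟩, hp ⟨e₃, h3⟩⟩
end

section
/- Let n ≥ 5 and let T₁, T₂ be two 2-triangulations of the n-gon related by a flip, i.e. T₁ ∖ T₂ = {e} and T₂ ∖ T₁ = {f} for single pairs e and f. Then there exist real numbers t₁ < … < tₙ such that, with p_i = (t_i, t_i², t_i³, t_i⁴), the rows of R(p₁,…,pₙ) indexed by T₁ are linearly independent, the rows indexed by T₂ are linearly independent, and the unique (up to scalar) linear dependence λ among the rows indexed by T₁ ∪ T₂ satisfies λ_e · λ_f > 0. -/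
open scoped BigOperators

def CF (n : ℕ) (T : ℕ → ℕ → Prop) : Prop :=
  ∀ a b c d e f, a < b → b < c → c < d → d < e → e < f → f < n → T a d → T b e → T c f → False

def Mx (n : ℕ) (T : ℕ → ℕ → Prop) : Prop :=
  ∀ i j, i < j → j < n → ¬ T i j →
    (∃ b c y z, i < b ∧ b < c ∧ c < j ∧ j < y ∧ y < z ∧ z < n ∧ T b y ∧ T c z) ∨
    (∃ a c x z, a < i ∧ i < c ∧ c < x ∧ x < j ∧ j < z ∧ z < n ∧ T a x ∧ T c z) ∨
    (∃ a b x y, a < b ∧ b < i ∧ i < x ∧ x < y ∧ y < j ∧ T a x ∧ T b y)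

structure Flip (n : ℕ) (T₁ T₂ : ℕ → ℕ → Prop) (e1 e2 f1 f2 : ℕ) : Prop where
  c1 : CF n T₁
  m1 : Mx n T₁
  c2 : CF n T₂
  m2 : Mx n T₂
  elt : e1 < e2
  en : e2 < n
  flt : f1 < f2
  fn : f2 < n
  e1m : T₁ e1 e2
  e2m : ¬ T₂ e1 e2
  f2m : T₂ f1 f2
  f1m : ¬ T₁ f1 f2
  s1 : ∀ i j, i < j → j < n → T₁ i j → T₂ i j ∨ (i = e1 ∧ j = e2)
  s2 : ∀ i j, i < j → j < n → T₂ i j → T₁ i j ∨ (i = f1 ∧ j = f2)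

theorem ear {n : ℕ} {T : ℕ → ℕ → Prop} (hc : CF n T) (hm : Mx n T) :
    ∀ k a b, b - a ≤ k → a + 3 ≤ b → b < n → T a b → ∃ s, a ≤ s ∧ s + 3 ≤ b ∧ T s (s + 3) := by
  intro k
  induction k with
  | zero => intro a b h1 h2; omega
  | succ k ih =>
    intro a b h1 h2 h3 h4
    by_cases h5 : T a (a + 3)
    · exact ⟨a, le_refl _, h2, h5⟩
    have hb : a + 3 ≠ b := by rintro rfl; exact h5 h4
    rcases hm a (a + 3) (by omega) (by omega) h5 with
      ⟨b', c, y, z, g1, g2, g3, g4, g5, g6, t1, t2⟩ | ⟨a', c, x, z, g1, g2, g3, g4, g5, g6, t1, t2⟩ |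
      ⟨a', b', x, y, g1, g2, g3, g4, g5, t1, t2⟩
    · by_cases hy : y ≤ b
      · obtain ⟨s, q1, q2, q3⟩ := ih b' y (by omega) (by omega) (by omega) t1
        exact ⟨s, by omega, by omega, q3⟩
      · exact (hc a b' c b y z (by omega) (by omega) (by omega) (by omega) (by omega) (by omega) h4 t1 t2).elim
    · by_cases hy : z ≤ b
      · obtain ⟨s, q1, q2, q3⟩ := ih c z (by omega) (by omega) (by omega) t2
        exact ⟨s, by omega, by omega, q3⟩
      · exact (hc a' a c x b z (by omega) (by omega) (by omega) (by omega) (by omega) (by omega) t1 h4 t2).elim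
    · exact (hc a' b' a x y b (by omega) (by omega) (by omega) (by omega) (by omega) (by omega) t1 t2 h4).elim

def rot (n : ℕ) (T : ℕ → ℕ → Prop) : ℕ → ℕ → Prop :=
  fun i j => if j + 1 = n then T 0 (i + 1) else T (i + 1) (j + 1)

theorem rot_top {n : ℕ} {T : ℕ → ℕ → Prop} {i j : ℕ} (h : j + 1 = n) : rot n T i j ↔ T 0 (i + 1) := by
  simp [rot, h]

theorem rot_low {n : ℕ} {T : ℕ → ℕ → Prop} {i j : ℕ} (h : j + 1 < n) : rot n T i j ↔ T (i + 1) (j + 1) := by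
  simp [rot, h.ne]

/-- upward direction: an old pair seen in the rotated relation -/
theorem rot_zero {n : ℕ} {T : ℕ → ℕ → Prop} {j : ℕ} (h : 0 < j) (hj : j < n) (ht : T 0 j) :
    rot n T (j - 1) (n - 1) := by
  rw [rot_top (by omega)]; rwa [show j - 1 + 1 = j by omega]

theorem rot_pos {n : ℕ} {T : ℕ → ℕ → Prop} {i j : ℕ} (h : 0 < i) (hi : i < j) (hj : j < n) (ht : T i j) :
    rot n T (i - 1) (j - 1) := by
  rw [rot_low (by omega)]; rwa [show j - 1 + 1 = j by omega, show i - 1 + 1 = i by omega]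

theorem CF.rot {n : ℕ} {T : ℕ → ℕ → Prop} (hc : CF n T) : CF n (rot n T) := by
  intro a b c d e f h1 h2 h3 h4 h5 h6 t1 t2 t3
  rw [rot_low (by omega)] at t1 t2
  by_cases hf : f + 1 = n
  · rw [rot_top hf] at t3
    exact hc 0 (a+1) (b+1) (c+1) (d+1) (e+1) (by omega) (by omega) (by omega) (by omega) (by omega) (by omega) t3 t1 t2
  · rw [rot_low (by omega)] at t3
    exact hc (a+1) (b+1) (c+1) (d+1) (e+1) (f+1) (by omega) (by omega) (by omega) (by omega) (by omega) (by omega) t1 t2 t3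

theorem Mx.rot {n : ℕ} {T : ℕ → ℕ → Prop} (hm : Mx n T) : Mx n (rot n T) := by
  intro i j hij hj ht
  by_cases hf : j + 1 = n
  · rw [rot_top hf] at ht
    rcases hm 0 (i + 1) (by omega) (by omega) ht with
      ⟨b', c, y, z, g1, g2, g3, g4, g5, g6, t1, t2⟩ | ⟨a', c, x, z, g1, g2, g3, g4, g5, g6, t1, t2⟩ |
      ⟨a', b', x, y, g1, g2, g3, g4, g5, t1, t2⟩
    · exact Or.inr (Or.inr ⟨b' - 1, c - 1, y - 1, z - 1, by omega, by omega, by omega, by omega, by omega,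
        rot_pos (by omega) (by omega) (by omega) t1, rot_pos (by omega) (by omega) (by omega) t2⟩)
    · omega
    · omega
  · rw [rot_low (by omega)] at ht
    rcases hm (i + 1) (j + 1) (by omega) (by omega) ht with
      ⟨b', c, y, z, g1, g2, g3, g4, g5, g6, t1, t2⟩ | ⟨a', c, x, z, g1, g2, g3, g4, g5, g6, t1, t2⟩ |
      ⟨a', b', x, y, g1, g2, g3, g4, g5, t1, t2⟩
    · exact Or.inl ⟨b' - 1, c - 1, y - 1, z - 1, by omega, by omega, by omega, by omega, by omega, by omega,
        rot_pos (by omega) (by omega) (by omega) t1, rot_pos (by omega) (by omega) (by omega) t2⟩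
    · rcases Nat.eq_zero_or_pos a' with rfl | ha
      · exact Or.inl ⟨c - 1, x - 1, z - 1, n - 1, by omega, by omega, by omega, by omega, by omega, by omega,
          rot_pos (by omega) (by omega) (by omega) t2, rot_zero (by omega) (by omega) t1⟩
      · exact Or.inr (Or.inl ⟨a' - 1, c - 1, x - 1, z - 1, by omega, by omega, by omega, by omega, by omega, by omega,
          rot_pos (by omega) (by omega) (by omega) t1, rot_pos (by omega) (by omega) (by omega) t2⟩)
    · rcases Nat.eq_zero_or_pos a' with rfl | ha
      · exact Or.inr (Or.inl ⟨b' - 1, x - 1, y - 1, n - 1, by omega, by omega, by omega, by omega, by omega, by omega,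
          rot_pos (by omega) (by omega) (by omega) t2, rot_zero (by omega) (by omega) t1⟩)
      · exact Or.inr (Or.inr ⟨a' - 1, b' - 1, x - 1, y - 1, by omega, by omega, by omega, by omega, by omega,
          rot_pos (by omega) (by omega) (by omega) t1, rot_pos (by omega) (by omega) (by omega) t2⟩)

def rL (i j : ℕ) : ℕ := if i = 0 then j - 1 else i - 1
def rR (n i j : ℕ) : ℕ := if i = 0 then n - 1 else j - 1

theorem rot_rLR {n : ℕ} {T : ℕ → ℕ → Prop} {i j : ℕ} (hi : i < j) (hj : j < n) :
    rot n T (rL i j) (rR n i j) ↔ T i j := by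
  unfold rL rR
  by_cases h : i = 0
  · subst h
    simp only [if_true]
    rw [rot_top (by omega), show j - 1 + 1 = j by omega]
  · simp only [h, if_false]
    rw [rot_low (by omega), show j - 1 + 1 = j by omega, show i - 1 + 1 = i by omega]

theorem rLR_of {n i j e1 e2 : ℕ} (hi : i < j) (hj : j < n) (he : e1 < e2) (hen : e2 < n)
    (h : if j + 1 = n then 0 = e1 ∧ i + 1 = e2 else i + 1 = e1 ∧ j + 1 = e2) :
    i = rL e1 e2 ∧ j = rR n e1 e2 := by
  unfold rL rR
  split_ifs at h ⊢ <;> omega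

theorem Flip.rot {n : ℕ} {T₁ T₂ : ℕ → ℕ → Prop} {e1 e2 f1 f2 : ℕ} (h : Flip n T₁ T₂ e1 e2 f1 f2) :
    Flip n (rot n T₁) (rot n T₂) (rL e1 e2) (rR n e1 e2) (rL f1 f2) (rR n f1 f2) := by
  have := h.elt; have := h.en; have := h.flt; have := h.fn
  refine ⟨h.c1.rot, h.m1.rot, h.c2.rot, h.m2.rot, ?_, ?_, ?_, ?_, (rot_rLR h.elt h.en).2 h.e1m,
    fun q => h.e2m ((rot_rLR h.elt h.en).1 q), (rot_rLR h.flt h.fn).2 h.f2m,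
    fun q => h.f1m ((rot_rLR h.flt h.fn).1 q), ?_, ?_⟩
  · unfold rL rR; split_ifs <;> omega
  · unfold rR; split_ifs <;> omega
  · unfold rL rR; split_ifs <;> omega
  · unfold rR; split_ifs <;> omega
  · intro i j hi hj ht
    by_cases hf : j + 1 = n
    · rw [rot_top hf] at ht ⊢
      rcases h.s1 _ _ (by omega) (by omega) ht with q | q
      · exact Or.inl q
      · exact Or.inr (rLR_of hi hj h.elt h.en (by rw [if_pos hf]; exact q))
    · rw [rot_low (by omega)] at ht ⊢
      rcases h.s1 _ _ (by omega) (by omega) ht with q | q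
      · exact Or.inl q
      · exact Or.inr (rLR_of hi hj h.elt h.en (by rw [if_neg hf]; exact q))
  · intro i j hi hj ht
    by_cases hf : j + 1 = n
    · rw [rot_top hf] at ht ⊢
      rcases h.s2 _ _ (by omega) (by omega) ht with q | q
      · exact Or.inl q
      · exact Or.inr (rLR_of hi hj h.flt h.fn (by rw [if_pos hf]; exact q))
    · rw [rot_low (by omega)] at ht ⊢
      rcases h.s2 _ _ (by omega) (by omega) ht with q | q
      · exact Or.inl q
      · exact Or.inr (rLR_of hi hj h.flt h.fn (by rw [if_neg hf]; exact q))

theorem Mx.short {n : ℕ} {T : ℕ → ℕ → Prop} (hm : Mx n T) {i j : ℕ} (h1 : i < j) (h2 : j < n)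
    (h : j ≤ i + 2 ∨ i + n ≤ j + 2) : T i j := by
  by_contra ht
  rcases hm i j h1 h2 ht with
      ⟨b', c, y, z, g1, g2, g3, g4, g5, g6, t1, t2⟩ | ⟨a', c, x, z, g1, g2, g3, g4, g5, g6, t1, t2⟩ |
      ⟨a', b', x, y, g1, g2, g3, g4, g5, t1, t2⟩ <;> omega

theorem f2u {n : ℕ} {T : ℕ → ℕ → Prop} (hc : CF n T) (h03 : T 0 3) {a b : ℕ}
    (ha : 4 ≤ a) (hab : a < b) (hb : b < n) (t1 : T 1 a) (t2 : T 2 b) : False :=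
  hc 0 1 2 3 a b (by omega) (by omega) (by omega) (by omega) hab hb h03 t1 t2

theorem f2e {n : ℕ} {T : ℕ → ℕ → Prop} (hc : CF n T) (hm : Mx n T) (hn : 6 ≤ n) :
    ∃ c, 4 ≤ c ∧ c < n ∧ T 1 c ∧ T 2 c := by
  classical
  by_cases hB : ∃ b, 4 ≤ b ∧ b < n ∧ T 2 b
  · -- largest
    have key : ∃ b, (4 ≤ b ∧ b < n ∧ T 2 b) ∧ ∀ y, b < y → y < n → ¬ T 2 y := by
      let P := fun b => 4 ≤ b ∧ b < n ∧ T 2 b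
      obtain ⟨b0, hb0⟩ := hB
      refine ⟨Nat.findGreatest P n, Nat.findGreatest_spec (P := P) hb0.2.1.le hb0, ?_⟩
      intro y hy hyn ht
      have h4 : 4 ≤ Nat.findGreatest P n := (Nat.findGreatest_spec (P := P) hb0.2.1.le hb0).1
      exact Nat.findGreatest_is_greatest (P := P) hy hyn.le ⟨by omega, hyn, ht⟩
    obtain ⟨b, ⟨h4, hbn, tb⟩, hmax⟩ := key
    refine ⟨b, h4, hbn, ?_, tb⟩
    by_contra ht
    rcases hm 1 b (by omega) hbn ht with
      ⟨b', c, y, z, g1, g2, g3, g4, g5, g6, t1, t2⟩ | ⟨a', c, x, z, g1, g2, g3, g4, g5, g6, t1, t2⟩ |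
      ⟨a', b', x, y, g1, g2, g3, g4, g5, t1, t2⟩
    · by_cases hb : b' = 2
      · subst hb; exact hmax y g4 (by omega) t1
      · exact hc 2 b' c b y z (by omega) g2 g3 g4 g5 g6 tb t1 t2
    · by_cases hb : c = 2
      · subst hb; exact hmax z g5 g6 t2
      · exact hc a' 2 c x b z (by omega) (by omega) g3 g4 g5 g6 t1 tb t2
    · omega
  · push Not at hB
    by_cases hA : ∃ a, 4 ≤ a ∧ a < n ∧ T 1 a
    · obtain ⟨h4, han, ta⟩ := Nat.find_spec hA
      have hmin : ∀ x, 4 ≤ x → x < Nat.find hA → ¬ T 1 x := fun x h4 hx ht =>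
        Nat.find_min hA hx ⟨h4, by omega, ht⟩
      generalize Nat.find hA = a at *
      rcases hm 2 a (by omega) han (hB a h4 han) with
        ⟨b', c, y, z, g1, g2, g3, g4, g5, g6, t1, t2⟩ | ⟨a', c, x, z, g1, g2, g3, g4, g5, g6, t1, t2⟩ |
        ⟨a', b', x, y, g1, g2, g3, g4, g5, t1, t2⟩
      · exact (hc 1 b' c a y z (by omega) g2 g3 g4 g5 g6 ta t1 t2).elim
      · by_cases ha : a' = 1
        · subst ha; exact (hmin x (by omega) (by omega) t1).elim
        · exact (hc a' 1 c x a z (by omega) (by omega) g3 g4 g5 g6 t1 ta t2).elim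
      · have : b' = 1 := by omega
        subst this
        exact (hmin y (by omega) (by omega) t2).elim
    · push Not at hA
      rcases hm 1 4 (by omega) (by omega) (hA 4 (by omega) (by omega)) with
        ⟨b', c, y, z, g1, g2, g3, g4, g5, g6, t1, t2⟩ | ⟨a', c, x, z, g1, g2, g3, g4, g5, g6, t1, t2⟩ |
        ⟨a', b', x, y, g1, g2, g3, g4, g5, t1, t2⟩
      · have : b' = 2 := by omega
        subst this
        exact (hB y (by omega) (by omega) t1).elim
      · have : c = 2 := by omega
        subst this
        exact (hB z (by omega) (by omega) t2).elim
      · omega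

def lft (i i' : ℕ) : Prop := (i' = i ∧ i ≤ 1) ∨ (i' = i + 1 ∧ 1 ≤ i)

def contr (T : ℕ → ℕ → Prop) : ℕ → ℕ → Prop :=
  fun i j => ∃ i' j', T i' j' ∧ lft i i' ∧ lft j j'

def pj (i : ℕ) : ℕ := if i ≤ 1 then i else i - 1

theorem lft_pj (i : ℕ) : lft (pj i) i := by
  unfold lft pj; split_ifs <;> omega

theorem lft_iff {i i' : ℕ} : lft i i' ↔ i = pj i' := by
  unfold lft pj; split_ifs <;> omega

theorem contr_of {T : ℕ → ℕ → Prop} {i j : ℕ} (h : T i j) : contr T (pj i) (pj j) :=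
  ⟨i, j, h, lft_pj i, lft_pj j⟩

theorem CF.con {n : ℕ} {T : ℕ → ℕ → Prop} (hc : CF (n + 1) T) : CF n (contr T) := by
  rintro a b c d e f h1 h2 h3 h4 h5 h6 ⟨a', d', t1, la, ld⟩ ⟨b', e', t2, lb, le⟩ ⟨c', f', t3, lc, lf⟩
  unfold lft at *
  exact hc a' b' c' d' e' f' (by omega) (by omega) (by omega) (by omega) (by omega) (by omega) t1 t2 t3

def Ob (n : ℕ) (T : ℕ → ℕ → Prop) (i j : ℕ) : Prop :=
    (∃ b c y z, i < b ∧ b < c ∧ c < j ∧ j < y ∧ y < z ∧ z < n ∧ T b y ∧ T c z) ∨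
    (∃ a c x z, a < i ∧ i < c ∧ c < x ∧ x < j ∧ j < z ∧ z < n ∧ T a x ∧ T c z) ∨
    (∃ a b x y, a < b ∧ b < i ∧ i < x ∧ x < y ∧ y < j ∧ T a x ∧ T b y)

theorem pj_lt {i j : ℕ} (h : i < j) (h2 : ¬ (i = 1 ∧ j = 2)) : pj i < pj j := by
  unfold pj; split_ifs <;> omega

theorem pj_ltn {i n : ℕ} (hn : 2 ≤ n) (h : i < n + 1) : pj i < n := by
  unfold pj; split_ifs <;> omega

theorem ob_contr {n : ℕ} {T : ℕ → ℕ → Prop} (hn : 5 ≤ n) (hc : CF (n + 1) T) (h03 : T 0 3) {i j : ℕ}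
    (hjn : j < n + 1)
    (hA : i = 1 → ∀ y, j < y → y < n + 1 → ¬ T 2 y)
    (hB : i = 2 → ∀ x, 4 ≤ x → x < j → ¬ T 1 x) (h : Ob (n + 1) T i j) :
    Ob n (contr T) (pj i) (pj j) := by
  rcases h with
      ⟨b, c, y, z, g1, g2, g3, g4, g5, g6, t1, t2⟩ | ⟨a, c, x, z, g1, g2, g3, g4, g5, g6, t1, t2⟩ |
      ⟨a, b, x, y, g1, g2, g3, g4, g5, t1, t2⟩
  · refine Or.inl ⟨pj b, pj c, pj y, pj z, pj_lt g1 ?_, pj_lt g2 ?_, pj_lt g3 (by omega), pj_lt g4 (by omega),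
      pj_lt g5 (by omega), pj_ltn (by omega) g6, contr_of t1, contr_of t2⟩
    · rintro ⟨rfl, rfl⟩; exact hA rfl y g4 (by omega) t1
    · rintro ⟨rfl, rfl⟩; exact f2u hc h03 (by omega) g5 g6 t1 t2
  · refine Or.inr (Or.inl ⟨pj a, pj c, pj x, pj z, pj_lt g1 ?_, pj_lt g2 ?_, pj_lt g3 (by omega), pj_lt g4 (by omega),
      pj_lt g5 (by omega), pj_ltn (by omega) g6, contr_of t1, contr_of t2⟩)
    · rintro ⟨rfl, rfl⟩; exact hB rfl x (by omega) (by omega) t1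
    · rintro ⟨rfl, rfl⟩; exact hA rfl z g5 (by omega) t2
  · refine Or.inr (Or.inr ⟨pj a, pj b, pj x, pj y, pj_lt g1 ?_, pj_lt g2 ?_, pj_lt g3 (by omega), pj_lt g4 (by omega),
      pj_lt g5 (by omega), contr_of t1, contr_of t2⟩)
    · rintro ⟨rfl, rfl⟩; exact f2u hc h03 (by omega) g4 (by omega) t1 t2
    · rintro ⟨rfl, rfl⟩; exact hB rfl y (by omega) (by omega) t2

theorem Mx.con {n : ℕ} {T : ℕ → ℕ → Prop} (hn : 5 ≤ n) (hc : CF (n + 1) T) (hm : Mx (n + 1) T)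
    (h03 : T 0 3) : Mx n (contr T) := by
  obtain ⟨c, c4, cn, tc1, tc2⟩ := f2e hc hm (by omega)
  intro i j hij hj ht
  -- reduce to a lift
  suffices H : ∃ i' j', i' < j' ∧ j' < n + 1 ∧ pj i' = i ∧ pj j' = j ∧
      (i' = 1 → ∀ y, j' < y → y < n + 1 → ¬ T 2 y) ∧ (i' = 2 → ∀ x, 4 ≤ x → x < j' → ¬ T 1 x) by
    obtain ⟨i', j', a1, a2, rfl, rfl, a5, a6⟩ := H
    exact ob_contr hn hc h03 a2 a5 a6 (hm i' j' a1 a2 (fun q => ht (contr_of q)))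
  have n1 : ∀ i' j', pj i' = i → pj j' = j → ¬ T i' j' := by
    rintro i' j' rfl rfl q
    exact ht (contr_of q)
  by_cases hi : i = 1
  · subst hi
    have p1 : pj 1 = 1 := rfl
    have p2 : pj 2 = 1 := rfl
    have p3 : pj (j + 1) = j := by unfold pj; split_ifs <;> omega
    by_cases hjc : c < j + 1
    · refine ⟨1, j + 1, by omega, by omega, p1, p3, fun _ y hy hyn t => ?_, by omega⟩
      exact f2u hc h03 c4 (by omega) hyn tc1 t
    · have hne : c ≠ j + 1 := by rintro rfl; exact n1 _ _ p1 p3 tc1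
      refine ⟨2, j + 1, by omega, by omega, p2, p3, by omega, fun _ x hx hxj t => ?_⟩
      exact f2u hc h03 hx (by omega) cn t tc2
  · by_cases hj1 : j = 1
    · subst hj1
      have : i = 0 := by omega
      subst this
      exact (n1 0 1 rfl rfl (hm.short (by omega) (by omega) (by omega))).elim
    · refine ⟨if i = 0 then 0 else i + 1, j + 1, ?_, by omega, ?_, ?_, ?_, ?_⟩
      · split_ifs <;> omega
      · unfold pj; split_ifs <;> omega
      · unfold pj; split_ifs <;> omega
      · intro q; split_ifs at q <;> omega
      · intro q; split_ifs at q <;> omega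

theorem Mx.anti {n : ℕ} {T S : ℕ → ℕ → Prop} (hm : Mx n T) (hs : CF n S)
    (h : ∀ i j, i < j → j < n → T i j → S i j) {i j : ℕ} (h1 : i < j) (h2 : j < n) (hS : S i j) : T i j := by
  by_contra ht
  rcases hm i j h1 h2 ht with
      ⟨b, c, y, z, g1, g2, g3, g4, g5, g6, t1, t2⟩ | ⟨a, c, x, z, g1, g2, g3, g4, g5, g6, t1, t2⟩ |
      ⟨a, b, x, y, g1, g2, g3, g4, g5, t1, t2⟩
  · exact hs i b c j y z g1 g2 g3 g4 g5 g6 hS (h _ _ (by omega) (by omega) t1) (h _ _ (by omega) (by omega) t2)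
  · exact hs a i c x j z g1 g2 g3 g4 g5 g6 (h _ _ (by omega) (by omega) t1) hS (h _ _ (by omega) (by omega) t2)
  · exact hs a b i x y j g1 g2 g3 g4 g5 h2 (h _ _ (by omega) (by omega) t1) (h _ _ (by omega) (by omega) t2) hS

theorem lft_lt {i j i' j' : ℕ} (h : i < j) (li : lft i i') (lj : lft j j') : i' < j' := by
  unfold lft at *; omega

theorem lft_ltn {i n i' : ℕ} (h : i < n) (li : lft i i') : i' < n + 1 := by
  unfold lft at *; omega

theorem Flip.con {n : ℕ} {T₁ T₂ : ℕ → ℕ → Prop} {e1 e2 f1 f2 : ℕ} (hn : 5 ≤ n)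
    (h : Flip (n + 1) T₁ T₂ e1 e2 f1 f2) (h1 : T₁ 0 3) (h2 : T₂ 0 3)
    (ha : e1 ≠ 1) (hb : e1 ≠ 2) (hc : e2 ≠ 1) (hd : e2 ≠ 2) :
    Flip n (contr T₁) (contr T₂) (pj e1) (pj e2) (pj f1) (pj f2) := by
  have := h.elt; have := h.en; have := h.flt; have := h.fn
  have C1 := h.c1.con
  have C2 := h.c2.con
  have M1 := h.m1.con hn h.c1 h1
  have M2 := h.m2.con hn h.c2 h2
  have ee : ¬ contr T₂ (pj e1) (pj e2) := by
    rintro ⟨i, j, t, li, lj⟩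
    have hi : i = e1 := by unfold lft pj at *; split_ifs at * <;> omega
    have hj : j = e2 := by unfold lft pj at *; split_ifs at * <;> omega
    subst hi hj
    exact h.e2m t
  have S1 : ∀ i j, i < j → j < n → contr T₁ i j → contr T₂ i j ∨ (i = pj e1 ∧ j = pj e2) := by
    rintro i j hij hj ⟨i', j', t, li, lj⟩
    rcases h.s1 i' j' (lft_lt hij li lj) (lft_ltn hj lj) t with q | ⟨rfl, rfl⟩
    · exact Or.inl ⟨i', j', q, li, lj⟩
    · exact Or.inr ⟨lft_iff.1 li, lft_iff.1 lj⟩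
  have S2 : ∀ i j, i < j → j < n → contr T₂ i j → contr T₁ i j ∨ (i = pj f1 ∧ j = pj f2) := by
    rintro i j hij hj ⟨i', j', t, li, lj⟩
    rcases h.s2 i' j' (lft_lt hij li lj) (lft_ltn hj lj) t with q | ⟨rfl, rfl⟩
    · exact Or.inl ⟨i', j', q, li, lj⟩
    · exact Or.inr ⟨lft_iff.1 li, lft_iff.1 lj⟩
  have eem : contr T₁ (pj e1) (pj e2) := contr_of h.e1m
  have elt : pj e1 < pj e2 := pj_lt h.elt (by omega)
  have en : pj e2 < n := pj_ltn (by omega) h.en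
  have ff : ¬ contr T₁ (pj f1) (pj f2) := by
    intro hf
    refine ee (M2.anti C1 (fun i j hij hj t => ?_) elt en eem)
    rcases S2 i j hij hj t with q | ⟨rfl, rfl⟩
    · exact q
    · exact hf
  have flt : pj f1 < pj f2 := by
    refine pj_lt h.flt ?_
    rintro ⟨rfl, rfl⟩
    exact h.f1m (h.m1.short (by omega) (by omega) (by omega))
  exact ⟨C1, M1, C2, M2, elt, en, flt, pj_ltn (by omega) h.fn, eem, ee, contr_of h.f2m, ff, S1, S2⟩

open Classical in
noncomputable def edg (n : ℕ) (T : ℕ → ℕ → Prop) : Finset (ℕ × ℕ) :=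
  (Finset.range n ×ˢ Finset.range n).filter (fun p => p.1 < p.2 ∧ T p.1 p.2)

theorem mem_edg {n : ℕ} {T : ℕ → ℕ → Prop} {p : ℕ × ℕ} :
    p ∈ edg n T ↔ p.1 < p.2 ∧ p.2 < n ∧ T p.1 p.2 := by
  simp only [edg, Finset.mem_filter, Finset.mem_product, Finset.mem_range]
  constructor
  · rintro ⟨⟨_, h⟩, h2, h3⟩; exact ⟨h2, h, h3⟩
  · rintro ⟨h1, h2, h3⟩; exact ⟨⟨by omega, h2⟩, h1, h3⟩

theorem edg_rot (n : ℕ) (T : ℕ → ℕ → Prop) : (edg n (rot n T)).card ≤ (edg n T).card := by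
  refine Finset.card_le_card_of_injOn
    (fun p => if p.2 + 1 = n then (0, p.1 + 1) else (p.1 + 1, p.2 + 1)) ?_ ?_
  · rintro ⟨i, j⟩ h
    rw [Finset.mem_coe, mem_edg] at h
    obtain ⟨h1, h2, h3⟩ := h
    simp only at h1 h2 h3
    rw [Finset.mem_coe, mem_edg]
    by_cases hj : j + 1 = n
    · rw [rot_top hj] at h3
      simp only [hj, if_true]
      exact ⟨by omega, by omega, h3⟩
    · rw [rot_low (by omega)] at h3
      simp only [hj, if_false]
      exact ⟨by omega, by omega, h3⟩
  · rintro ⟨i, j⟩ h ⟨k, l⟩ h' hh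
    rw [Finset.mem_coe, mem_edg] at h h'
    simp only at h h' hh
    split_ifs at hh <;> simp only [Prod.mk.injEq] at hh ⊢ <;> omega

theorem edg_con {n : ℕ} {T : ℕ → ℕ → Prop} (hn : 5 ≤ n) (hc : CF (n + 1) T) (hm : Mx (n + 1) T) :
    (edg n (contr T)).card + 4 ≤ (edg (n + 1) T).card := by
  classical
  obtain ⟨c, c4, cn, tc1, tc2⟩ := f2e hc hm (by omega)
  set D : Finset (ℕ × ℕ) := {(1, 2), (0, 1), (1, 3), (1, c)} with hD
  have hDc : D.card = 4 := by
    rw [hD]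
    rw [Finset.card_insert_of_notMem, Finset.card_insert_of_notMem, Finset.card_insert_of_notMem, Finset.card_singleton]
    all_goals simp
    all_goals omega
  have hDs : D ⊆ edg (n + 1) T := by
    intro p hp
    simp only [hD, Finset.mem_insert, Finset.mem_singleton] at hp
    rw [mem_edg]
    rcases hp with rfl | rfl | rfl | rfl
    · exact ⟨by omega, by omega, hm.short (by omega) (by omega) (by omega)⟩
    · exact ⟨by omega, by omega, hm.short (by omega) (by omega) (by omega)⟩
    · exact ⟨by omega, by omega, hm.short (by omega) (by omega) (by omega)⟩
    · exact ⟨by simp only; omega, cn, tc1⟩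
  have hsub : edg n (contr T) ⊆ (edg (n + 1) T \ D).image (fun p => (pj p.1, pj p.2)) := by
    rintro ⟨i, j⟩ h
    rw [mem_edg] at h
    obtain ⟨h1, h2, i', j', t, li, lj⟩ := h
    simp only at h1 h2 li lj
    have l1 := lft_lt h1 li lj
    have l2 := lft_ltn h2 lj
    have g : ∀ x y, x < y → y < n + 1 → T x y → (x, y) ∉ D → pj x = i → pj y = j →
        (i, j) ∈ (edg (n + 1) T \ D).image (fun p => (pj p.1, pj p.2)) := by
      rintro x y hx hy ht hd rfl rfl
      exact Finset.mem_image.2 ⟨(x, y), Finset.mem_sdiff.2 ⟨mem_edg.2 ⟨hx, hy, ht⟩, hd⟩, rfl⟩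
    by_cases hd : (i', j') ∈ D
    · simp only [hD, Finset.mem_insert, Finset.mem_singleton, Prod.mk.injEq] at hd
      rcases hd with ⟨rfl, rfl⟩ | ⟨rfl, rfl⟩ | ⟨rfl, rfl⟩ | ⟨rfl, rfl⟩
      · unfold lft at li lj; omega
      · exact g 0 2 (by omega) (by omega) (hm.short (by omega) (by omega) (by omega)) (by simp [hD])
          (lft_iff.1 li).symm (lft_iff.1 lj).symm
      · exact g 2 3 (by omega) (by omega) (hm.short (by omega) (by omega) (by omega)) (by simp [hD])
          (lft_iff.1 li).symm (lft_iff.1 lj).symm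
      · exact g 2 j' (by omega) (by omega) tc2 (by simp [hD])
          (lft_iff.1 li).symm (lft_iff.1 lj).symm
    · exact g i' j' l1 l2 t hd (lft_iff.1 li).symm (lft_iff.1 lj).symm
  have h1 := (Finset.card_le_card hsub).trans Finset.card_image_le
  rw [Finset.card_sdiff_of_subset hDs, hDc] at h1
  have h2 := Finset.card_le_card hDs
  omega

theorem card_ge : ∀ n, 5 ≤ n → ∀ T : ℕ → ℕ → Prop, CF n T → Mx n T → 4 * n ≤ (edg n T).card + 10 := by
  intro n hn
  induction n, hn using Nat.le_induction with
  | base =>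
    intro T hc hm
    have : ((Finset.range 5 ×ˢ Finset.range 5).filter (fun p : ℕ × ℕ => p.1 < p.2)) ⊆ edg 5 T := by
      rintro ⟨i, j⟩ h
      simp only [Finset.mem_filter, Finset.mem_product, Finset.mem_range] at h
      rw [mem_edg]
      exact ⟨h.2, h.1.2, hm.short h.2 h.1.2 (by omega)⟩
    have h2 := Finset.card_le_card this
    have h3 : ((Finset.range 5 ×ˢ Finset.range 5).filter (fun p : ℕ × ℕ => p.1 < p.2)).card = 10 := by decide
    omega
  | succ n hn ih =>
    have aux : ∀ s, ∀ T : ℕ → ℕ → Prop, CF (n + 1) T → Mx (n + 1) T → s + 3 < n + 1 → T s (s + 3) →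
        4 * (n + 1) ≤ (edg (n + 1) T).card + 10 := by
      intro s
      induction s with
      | zero =>
        intro T hc hm _ h03
        have h1 := ih (contr T) hc.con (hm.con hn hc h03)
        have h2 := edg_con hn hc hm
        omega
      | succ s ihs =>
        intro T hc hm hs h03
        have h1 := ihs (rot (n + 1) T) hc.rot hm.rot (by omega)
          ((rot_low (by omega)).2 (by rwa [show s + 3 + 1 = s + 1 + 3 by omega]))
        have h2 := edg_rot (n + 1) T
        omega
    intro T hc hm
    have : ∃ a b, a + 3 ≤ b ∧ b < n + 1 ∧ T a b := by
      by_cases h : T 0 3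
      · exact ⟨0, 3, by omega, by omega, h⟩
      rcases hm 0 3 (by omega) (by omega) h with
        ⟨b, c, y, z, g1, g2, g3, g4, g5, g6, t1, t2⟩ | ⟨a, c, x, z, g1, g2, g3, g4, g5, g6, t1, t2⟩ |
        ⟨a, b, x, y, g1, g2, g3, g4, g5, t1, t2⟩
      · exact ⟨b, y, by omega, by omega, t1⟩
      · omega
      · omega
    obtain ⟨a, b, h1, h2, h3⟩ := this
    obtain ⟨s, q1, q2, q3⟩ := ear hc hm _ a b le_rfl h1 h2 h3
    exact aux s T hc hm (by omega) q3

def dt (p q : ℝ × ℝ) : ℝ := p.1 * q.2 - p.2 * q.1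

structure Str (n : ℕ) (U : ℕ → ℕ → Prop) (q : ℕ → ℝ × ℝ) (w : ℕ → ℕ → ℝ) : Prop where
  anti : ∀ i j, w i j = - w j i
  sup : ∀ i j, i < j → w i j ≠ 0 → j < n ∧ U i j
  eqn : ∀ i, i < n → ∀ p₁ p₂ p₃ : ℝ × ℝ,
    ∑ j ∈ Finset.range n, w i j * (dt p₁ (q j) * dt p₂ (q j) * dt p₃ (q j)) = 0

def Gd (n : ℕ) (T₁ T₂ : ℕ → ℕ → Prop) (e1 e2 f1 f2 : ℕ) : Prop :=
  ∃ q : ℕ → ℝ × ℝ, (∀ i j, i < j → j < n → 0 < dt (q i) (q j)) ∧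
    ∀ w, Str n (fun i j => T₁ i j ∨ T₂ i j) q w → w ≠ 0 → 0 < w e1 e2 * w f1 f2

theorem Str.diag {n : ℕ} {U : ℕ → ℕ → Prop} {q : ℕ → ℝ × ℝ} {w : ℕ → ℕ → ℝ} (h : Str n U q w) (i : ℕ) :
    w i i = 0 := by
  have := h.anti i i; linarith

theorem Str.lt {n : ℕ} {U : ℕ → ℕ → Prop} {q : ℕ → ℝ × ℝ} {w : ℕ → ℕ → ℝ} (h : Str n U q w) {i j : ℕ}
    (hw : w i j ≠ 0) : i < n ∧ j < n := by
  rcases lt_trichotomy i j with hij | rfl | hij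
  · have := (h.sup i j hij hw).1; omega
  · exact (hw (h.diag i)).elim
  · have h2 : w j i ≠ 0 := by
      intro h3; rw [h.anti, h3, neg_zero] at hw; exact hw rfl
    have := (h.sup j i hij h2).1; omega

def ro (n i : ℕ) : ℕ := if i + 1 = n then 0 else i + 1
noncomputable def sg (n i : ℕ) : ℝ := if i + 1 = n then -1 else 1

theorem sg_ne (n i : ℕ) : sg n i ≠ 0 := by unfold sg; split_ifs <;> norm_num

theorem sg_top {n i : ℕ} (h : i + 1 = n) : sg n i = -1 := by simp [sg, h]
theorem sg_low {n i : ℕ} (h : i + 1 ≠ n) : sg n i = 1 := by simp [sg, h]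
theorem ro_top {n i : ℕ} (h : i + 1 = n) : ro n i = 0 := by simp [ro, h]
theorem ro_low {n i : ℕ} (h : i + 1 ≠ n) : ro n i = i + 1 := by simp [ro, h]

theorem rot_w {n : ℕ} {w : ℕ → ℕ → ℝ} (ha : ∀ i j, w i j = - w j i) {i j : ℕ} (hi : i < j) (hj : j < n) :
    sg n (rL i j) * sg n (rR n i j) * w (ro n (rL i j)) (ro n (rR n i j)) = w i j := by
  unfold rL rR
  by_cases h : i = 0
  · subst h
    simp only [if_true]
    rw [sg_low (by omega), sg_top (by omega), ro_low (by omega), ro_top (by omega),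
      show j - 1 + 1 = j by omega, ha j 0]
    ring
  · simp only [h, if_false]
    rw [sg_low (by omega), sg_low (by omega), ro_low (by omega), ro_low (by omega),
      show j - 1 + 1 = j by omega, show i - 1 + 1 = i by omega]
    ring

theorem Gd.rot {n : ℕ} {T₁ T₂ : ℕ → ℕ → Prop} {e1 e2 f1 f2 : ℕ}
    (he : e1 < e2) (hen : e2 < n) (hf : f1 < f2) (hfn : f2 < n)
    (h : Gd n (rot n T₁) (rot n T₂) (rL e1 e2) (rR n e1 e2) (rL f1 f2) (rR n f1 f2)) :
    Gd n T₁ T₂ e1 e2 f1 f2 := by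
  obtain ⟨m, rfl⟩ : ∃ m, n = m + 1 := ⟨n - 1, by omega⟩
  obtain ⟨q', hq, H⟩ := h
  let q : ℕ → ℝ × ℝ := fun j => if j = 0 then - q' m else q' (j - 1)
  have q0 : q 0 = - q' m := by simp [q]
  have qs : ∀ j, q (j + 1) = q' j := by intro j; simp [q]
  refine ⟨q, ?_, ?_⟩
  · intro i j hij hj
    obtain ⟨j, rfl⟩ : ∃ k, j = k + 1 := ⟨j - 1, by omega⟩
    rw [qs]
    rcases Nat.eq_zero_or_pos i with rfl | hi
    · have := hq j m (by omega) (by omega)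
      rw [q0]
      simp only [dt, Prod.fst_neg, Prod.snd_neg] at this ⊢
      linarith
    · obtain ⟨i, rfl⟩ : ∃ k, i = k + 1 := ⟨i - 1, by omega⟩
      rw [qs]
      exact hq i j (by omega) (by omega)
  · intro w hw hne
    let w' : ℕ → ℕ → ℝ := fun i j => sg (m + 1) i * sg (m + 1) j * w (ro (m + 1) i) (ro (m + 1) j)
    have hs : Str (m + 1) (fun i j => _root_.rot (m + 1) T₁ i j ∨ _root_.rot (m + 1) T₂ i j) q' w' := by
      refine ⟨?_, ?_, ?_⟩
      · intro i j
        simp only [w']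
        rw [hw.anti]; ring
      · intro i j hij hne
        have h1 : w (ro (m + 1) i) (ro (m + 1) j) ≠ 0 := right_ne_zero_of_mul hne
        by_cases hj : j + 1 = m + 1
        · rw [ro_top hj, ro_low (by omega)] at h1
          have h2 : w 0 (i + 1) ≠ 0 := by
            intro h3; rw [hw.anti, h3, neg_zero] at h1; exact h1 rfl
          have h4 := hw.sup _ _ (by omega) h2
          refine ⟨by omega, ?_⟩
          rw [rot_top hj, rot_top hj]
          exact h4.2
        · rw [ro_low hj] at h1
          have h5 := (hw.lt h1).2
          rw [ro_low (by omega)] at h1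
          have h4 := hw.sup _ _ (by omega) h1
          refine ⟨by omega, ?_⟩
          rw [rot_low (by omega), rot_low (by omega)]
          exact h4.2
      · intro i hi p₁ p₂ p₃
        have h1 := hw.eqn (ro (m + 1) i) (by unfold ro; split_ifs <;> omega) p₁ p₂ p₃
        rw [Finset.sum_range_succ', q0] at h1
        rw [Finset.sum_range_succ]
        have h2 : ∑ j ∈ Finset.range m, w' i j * (dt p₁ (q' j) * dt p₂ (q' j) * dt p₃ (q' j)) =
            sg (m + 1) i * ∑ j ∈ Finset.range m, w (ro (m + 1) i) (j + 1) * (dt p₁ (q (j + 1)) * dt p₂ (q (j + 1)) * dt p₃ (q (j + 1))) := by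
          rw [Finset.mul_sum]
          refine Finset.sum_congr rfl fun j hj => ?_
          have := Finset.mem_range.1 hj
          simp only [w', qs]
          rw [sg_low (i := j) (by omega), ro_low (i := j) (by omega)]
          ring
        rw [h2, eq_neg_of_add_eq_zero_left h1]
        simp only [w']
        rw [sg_top (i := m) rfl, ro_top (i := m) rfl]
        simp only [dt, Prod.fst_neg, Prod.snd_neg]
        ring
    have hne' : w' ≠ 0 := by
      intro h0
      apply hne
      funext i j
      by_contra hij
      have hij : w i j ≠ 0 := hij
      obtain ⟨hi, hj⟩ := hw.lt hij
      have hro : ∀ i, i < m + 1 → ∃ k, ro (m + 1) k = i := by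
        intro i hi
        by_cases h : i = 0
        · exact ⟨m, by rw [ro_top rfl, h]⟩
        · exact ⟨i - 1, by rw [ro_low (by omega)]; omega⟩
      obtain ⟨k, rfl⟩ := hro i hi
      obtain ⟨l, rfl⟩ := hro j hj
      have := congrFun (congrFun h0 k) l
      simp only [w', Pi.zero_apply, mul_eq_zero] at this
      rcases this with (h | h) | h
      · exact sg_ne _ _ h
      · exact sg_ne _ _ h
      · exact hij h
    have := H w' hs hne'
    simp only [w'] at this
    rwa [rot_w hw.anti he hen, rot_w hw.anti hf hfn] at this

theorem Str.smul {n : ℕ} {U : ℕ → ℕ → Prop} {q : ℕ → ℝ × ℝ} {w : ℕ → ℕ → ℝ} (h : Str n U q w) (c : ℝ) :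
    Str n U q (fun i j => c * w i j) := by
  refine ⟨?_, ?_, ?_⟩
  · intro i j; rw [h.anti]; ring
  · intro i j hij hne; exact h.sup i j hij (right_ne_zero_of_mul hne)
  · intro i hi p₁ p₂ p₃
    have := h.eqn i hi p₁ p₂ p₃
    simp only [mul_assoc] at this ⊢
    rw [← Finset.mul_sum, this, mul_zero]

theorem pert (N : ℕ) (U : ℕ → ℕ → Prop) (q u : ℕ → ℝ × ℝ) (e1 e2 f1 f2 : ℕ)
    (H : ∀ w, Str N U q w → w ≠ 0 → 0 < w e1 e2 * w f1 f2) :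
    ∃ ε : ℝ, 0 < ε ∧ ∀ w, Str N U (fun j => q j + ε • u j) w → w ≠ 0 → 0 < w e1 e2 * w f1 f2 := by
  let B : Set (ℕ → ℕ → ℝ) := Set.pi Set.univ fun _ => Set.pi Set.univ fun _ => Set.Icc (-1) 1
  have hB : IsCompact B := isCompact_univ_pi fun _ => isCompact_univ_pi fun _ => isCompact_Icc
  let C : Set (ℝ × (ℕ → ℕ → ℝ)) := {x | Str N U (fun j => q j + x.1 • u j) x.2 ∧
    (∑ i ∈ Finset.range N, ∑ j ∈ Finset.range N, |x.2 i j| = 1) ∧ x.2 e1 e2 * x.2 f1 f2 ≤ 0}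
  have ev : ∀ i j, Continuous fun x : ℝ × (ℕ → ℕ → ℝ) => x.2 i j := fun i j => by fun_prop
  have hC : IsClosed C := by
    have : C = ((⋂ i, ⋂ j, {x : ℝ × (ℕ → ℕ → ℝ) | x.2 i j = - x.2 j i}) ∩
        (⋂ i, ⋂ j, {x | i < j → ¬ (j < N ∧ U i j) → x.2 i j = 0}) ∩
        (⋂ i, ⋂ p₁ : ℝ × ℝ, ⋂ p₂ : ℝ × ℝ, ⋂ p₃ : ℝ × ℝ, {x | i < N → ∑ j ∈ Finset.range N, x.2 i j *
          (dt p₁ (q j + x.1 • u j) * dt p₂ (q j + x.1 • u j) * dt p₃ (q j + x.1 • u j)) = 0})) ∩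
        {x | ∑ i ∈ Finset.range N, ∑ j ∈ Finset.range N, |x.2 i j| = 1} ∩
        {x | x.2 e1 e2 * x.2 f1 f2 ≤ 0} := by
      ext x
      simp only [C, Set.mem_setOf_eq, Set.mem_inter_iff, Set.mem_iInter]
      constructor
      · rintro ⟨⟨h1, h2, h3⟩, h4, h5⟩
        refine ⟨⟨⟨⟨h1, fun i j hij hn => ?_⟩, fun i p₁ p₂ p₃ hi => h3 i hi p₁ p₂ p₃⟩, h4⟩, h5⟩
        by_contra h; exact hn (h2 i j hij h)
      · rintro ⟨⟨⟨⟨h1, h2⟩, h3⟩, h4⟩, h5⟩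
        refine ⟨⟨h1, fun i j hij hn => ?_, fun i hi p₁ p₂ p₃ => h3 i p₁ p₂ p₃ hi⟩, h4, h5⟩
        by_contra h; exact hn (h2 i j hij h)
    rw [this]
    refine IsClosed.inter (IsClosed.inter (IsClosed.inter (IsClosed.inter ?_ ?_) ?_) ?_) ?_
    · exact isClosed_iInter fun i => isClosed_iInter fun j => isClosed_eq (ev i j) (ev j i).neg
    · refine isClosed_iInter fun i => isClosed_iInter fun j => ?_
      by_cases h : i < j ∧ ¬ (j < N ∧ U i j)
      · have : {x : ℝ × (ℕ → ℕ → ℝ) | i < j → ¬ (j < N ∧ U i j) → x.2 i j = 0} = {x | x.2 i j = 0} := by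
          ext x; exact ⟨fun g => g h.1 h.2, fun g _ _ => g⟩
        rw [this]
        exact isClosed_eq (ev i j) continuous_const
      · have : {x : ℝ × (ℕ → ℕ → ℝ) | i < j → ¬ (j < N ∧ U i j) → x.2 i j = 0} = Set.univ := by
          ext x; exact ⟨fun g => trivial, fun _ g1 g2 => (h ⟨g1, g2⟩).elim⟩
        rw [this]
        exact isClosed_univ
    · refine isClosed_iInter fun i => isClosed_iInter fun p₁ => isClosed_iInter fun p₂ => isClosed_iInter fun p₃ => ?_
      by_cases h : i < N
      · simp only [h, true_imp_iff]
        refine isClosed_eq ?_ continuous_const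
        unfold dt
        fun_prop
      · simp only [h, false_imp_iff, Set.setOf_true, isClosed_univ]
    · exact isClosed_eq (by fun_prop) continuous_const
    · exact isClosed_le (by fun_prop) continuous_const
  have hK : IsCompact ((Set.Icc (0:ℝ) 1 ×ˢ B) ∩ C) := (isCompact_Icc.prod hB).inter_right hC
  have hP : IsClosed (Prod.fst '' ((Set.Icc (0:ℝ) 1 ×ˢ B) ∩ C)) := (hK.image continuous_fst).isClosed
  have h0 : (0:ℝ) ∉ Prod.fst '' ((Set.Icc (0:ℝ) 1 ×ˢ B) ∩ C) := by
    rintro ⟨⟨ε, w⟩, ⟨_, hs, hn, hle⟩, rfl⟩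
    simp only [zero_smul, add_zero] at hs hn hle
    have hw : w ≠ 0 := by
      rintro rfl
      simp at hn
    exact absurd (H w hs hw) (not_lt.2 hle)
  have hev : ∀ᶠ ε in nhds (0:ℝ), ε ∉ Prod.fst '' ((Set.Icc (0:ℝ) 1 ×ˢ B) ∩ C) :=
    hP.isOpen_compl.mem_nhds h0
  obtain ⟨δ, hδ, hb⟩ := Metric.eventually_nhds_iff.1 hev
  refine ⟨min (δ / 2) 1, by positivity, ?_⟩
  set ε := min (δ / 2) 1 with hε
  have e0 : 0 < ε := by positivity
  have hlt : ε < δ := (min_le_left _ _).trans_lt (by linarith)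
  have hn := hb (y := ε) (by rw [Real.dist_eq, sub_zero, abs_of_pos e0]; exact hlt)
  intro w hw hne
  by_contra hle
  rw [not_lt] at hle
  apply hn
  let S := ∑ i ∈ Finset.range N, ∑ j ∈ Finset.range N, |w i j|
  have hS : ∀ i j, |w i j| ≤ S := by
    intro i j
    by_cases h : w i j = 0
    · rw [h, abs_zero]; exact Finset.sum_nonneg fun _ _ => Finset.sum_nonneg fun _ _ => abs_nonneg _
    · obtain ⟨hi, hj⟩ := hw.lt h
      calc |w i j| ≤ ∑ j ∈ Finset.range N, |w i j| :=
            Finset.single_le_sum (f := fun j => |w i j|) (fun _ _ => abs_nonneg _) (Finset.mem_range.2 hj)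
        _ ≤ S := Finset.single_le_sum (f := fun i => ∑ j ∈ Finset.range N, |w i j|)
            (fun _ _ => Finset.sum_nonneg fun _ _ => abs_nonneg _) (Finset.mem_range.2 hi)
  have hSpos : 0 < S := by
    by_contra h
    apply hne
    funext i j
    have := hS i j
    have h2 := abs_nonneg (w i j)
    exact abs_eq_zero.1 (le_antisymm (by linarith) h2)
  refine ⟨(ε, fun i j => S⁻¹ * w i j), ⟨⟨⟨e0.le, min_le_right _ _⟩, ?_⟩, hw.smul _, ?_, ?_⟩, rfl⟩
  · intro i _ j _
    have : |S⁻¹ * w i j| ≤ 1 := by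
      rw [abs_mul, abs_of_pos (inv_pos.2 hSpos), inv_mul_le_iff₀ hSpos, mul_one]
      exact hS i j
    exact abs_le.1 this
  · simp only [abs_mul, ← Finset.mul_sum]
    rw [abs_of_pos (inv_pos.2 hSpos)]
    exact inv_mul_cancel₀ hSpos.ne'
  · have : S⁻¹ * w e1 e2 * (S⁻¹ * w f1 f2) = S⁻¹ ^ 2 * (w e1 e2 * w f1 f2) := by ring
    simp only [this]
    exact mul_nonpos_of_nonneg_of_nonpos (by positivity) hle

def sft (j : ℕ) : ℕ := if j ≤ 1 then j else j + 1

noncomputable def cc (g : ℕ → ℝ) (j : ℕ) : ℝ := g (sft j) + if j = 1 then g 2 else 0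

theorem cc_sum (m : ℕ) (g h : ℕ → ℝ) :
    ∑ j ∈ Finset.range (m + 2), cc g j * h j = ∑ j ∈ Finset.range (m + 3), g j * h (pj j) := by
  rw [Finset.sum_range_succ', Finset.sum_range_succ', Finset.sum_range_succ', Finset.sum_range_succ',
    Finset.sum_range_succ']
  have : ∀ j, cc g (j + 1 + 1) * h (j + 1 + 1) = g (j + 1 + 1 + 1) * h (pj (j + 1 + 1 + 1)) := by
    intro j
    simp [cc, sft, pj]
  simp only [this]
  simp [cc, sft, pj]
  ring

theorem cc_ne {g : ℕ → ℝ} {j : ℕ} (h1 : j ≠ 1) (h2 : j ≠ 2) : cc g (pj j) = g j := by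
  have a : pj j ≠ 1 := by unfold pj; split_ifs <;> omega
  have b : sft (pj j) = j := by unfold sft pj; split_ifs <;> omega
  simp [cc, a, b]

theorem cc_one {g : ℕ → ℝ} : cc g 1 = g 1 + g 2 := by simp [cc, sft]

theorem cc_exists {g : ℕ → ℝ} {j : ℕ} (h : cc g j ≠ 0) : ∃ j', lft j j' ∧ g j' ≠ 0 := by
  by_contra hh
  push Not at hh
  apply h
  have h1 : g (sft j) = 0 := hh _ (by unfold lft sft; split_ifs <;> omega)
  by_cases hj : j = 1
  · subst hj
    rw [cc_one, hh 1 (by unfold lft; omega), hh 2 (by unfold lft; omega), add_zero]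
  · simp [cc, h1, hj]

theorem dt_self (p : ℝ × ℝ) : dt p p = 0 := by unfold dt; ring

theorem dt_ne {n : ℕ} {q : ℕ → ℝ × ℝ} (hq : ∀ i j, i < j → j < n → 0 < dt (q i) (q j)) {i j : ℕ}
    (hi : i < n) (hj : j < n) (h : i ≠ j) : dt (q i) (q j) ≠ 0 := by
  rcases lt_or_gt_of_ne h with g | g
  · exact (hq i j g hj).ne'
  · have := hq j i g hi
    unfold dt at *
    intro h0
    linarith

theorem Gd.con {n : ℕ} {T₁ T₂ : ℕ → ℕ → Prop} {e1 e2 f1 f2 : ℕ} (hn : 5 ≤ n)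
    (h : Flip (n + 1) T₁ T₂ e1 e2 f1 f2) (h1 : T₁ 0 3) (h2 : T₂ 0 3)
    (ha : e1 ≠ 1) (hb : e1 ≠ 2) (hc : e2 ≠ 1) (hd : e2 ≠ 2)
    (G : Gd n (contr T₁) (contr T₂) (pj e1) (pj e2) (pj f1) (pj f2)) :
    Gd (n + 1) T₁ T₂ e1 e2 f1 f2 := by
  have hF := h.con hn h1 h2 ha hb hc hd
  obtain ⟨q', hq, H⟩ := G
  have hcU : ∀ j, 4 ≤ j → j < n + 1 → (T₁ 1 j ∨ T₂ 1 j) → (T₁ 2 j ∨ T₂ 2 j) → T₁ 1 j ∧ T₁ 2 j := by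
    intro j h4 hj u1 u2
    by_cases t1 : T₁ 1 j
    · refine ⟨t1, ?_⟩
      by_contra t2
      rcases u2 with u2 | u2
      · exact t2 u2
      rcases h.s2 2 j (by omega) hj u2 with q | ⟨rfl, rfl⟩
      · exact t2 q
      · exact hF.f1m ⟨1, j, t1, Or.inl ⟨rfl, le_rfl⟩, lft_pj j⟩
    · exfalso
      rcases u1 with u1 | u1
      · exact t1 u1
      rcases h.s2 1 j (by omega) hj u1 with q | ⟨rfl, rfl⟩
      · exact t1 q
      · rcases u2 with u2 | u2
        · exact hF.f1m ⟨2, _, u2, Or.inr ⟨rfl, le_rfl⟩, lft_pj _⟩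
        rcases h.s2 2 _ (by omega) hj u2 with q | ⟨q, _⟩
        · exact hF.f1m ⟨2, _, q, Or.inr ⟨rfl, le_rfl⟩, lft_pj _⟩
        · omega
  obtain ⟨c, c4, cn, tc1, tc2⟩ := f2e h.c1 h.m1 (by omega)
  have hcu : ∀ j, 4 ≤ j → j < n + 1 → (T₁ 1 j ∨ T₂ 1 j) → (T₁ 2 j ∨ T₂ 2 j) → j = c := by
    intro j h4 hj u1 u2
    obtain ⟨t1, t2⟩ := hcU j h4 hj u1 u2
    rcases lt_trichotomy j c with g | g | g
    · exact (f2u h.c1 h1 h4 g cn t1 tc2).elim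
    · exact g
    · exact (f2u h.c1 h1 c4 g hj tc1 t2).elim
  have key : ∀ w, Str (n + 1) (fun i j => T₁ i j ∨ T₂ i j) (fun j => q' (pj j)) w → w ≠ 0 →
      0 < w e1 e2 * w f1 f2 := by
    intro w hw hne
    let w' : ℕ → ℕ → ℝ := fun i j => cc (fun k => cc (w k) j) i
    have hs : Str n (fun i j => contr T₁ i j ∨ contr T₂ i j) q' w' := by
      refine ⟨?_, ?_, ?_⟩
      · intro i j
        simp only [w', cc]
        rw [hw.anti (sft j) (sft i), hw.anti (sft j) 2, hw.anti 2 (sft i), hw.diag 2]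
        split_ifs <;> ring
      · intro i j hij hne
        obtain ⟨i', li, hi'⟩ := cc_exists hne
        obtain ⟨j', lj, hj'⟩ := cc_exists hi'
        have := hw.sup i' j' (lft_lt hij li lj) hj'
        refine ⟨?_, ?_⟩
        · unfold lft at lj; omega
        · rcases this.2 with t | t
          · exact Or.inl ⟨i', j', t, li, lj⟩
          · exact Or.inr ⟨i', j', t, li, lj⟩
      · intro i hi p₁ p₂ p₃
        obtain ⟨m, rfl⟩ : ∃ m, n = m + 2 := ⟨n - 2, by omega⟩
        have row : ∀ k, k < m + 3 → ∑ j ∈ Finset.range (m + 2), cc (w k) j *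
            (dt p₁ (q' j) * dt p₂ (q' j) * dt p₃ (q' j)) = 0 := by
          intro k hk
          rw [cc_sum m (w k) (fun j => dt p₁ (q' j) * dt p₂ (q' j) * dt p₃ (q' j))]
          exact hw.eqn k hk p₁ p₂ p₃
        have r1 := row (sft i) (by unfold sft; split_ifs <;> omega)
        have r2 := row 2 (by omega)
        have : ∀ j, w' i j = cc (w (sft i)) j + if i = 1 then cc (w 2) j else 0 := fun j => rfl
        simp only [this, add_mul, Finset.sum_add_distrib, r1, zero_add]
        split_ifs
        · exact r2
        · simp
    have w1 : ∀ j, j ≠ 1 → j ≠ 2 → w' 1 (pj j) = w 1 j + w 2 j := by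
      intro j a b
      simp only [w']
      rw [cc_one, cc_ne a b, cc_ne a b]
    have wg : ∀ i j, i ≠ 1 → i ≠ 2 → j ≠ 1 → j ≠ 2 → w' (pj i) (pj j) = w i j := by
      intro i j a b c d
      simp only [w']
      rw [cc_ne a b, cc_ne c d]
    have hne' : w' ≠ 0 := by
      intro h0
      have h0' : ∀ i j, w' i j = 0 := fun i j => by rw [h0]; rfl
      have z1 : ∀ i j, i ≠ 1 → i ≠ 2 → j ≠ 1 → j ≠ 2 → w i j = 0 := by
        intro i j a b c d
        rw [← wg i j a b c d]; exact h0' _ _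
      have z2 : ∀ j, j ≠ 1 → j ≠ 2 → w 2 j = - w 1 j := by
        intro j a b
        have := w1 j a b
        rw [h0'] at this
        linarith
      have sup1 : ∀ j, w 1 j ≠ 0 → j = 0 ∨ j = 2 ∨ j = 3 ∨ j = c := by
        intro j hj
        have hj1 : j ≠ 1 := by rintro rfl; exact hj (hw.diag 1)
        by_cases hj4 : 4 ≤ j
        · have hj2 : w 2 j ≠ 0 := by rw [z2 j (by omega) (by omega)]; exact neg_ne_zero.2 hj
          have a1 := hw.sup 1 j (by omega) hj
          have a2 := hw.sup 2 j (by omega) hj2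
          exact Or.inr (Or.inr (Or.inr (hcu j hj4 a1.1 a1.2 a2.2)))
        · omega
      have dne : ∀ i j, i < n + 1 → j < n + 1 → pj i ≠ pj j → dt (q' (pj i)) (q' (pj j)) ≠ 0 :=
        fun i j hi hj hij => dt_ne hq (pj_ltn (by omega) hi) (pj_ltn (by omega) hj) hij
      have kill : ∀ j a b d, j < n + 1 → a < n + 1 → b < n + 1 → d < n + 1 → pj a ≠ pj j → pj b ≠ pj j →
          pj d ≠ pj j → (∀ k, w 1 k ≠ 0 → k = j ∨ k = a ∨ k = b ∨ k = d) → w 1 j = 0 := by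
        intro j a b d hj ha hb hd na nb nd hk
        have he := hw.eqn 1 (by omega) (q' (pj a)) (q' (pj b)) (q' (pj d))
        rw [Finset.sum_eq_single j] at he
        · rcases mul_eq_zero.1 he with g | g
          · exact g
          · exact (mul_ne_zero (mul_ne_zero (dne _ _ ha hj na) (dne _ _ hb hj nb)) (dne _ _ hd hj nd) g).elim
        · intro k _ hkj
          by_cases g : w 1 k = 0
          · rw [g, zero_mul]
          · rcases hk k g with rfl | rfl | rfl | rfl
            · exact (hkj rfl).elim
            all_goals simp [dt_self]
        · intro g; exact (g (Finset.mem_range.2 hj)).elim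
      have p0 : pj 0 = 0 := rfl
      have p2 : pj 2 = 1 := rfl
      have p3 : pj 3 = 2 := rfl
      have pc : pj c = c - 1 := by unfold pj; split_ifs <;> omega
      have W1 : ∀ j, w 1 j = 0 := by
        intro j
        by_contra hj
        rcases sup1 j hj with rfl | rfl | rfl | rfl
        · exact hj (kill 0 2 3 c (by omega) (by omega) (by omega) (by omega) (by omega) (by omega) (by omega)
            (fun k hk => by have := sup1 k hk; omega))
        · exact hj (kill 2 0 3 c (by omega) (by omega) (by omega) (by omega) (by omega) (by omega) (by omega)
            (fun k hk => by have := sup1 k hk; omega))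
        · exact hj (kill 3 0 2 c (by omega) (by omega) (by omega) (by omega) (by omega) (by omega) (by omega)
            (fun k hk => by have := sup1 k hk; omega))
        · exact hj (kill j 0 2 3 (by omega) (by omega) (by omega) (by omega) (by omega) (by omega) (by omega)
            (fun k hk => by have := sup1 k hk; omega))
      have W2 : ∀ j, w 2 j = 0 := by
        intro j
        by_cases a : j = 1
        · rw [a, hw.anti, W1, neg_zero]
        by_cases b : j = 2
        · rw [b]; exact hw.diag 2
        rw [z2 j a b, W1, neg_zero]
      apply hne
      funext i j
      show w i j = 0
      by_cases a : i = 1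
      · rw [a, W1]
      by_cases b : i = 2
      · rw [b, W2]
      by_cases c : j = 1
      · rw [c, hw.anti, W1, neg_zero]
      by_cases d : j = 2
      · rw [d, hw.anti, W2, neg_zero]
      exact z1 i j a b c d
    have fin := H w' hs hne'
    rw [wg e1 e2 ha hb hc hd] at fin
    have hff : w' (pj f1) (pj f2) = w f1 f2 := by
      have l1 := h.flt
      have l2 := h.fn
      have b2 : ¬ f2 ≤ f1 + 2 := fun g => h.f1m (h.m1.short h.flt h.fn (Or.inl g))
      have nz : ∀ k, pj k = pj f1 → k < f2 → k ≠ f1 → w k f2 = 0 := by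
        intro k hk hk2 hkf
        by_contra g
        have := (hw.sup k f2 hk2 g).2
        have t : T₁ k f2 := by
          rcases this with t | t
          · exact t
          · rcases h.s2 k f2 hk2 h.fn t with t | t
            · exact t
            · exact (hkf t.1).elim
        have := contr_of t
        rw [hk] at this
        exact hF.f1m this
      by_cases a : f1 = 1
      · subst a
        rw [show pj 1 = 1 from rfl, w1 f2 (by omega) (by omega), nz 2 rfl (by omega) (by omega), add_zero]
      by_cases b : f1 = 2
      · subst b
        rw [show pj 2 = 1 from rfl, w1 f2 (by omega) (by omega), nz 1 rfl (by omega) (by omega), zero_add]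
      exact wg f1 f2 a b (by omega) (by omega)
    rwa [hff] at fin
  let u : ℕ → ℝ × ℝ := fun j => if j = 2 then q' 2 else 0
  obtain ⟨ε, e0, hε⟩ := pert (n + 1) _ (fun j => q' (pj j)) u e1 e2 f1 f2 key
  refine ⟨_, ?_, hε⟩
  intro i j hij hj
  have dadd : ∀ a b c : ℝ × ℝ, dt a (b + ε • c) = dt a b + ε * dt a c := by
    intro a b c; simp only [dt, Prod.fst_add, Prod.snd_add, Prod.smul_fst, Prod.smul_snd, smul_eq_mul]; ring
  have dadd' : ∀ a b c : ℝ × ℝ, dt (a + ε • c) b = dt a b + ε * dt c b := by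
    intro a b c; simp only [dt, Prod.fst_add, Prod.snd_add, Prod.smul_fst, Prod.smul_snd, smul_eq_mul]; ring
  have hp : ∀ i j, i < j → j < n + 1 → ¬ (i = 1 ∧ j = 2) → 0 < dt (q' (pj i)) (q' (pj j)) :=
    fun i j hij hj hne => hq _ _ (pj_lt hij hne) (pj_ltn (by omega) hj)
  have q12 := hq 1 2 (by omega) (by omega)
  by_cases a : j = 2
  · subst a
    have hi2 : i ≠ 2 := by omega
    simp only [u, hi2, if_true, if_false, smul_zero, add_zero]
    rw [dadd]
    by_cases b : i = 1
    · subst b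
      rw [show pj 1 = 1 from rfl, show pj 2 = 1 from rfl, dt_self, zero_add]
      positivity
    · have hi0 : i = 0 := by omega
      subst hi0
      have r1 := hp 0 2 (by omega) (by omega) (by omega)
      have r2 := hq 0 2 (by omega) (by omega)
      rw [show pj 0 = 0 from rfl] at *
      positivity
  · by_cases b : i = 2
    · subst b
      simp only [u, a, if_true, if_false, smul_zero, add_zero]
      rw [dadd']
      have r1 := hp 2 j (by omega) (by omega) (by omega)
      by_cases c : j = 3
      · subst c
        rw [show pj 3 = 2 from rfl, dt_self, mul_zero, add_zero]
        exact r1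
      · have r2 := hq 2 (pj j) (by unfold pj; split_ifs <;> omega) (pj_ltn (by omega) hj)
        positivity
    · simp only [u, a, b, if_false, smul_zero, add_zero]
      exact hp i j hij hj (by omega)

theorem pos_help {a b κ : ℝ} (ha : a < 0) (hb : b < 0) (hk : κ ≠ 0) : 0 < a * κ * (b * κ) := by
  have h1 : 0 < a * b := mul_pos_of_neg_of_neg ha hb
  have h2 : 0 < κ * κ := mul_self_pos.2 hk
  have : a * κ * (b * κ) = a * b * (κ * κ) := by ring
  rw [this]
  exact mul_pos h1 h2

theorem Gd.base {T₁ T₂ : ℕ → ℕ → Prop} {e1 e2 f1 f2 : ℕ}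
    (h : Flip 6 T₁ T₂ e1 e2 f1 f2) : Gd 6 T₁ T₂ e1 e2 f1 f2 := by
  have l1 := h.elt
  have l2 := h.en
  have l3 := h.flt
  have l4 := h.fn
  have b1 : ¬ (e2 ≤ e1 + 2 ∨ e1 + 6 ≤ e2 + 2) := fun g => h.e2m (h.m2.short h.elt h.en g)
  have b2 : ¬ (f2 ≤ f1 + 2 ∨ f1 + 6 ≤ f2 + 2) := fun g => h.f1m (h.m1.short h.flt h.fn g)
  refine ⟨fun i => (1, (i : ℝ)), ?_, ?_⟩
  · intro i j hij _
    simp only [dt]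
    have : (i : ℝ) < j := by exact_mod_cast hij
    linarith
  · intro w hw hne
    have E : ∀ i, i < 6 → ∀ a b c : ℝ, ∑ j ∈ Finset.range 6, w i j * ((j - a) * (j - b) * (j - c)) = 0 := by
      intro i hi a b c
      have := hw.eqn i hi (1, a) (1, b) (1, c)
      simpa [dt] using this
    have A : ∀ i j, w i j = - w j i := hw.anti
    simp only [Finset.sum_range_succ, Finset.sum_range_zero] at E
    have r01 := E 0 (by omega) 3 4 5
    have r02 := E 0 (by omega) 2 4 5
    have r03 := E 0 (by omega) 2 3 5
    have r04 := E 0 (by omega) 2 3 4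
    have r11 := E 1 (by omega) 3 4 5
    have r12 := E 1 (by omega) 2 4 5
    have r13 := E 1 (by omega) 2 3 5
    have r14 := E 1 (by omega) 2 3 4
    have r21 := E 2 (by omega) 1 4 5
    have r22 := E 2 (by omega) 1 3 5
    have r23 := E 2 (by omega) 1 3 4
    have r31 := E 3 (by omega) 1 2 5
    have r32 := E 3 (by omega) 1 2 4
    have r41 := E 4 (by omega) 1 2 3
    have a10 := A 1 0
    have a20 := A 2 0
    have a30 := A 3 0
    have a40 := A 4 0
    have a50 := A 5 0
    have a21 := A 2 1
    have a31 := A 3 1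
    have a41 := A 4 1
    have a51 := A 5 1
    have a32 := A 3 2
    have a42 := A 4 2
    have a52 := A 5 2
    have a43 := A 4 3
    have a53 := A 5 3
    have a54 := A 5 4
    have d0 := hw.diag 0
    have d1 := hw.diag 1
    have d2 := hw.diag 2
    have d3 := hw.diag 3
    have d4 := hw.diag 4
    have d5 := hw.diag 5
    simp only [d0, d1, d2, d3, d4, d5, a10, a20, a30, a40, a50, a21, a31, a41, a51, a32, a42, a52, a43, a53, a54]
      at r01 r02 r03 r04 r11 r12 r13 r14 r21 r22 r23 r31 r32 r41
    norm_num at r01 r02 r03 r04 r11 r12 r13 r14 r21 r22 r23 r31 r32 r41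
    obtain ⟨κ, hκ⟩ : ∃ κ : ℝ, w 0 1 = -5 * κ := ⟨w 0 1 / (-5), by ring⟩
    have v02 : w 0 2 = 20 * κ := by linarith
    have v03 : w 0 3 = -30 * κ := by linarith
    have v04 : w 0 4 = 20 * κ := by linarith
    have v05 : w 0 5 = -5 * κ := by linarith
    have v12 : w 1 2 = -50 * κ := by linarith
    have v13 : w 1 3 = 100 * κ := by linarith
    have v14 : w 1 4 = -75 * κ := by linarith
    have v15 : w 1 5 = 20 * κ := by linarith
    have v23 : w 2 3 = -100 * κ := by linarith
    have v24 : w 2 4 = 100 * κ := by linarith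
    have v25 : w 2 5 = -30 * κ := by linarith
    have v34 : w 3 4 = -50 * κ := by linarith
    have v35 : w 3 5 = 20 * κ := by linarith
    have v45 : w 4 5 = -5 * κ := by linarith
    have hk : κ ≠ 0 := by
      rintro rfl
      apply hne
      have z : ∀ i j, i < j → w i j = 0 := by
        intro i j hij
        by_contra g
        have := (hw.sup i j hij g).1
        apply g
        interval_cases j <;> interval_cases i <;> first | omega | simp only [hκ, v02, v03, v04, v05, v12, v13, v14, v15, v23, v24, v25, v34, v35, v45, mul_zero]
      funext i j
      show w i j = 0
      rcases lt_trichotomy i j with g | rfl | g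
      · exact z i j g
      · exact hw.diag i
      · rw [A, z j i g, neg_zero]
    have hk2 : 0 < κ ^ 2 := by positivity
    have ce : (e1 = 0 ∧ e2 = 3) ∨ (e1 = 1 ∧ e2 = 4) ∨ (e1 = 2 ∧ e2 = 5) := by omega
    have cf : (f1 = 0 ∧ f2 = 3) ∨ (f1 = 1 ∧ f2 = 4) ∨ (f1 = 2 ∧ f2 = 5) := by omega
    rcases ce with ⟨rfl, rfl⟩ | ⟨rfl, rfl⟩ | ⟨rfl, rfl⟩ <;>
    rcases cf with ⟨rfl, rfl⟩ | ⟨rfl, rfl⟩ | ⟨rfl, rfl⟩ <;>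
    simp only [v03, v14, v25] <;> exact pos_help (by norm_num) (by norm_num) hk

theorem Flip.gd : ∀ n, 6 ≤ n → ∀ (T₁ T₂ : ℕ → ℕ → Prop) (e1 e2 f1 f2 : ℕ),
    Flip n T₁ T₂ e1 e2 f1 f2 → Gd n T₁ T₂ e1 e2 f1 f2 := by
  intro n hn
  induction n, hn using Nat.le_induction with
  | base => intro T₁ T₂ e1 e2 f1 f2 h; exact Gd.base h
  | succ n hn ih =>
    have aux : ∀ s, ∀ (T₁ T₂ : ℕ → ℕ → Prop) (e1 e2 f1 f2 : ℕ), Flip (n + 1) T₁ T₂ e1 e2 f1 f2 →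
        s + 3 < n + 1 → T₁ s (s + 3) → T₂ s (s + 3) → e1 ≠ s + 1 → e1 ≠ s + 2 → e2 ≠ s + 1 → e2 ≠ s + 2 →
        Gd (n + 1) T₁ T₂ e1 e2 f1 f2 := by
      intro s
      induction s with
      | zero =>
        intro T₁ T₂ e1 e2 f1 f2 h _ h1 h2 ha hb hc hd
        exact Gd.con (by omega) h h1 h2 ha hb hc hd (ih _ _ _ _ _ _ (h.con (by omega) h1 h2 ha hb hc hd))
      | succ s ihs =>
        intro T₁ T₂ e1 e2 f1 f2 h hs h1 h2 ha hb hc hd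
        have l1 := h.elt
        have l2 := h.en
        refine Gd.rot h.elt h.en h.flt h.fn (ihs _ _ _ _ _ _ h.rot (by omega)
          ((rot_low (by omega)).2 (by rwa [show s + 3 + 1 = s + 1 + 3 by omega]))
          ((rot_low (by omega)).2 (by rwa [show s + 3 + 1 = s + 1 + 3 by omega])) ?_ ?_ ?_ ?_)
        all_goals (simp only [rL, rR, ne_eq]; split_ifs <;> omega)
    have long : ∀ (T₁ T₂ : ℕ → ℕ → Prop) (e1 e2 f1 f2 : ℕ), Flip (n + 1) T₁ T₂ e1 e2 f1 f2 →
        e1 + 4 ≤ e2 → Gd (n + 1) T₁ T₂ e1 e2 f1 f2 := by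
      intro T₁ T₂ e1 e2 f1 f2 h hl
      have l2 := h.en
      obtain ⟨s, q1, q2, q3⟩ := ear h.c1 h.m1 _ e1 e2 le_rfl (by omega) h.en h.e1m
      have q4 : T₂ s (s + 3) := by
        rcases h.s1 s (s + 3) (by omega) (by omega) q3 with g | g
        · exact g
        · omega
      exact aux s T₁ T₂ e1 e2 f1 f2 h (by omega) q3 q4 (by omega) (by omega) (by omega) (by omega)
    have gen : ∀ k, ∀ (T₁ T₂ : ℕ → ℕ → Prop) (e1 e2 f1 f2 : ℕ), Flip (n + 1) T₁ T₂ e1 e2 f1 f2 →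
        e1 ≤ k → Gd (n + 1) T₁ T₂ e1 e2 f1 f2 := by
      intro k
      induction k with
      | zero =>
        intro T₁ T₂ e1 e2 f1 f2 h hk
        by_cases hl : e1 + 4 ≤ e2
        · exact long _ _ _ _ _ _ h hl
        · refine Gd.rot h.elt h.en h.flt h.fn (long _ _ _ _ _ _ h.rot ?_)
          have l1 := h.elt
          unfold rL rR; split_ifs <;> omega
      | succ k ihk =>
        intro T₁ T₂ e1 e2 f1 f2 h hk
        by_cases h0 : e1 = 0
        · exact ihk _ _ _ _ _ _ h (by omega)
        · refine Gd.rot h.elt h.en h.flt h.fn (ihk _ _ _ _ _ _ h.rot ?_)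
          unfold rL; split_ifs; omega
    intro T₁ T₂ e1 e2 f1 f2 h
    exact gen e1 _ _ _ _ _ _ h le_rfl

theorem Gd.norm {n : ℕ} {T₁ T₂ : ℕ → ℕ → Prop} {e1 e2 f1 f2 : ℕ} (hn : 2 ≤ n)
    (h1 : e1 < n) (h2 : e2 < n) (h3 : f1 < n) (h4 : f2 < n) (G : Gd n T₁ T₂ e1 e2 f1 f2) :
    ∃ t : ℕ → ℝ, (∀ i j, i < j → j < n → t i < t j) ∧
      ∀ w : ℕ → ℕ → ℝ, (∀ i j, w i j = - w j i) →
        (∀ i j, i < j → w i j ≠ 0 → j < n ∧ (T₁ i j ∨ T₂ i j)) →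
        (∀ i, i < n → ∀ b, b ≤ 3 → ∑ j ∈ Finset.range n, w i j * t j ^ b = 0) → w ≠ 0 →
        0 < w e1 e2 * w f1 f2 := by
  obtain ⟨q, hq, H⟩ := G
  obtain ⟨D, hD⟩ : ∃ D, D = dt (q 0) (q (n - 1)) := ⟨_, rfl⟩
  have D0 : 0 < D := by rw [hD]; exact hq _ _ (by omega) (by omega)
  obtain ⟨l, hl⟩ : ∃ l : ℕ → ℝ, ∀ j, l j = dt (q 0) (q j) - dt (q (n - 1)) (q j) := ⟨_, fun _ => rfl⟩
  have as : ∀ a b : ℝ × ℝ, dt a b = - dt b a := by intro a b; unfold dt; ring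
  have l0 : ∀ j, j < n → 0 < l j := by
    intro j hj
    rw [hl]
    by_cases a : j = 0
    · subst a
      rw [dt_self, as, ← hD]; linarith
    · have r1 := hq 0 j (by omega) hj
      by_cases b : j = n - 1
      · rw [b] at r1 ⊢
        rw [dt_self]; linarith
      · have r2 := hq j (n - 1) (by omega) (by omega)
        rw [as (q (n - 1))]; linarith
  let t : ℕ → ℝ := fun j => dt (q 0) (q j) / l j
  have tl : ∀ j, j < n → t j * l j = dt (q 0) (q j) := fun j hj => div_mul_cancel₀ _ (l0 j hj).ne'
  have pl : ∀ p j, j < n → dt p (q j) = l j * (dt p (q 0) / D + (dt p (q (n - 1)) - dt p (q 0)) / D * t j) := by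
    intro p j hj
    have e1 : l j * (dt p (q 0) / D + (dt p (q (n - 1)) - dt p (q 0)) / D * t j) =
      (l j * dt p (q 0) + (dt p (q (n - 1)) - dt p (q 0)) * (t j * l j)) / D := by ring
    rw [e1, tl j hj, eq_div_iff D0.ne', hl, hD]
    unfold dt
    ring
  refine ⟨t, ?_, ?_⟩
  · intro i j hij hj
    have hi : i < n := by omega
    show dt (q 0) (q i) / l i < dt (q 0) (q j) / l j
    rw [div_lt_div_iff₀ (l0 i hi) (l0 j hj)]
    have := mul_pos D0 (hq i j hij hj)
    have e : dt (q 0) (q j) * l i - dt (q 0) (q i) * l j = D * dt (q i) (q j) := by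
      rw [hl, hl, hD]; unfold dt; ring
    linarith
  · intro w wa ws we wn
    have key := H (fun i j => w i j / (l i ^ 3 * l j ^ 3)) ⟨?_, ?_, ?_⟩ ?_
    · have p1 := pow_pos (l0 e1 h1) 3
      have p2 := pow_pos (l0 e2 h2) 3
      have p3 := pow_pos (l0 f1 h3) 3
      have p4 := pow_pos (l0 f2 h4) 3
      have e : w e1 e2 * w f1 f2 = (w e1 e2 / (l e1 ^ 3 * l e2 ^ 3)) * (w f1 f2 / (l f1 ^ 3 * l f2 ^ 3)) *
          ((l e1 ^ 3 * l e2 ^ 3) * (l f1 ^ 3 * l f2 ^ 3)) := by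
        rw [mul_mul_mul_comm, div_mul_cancel₀ _ (by positivity), div_mul_cancel₀ _ (by positivity)]
      rw [e]
      exact mul_pos key (by positivity)
    · intro i j
      show w i j / (l i ^ 3 * l j ^ 3) = - (w j i / (l j ^ 3 * l i ^ 3))
      rw [wa i j, mul_comm (l i ^ 3), neg_div]
    · intro i j hij hne
      apply ws i j hij
      intro h0
      apply hne
      simp only [h0, zero_div]
    · intro i hi p₁ p₂ p₃
      obtain ⟨a1, b1, E1⟩ : ∃ a b : ℝ, ∀ j, j < n → dt p₁ (q j) = l j * (a + b * t j) := ⟨_, _, pl p₁⟩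
      obtain ⟨a2, b2, E2⟩ : ∃ a b : ℝ, ∀ j, j < n → dt p₂ (q j) = l j * (a + b * t j) := ⟨_, _, pl p₂⟩
      obtain ⟨a3, b3, E3⟩ : ∃ a b : ℝ, ∀ j, j < n → dt p₃ (q j) = l j * (a + b * t j) := ⟨_, _, pl p₃⟩
      have : ∀ j ∈ Finset.range n, w i j / (l i ^ 3 * l j ^ 3) * (dt p₁ (q j) * dt p₂ (q j) * dt p₃ (q j)) =
          (a1 * a2 * a3 / l i ^ 3) * (w i j * t j ^ 0) +
          ((a1 * a2 * b3 + a1 * b2 * a3 + b1 * a2 * a3) / l i ^ 3) * (w i j * t j ^ 1) +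
          ((a1 * b2 * b3 + b1 * a2 * b3 + b1 * b2 * a3) / l i ^ 3) * (w i j * t j ^ 2) +
          (b1 * b2 * b3 / l i ^ 3) * (w i j * t j ^ 3) := by
        intro j hj
        have hj' := Finset.mem_range.1 hj
        have z1 := (l0 i hi).ne'
        have z2 := (l0 j hj').ne'
        rw [E1 j hj', E2 j hj', E3 j hj']
        field_simp
        ring
      rw [Finset.sum_congr rfl this]
      simp only [Finset.sum_add_distrib, ← Finset.mul_sum]
      rw [we i hi 0 (by omega), we i hi 1 (by omega), we i hi 2 (by omega), we i hi 3 (by omega)]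
      ring
    · intro h0
      apply wn
      have z : ∀ i j, i < j → w i j = 0 := by
        intro i j hij
        by_contra hne
        have hj := (ws i j hij hne).1
        have := congrFun (congrFun h0 i) j
        simp only [Pi.zero_apply] at this
        rcases div_eq_zero_iff.1 this with g | g
        · exact hne g
        · have p1 := pow_pos (l0 i (by omega)) 3
          have p2 := pow_pos (l0 j hj) 3
          have := mul_pos p1 p2
          linarith
      funext i j
      show w i j = 0
      rcases lt_trichotomy i j with g | rfl | g
      · exact z i j g
      · have := wa i i; linarith
      · rw [wa, z j i g, neg_zero]

/-- the relation on naturals attached to a set of pairs -/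
def Pn {n : ℕ} (T : Set (Pair n)) (i j : ℕ) : Prop :=
  ∃ (hi : i < n) (hj : j < n) (h : i < j), (⟨(⟨i, hi⟩, ⟨j, hj⟩), h⟩ : Pair n) ∈ T

theorem Pn_mk {n : ℕ} {T : Set (Pair n)} (g : Pair n) : Pn T (g.1.1 : ℕ) (g.1.2 : ℕ) ↔ g ∈ T :=
  ⟨fun ⟨_, _, _, h⟩ => h, fun h => ⟨g.1.1.2, g.1.2.2, g.2, h⟩⟩

theorem Pn_cf {n : ℕ} {T : Set (Pair n)} (h : CrossingFree n 2 T) : CF n (Pn T) := by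
  classical
  rintro a b c d e f h1 h2 h3 h4 h5 h6 ⟨ha, hd, had, t1⟩ ⟨hb, he, hbe, t2⟩ ⟨hc, hf, hcf, t3⟩
  apply h
  refine ⟨{⟨(⟨a, ha⟩, ⟨d, hd⟩), had⟩, ⟨(⟨b, hb⟩, ⟨e, he⟩), hbe⟩, ⟨(⟨c, hc⟩, ⟨f, hf⟩), hcf⟩}, ?_, ?_, ?_⟩
  · intro x hx
    simp only [Finset.coe_insert, Finset.coe_singleton, Set.mem_insert_iff, Set.mem_singleton_iff] at hx
    rcases hx with rfl | rfl | rfl <;> assumption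
  · rw [Finset.card_eq_three]
    refine ⟨_, _, _, ?_, ?_, ?_, rfl⟩ <;> simp only [ne_eq, Subtype.mk.injEq, Prod.mk.injEq, Fin.mk.injEq] <;> omega
  · intro x hx y hy hne
    simp only [Finset.mem_insert, Finset.mem_singleton] at hx hy
    rcases hx with rfl | rfl | rfl <;> rcases hy with rfl | rfl | rfl <;>
      first
      | exact (hne rfl).elim
      | (simp only [Cross, Fin.mk_lt_mk]; omega)

theorem Pn_mx {n : ℕ} {T : Set (Pair n)} (h : IsTriangulation n 2 T) : Mx n (Pn T) := by
  classical
  intro i j hij hj hT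
  have hi : i < n := by omega
  obtain ⟨g, hg⟩ : ∃ g : Pair n, g = ⟨(⟨i, hi⟩, ⟨j, hj⟩), hij⟩ := ⟨_, rfl⟩
  have g1 : (g.1.1 : ℕ) = i := by rw [hg]
  have g2 : (g.1.2 : ℕ) = j := by rw [hg]
  have gT : g ∉ T := by
    intro hh
    rw [← Pn_mk, g1, g2] at hh
    exact hT hh
  have hS : ¬ CrossingFree n 2 (insert g T) := by
    intro hh
    have := h.2 _ hh (Set.subset_insert _ _)
    exact gT (this ▸ Set.mem_insert g T)
  unfold CrossingFree at hS
  rw [not_not] at hS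
  obtain ⟨C, hC, hc, hx⟩ := hS
  have gC : g ∈ C := by
    by_contra hh
    apply h.1
    refine ⟨C, ?_, hc, hx⟩
    intro x hxC
    rcases hC hxC with rfl | q
    · exact (hh hxC).elim
    · exact q
  have h2 : (C.erase g).card = 2 := by rw [Finset.card_erase_of_mem gC, hc]
  obtain ⟨x, y, hxy, hE⟩ := Finset.card_eq_two.1 h2
  have xm : x ∈ C.erase g := by rw [hE]; simp
  have ym : y ∈ C.erase g := by rw [hE]; simp
  have xC := Finset.mem_of_mem_erase xm
  have yC := Finset.mem_of_mem_erase ym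
  have xg := Finset.ne_of_mem_erase xm
  have yg := Finset.ne_of_mem_erase ym
  have xT : x ∈ T := (hC xC).resolve_left xg
  have yT : y ∈ T := (hC yC).resolve_left yg
  have main : ∀ x y : Pair n, x ∈ T → y ∈ T → Cross g x → Cross g y →
      (x.val.1 < y.val.1 ∧ y.val.1 < x.val.2 ∧ x.val.2 < y.val.2) →
      (∃ b c y z, i < b ∧ b < c ∧ c < j ∧ j < y ∧ y < z ∧ z < n ∧ Pn T b y ∧ Pn T c z) ∨
      (∃ a c x z, a < i ∧ i < c ∧ c < x ∧ x < j ∧ j < z ∧ z < n ∧ Pn T a x ∧ Pn T c z) ∨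
      (∃ a b x y, a < b ∧ b < i ∧ i < x ∧ x < y ∧ y < j ∧ Pn T a x ∧ Pn T b y) := by
    intro x y xT yT cx cy cxy
    have px := (Pn_mk x).2 xT
    have py := (Pn_mk y).2 yT
    have xn := x.1.2.2
    have yn := y.1.2.2
    simp only [Cross, Fin.lt_def, g1, g2] at cx cy cxy
    rcases cx with cx | cx <;> rcases cy with cy | cy
    · exact Or.inl ⟨_, _, _, _, by omega, by omega, by omega, by omega, by omega, by omega, px, py⟩
    · omega
    · exact Or.inr (Or.inl ⟨_, _, _, _, by omega, by omega, by omega, by omega, by omega, by omega, px, py⟩)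
    · exact Or.inr (Or.inr ⟨_, _, _, _, by omega, by omega, by omega, by omega, by omega, px, py⟩)
  rcases hx x xC y yC hxy with q | q
  · exact main x y xT yT (hx g gC x xC xg.symm) (hx g gC y yC yg.symm) q
  · exact main y x yT xT (hx g gC y yC yg.symm) (hx g gC x xC xg.symm) q

theorem mk_flip {n : ℕ} {T₁ T₂ : Set (Pair n)}
    (h₁ : IsTriangulation n 2 T₁) (h₂ : IsTriangulation n 2 T₂)
    (e f : Pair n) (he : T₁ \ T₂ = {e}) (hf : T₂ \ T₁ = {f}) :
    Flip n (Pn T₁) (Pn T₂) (e.1.1 : ℕ) (e.1.2 : ℕ) (f.1.1 : ℕ) (f.1.2 : ℕ) := by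
  have a : e ∈ T₁ \ T₂ := by rw [he]; rfl
  have b : f ∈ T₂ \ T₁ := by rw [hf]; rfl
  refine ⟨Pn_cf h₁.1, Pn_mx h₁, Pn_cf h₂.1, Pn_mx h₂, e.2, e.1.2.2, f.2, f.1.2.2, (Pn_mk e).2 a.1,
    fun h => a.2 ((Pn_mk e).1 h), (Pn_mk f).2 b.1, fun h => b.2 ((Pn_mk f).1 h), ?_, ?_⟩
  · rintro i j - - ⟨hi, hj, hij, t⟩
    by_cases g : (⟨(⟨i, hi⟩, ⟨j, hj⟩), hij⟩ : Pair n) ∈ T₂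
    · exact Or.inl ⟨hi, hj, hij, g⟩
    · right
      have : (⟨(⟨i, hi⟩, ⟨j, hj⟩), hij⟩ : Pair n) ∈ T₁ \ T₂ := ⟨t, g⟩
      rw [he] at this
      rw [← Set.mem_singleton_iff.1 this]
      exact ⟨rfl, rfl⟩
  · rintro i j - - ⟨hi, hj, hij, t⟩
    by_cases g : (⟨(⟨i, hi⟩, ⟨j, hj⟩), hij⟩ : Pair n) ∈ T₁
    · exact Or.inl ⟨hi, hj, hij, g⟩
    · right
      have : (⟨(⟨i, hi⟩, ⟨j, hj⟩), hij⟩ : Pair n) ∈ T₂ \ T₁ := ⟨t, g⟩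
      rw [hf] at this
      rw [← Set.mem_singleton_iff.1 this]
      exact ⟨rfl, rfl⟩

/-- a weight on pairs, extended to all ordered pairs of vertices by zero -/
noncomputable def LL {n : ℕ} (lam : Pair n → ℝ) (i j : Fin n) : ℝ :=
  if h : i < j then lam ⟨(i, j), h⟩ else 0

theorem LL_sum {n : ℕ} (lam : Pair n → ℝ) (F : Fin n → Fin n → ℝ) :
    ∑ g : Pair n, lam g * F g.1.1 g.1.2 = ∑ i, ∑ j, LL lam i j * F i j := by
  classical
  rw [← Fintype.sum_prod_type' (fun i j => LL lam i j * F i j),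
    ← Fintype.sum_subtype_add_sum_subtype (fun p : Fin n × Fin n => p.1 < p.2)]
  have z : ∑ p : {p : Fin n × Fin n // ¬ p.1 < p.2}, LL lam p.1.1 p.1.2 * F p.1.1 p.1.2 = 0 := by
    apply Finset.sum_eq_zero
    intro p _
    rw [LL, dif_neg p.2, zero_mul]
  rw [z, add_zero]
  apply Finset.sum_congr rfl
  intro g _
  rw [LL, dif_pos g.2]

theorem row_sum {n d : ℕ} (lam : Pair n → ℝ) (p : Fin n → Fin d → ℝ)
    (h : ∑ g : Pair n, lam g • bjRow p g = 0) (m : Fin n) (a : Fin d) :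
    ∑ j, (LL lam m j + LL lam j m) * (p j a - p m a) = 0 := by
  have h1 := congrFun h (m, a)
  simp only [Finset.sum_apply, Pi.smul_apply, smul_eq_mul, Pi.zero_apply] at h1
  have h0 := LL_sum lam (fun i j => if m = i then p i a - p j a else if m = j then p j a - p i a else 0)
  have h1 := h0.symm.trans h1
  have h2 : ∀ i j, LL lam i j * (if m = i then p i a - p j a else if m = j then p j a - p i a else 0) =
      (if m = i then LL lam i j * (p i a - p j a) else 0) + (if m = j then LL lam i j * (p j a - p i a) else 0) := by
    intro i j
    by_cases q : i = j
    · subst q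
      simp [LL]
    · split_ifs with q1 q2
      · exact (q (q1.symm.trans q2)).elim
      all_goals ring
  simp only [h2, Finset.sum_add_distrib] at h1
  rw [Finset.sum_comm] at h1
  simp only [Finset.sum_ite_eq, Finset.mem_univ, if_true] at h1
  rw [← Finset.sum_add_distrib] at h1
  rw [← neg_eq_zero, ← Finset.sum_neg_distrib, ← h1]
  apply Finset.sum_congr rfl
  intro j _
  ring

theorem poly_zero {x : Fin 5 → ℝ} (hx : Function.Injective x) {a b c d e : ℝ}
    (h : ∀ k, a + b * x k + c * x k ^ 2 + d * x k ^ 3 + e * x k ^ 4 = 0) :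
    a = 0 ∧ b = 0 ∧ c = 0 ∧ d = 0 ∧ e = 0 := by
  have := Matrix.eq_zero_of_forall_index_sum_pow_mul_eq_zero (v := ![a, b, c, d, e]) hx (by
    intro k
    rw [← h k]
    simp [Fin.sum_univ_succ]
    ring)
  refine ⟨congrFun this 0, congrFun this 1, congrFun this 2, congrFun this 3, congrFun this 4⟩

/-- trivial infinitesimal motions -/
def mot (c : Fin 10 → ℝ) (x : ℝ) : Fin 4 → ℝ :=
  ![c 0 - c 2 * x ^ 2 - c 4 * x ^ 3 - c 7 * x ^ 4,
    c 1 + c 2 * x - c 5 * x ^ 3 - c 8 * x ^ 4,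
    c 3 + c 4 * x + c 5 * x ^ 2 - c 9 * x ^ 4,
    c 6 + c 7 * x + c 8 * x ^ 2 + c 9 * x ^ 3]

theorem mot_zero {x : Fin 5 → ℝ} (hx : Function.Injective x) {c : Fin 10 → ℝ} (h : ∀ k, mot c (x k) = 0) :
    c = 0 := by
  have p0 := poly_zero hx (a := c 0) (b := 0) (c := - c 2) (d := - c 4) (e := - c 7) (fun k => by
    have := congrFun (h k) 0
    simp only [mot, Matrix.cons_val, Pi.zero_apply] at this
    linarith)
  have p1 := poly_zero hx (a := c 1) (b := c 2) (c := 0) (d := - c 5) (e := - c 8) (fun k => by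
    have := congrFun (h k) 1
    simp only [mot, Matrix.cons_val, Pi.zero_apply] at this
    linarith)
  have p2 := poly_zero hx (a := c 3) (b := c 4) (c := c 5) (d := 0) (e := - c 9) (fun k => by
    have := congrFun (h k) 2
    simp only [mot, Matrix.cons_val, Pi.zero_apply] at this
    linarith)
  have p3 := poly_zero hx (a := c 6) (b := c 7) (c := c 8) (d := c 9) (e := 0) (fun k => by
    have := congrFun (h k) 3
    simp only [mot, Matrix.cons_val, Pi.zero_apply] at this
    linarith)
  funext i
  fin_cases i
  · exact p0.1
  · exact p1.1
  · exact p1.2.1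
  · exact p2.1
  · exact p2.2.1
  · exact p2.2.2.1
  · exact p3.1
  · exact p3.2.1
  · exact p3.2.2.1
  · exact p3.2.2.2.1

theorem row_mot {n : ℕ} (t : Fin n → ℝ) (c : Fin 10 → ℝ) (g : Pair n) :
    ∑ ma : Fin n × Fin 4, bjRow (fun i (b : Fin 4) => t i ^ ((b : ℕ) + 1)) g ma * mot c (t ma.1) ma.2 = 0 := by
  have hne : g.1.1 ≠ g.1.2 := g.2.ne
  rw [Fintype.sum_prod_type]
  rw [Finset.sum_eq_add g.1.1 g.1.2 hne]
  · simp only [bjRow, if_true, hne.symm, if_false, Fin.sum_univ_four, mot, Matrix.cons_val]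
    simp only [Fin.val_zero, Fin.val_one, Fin.val_two, show ((3 : Fin 4) : ℕ) = 3 from rfl]
    ring
  · intro m _ hm
    simp only [bjRow, hm.1, hm.2, if_false, zero_mul, Finset.sum_const_zero]
  · intro h; exact (h (Finset.mem_univ _)).elim
  · intro h; exact (h (Finset.mem_univ _)).elim

theorem ex_dep {n : ℕ} (hn : 5 ≤ n) (t : Fin n → ℝ) (ht : Function.Injective t) (U : Finset (Pair n))
    (hU : 4 * n < U.card + 10) :
    ∃ lam : Pair n → ℝ, lam ≠ 0 ∧ (∀ g, lam g ≠ 0 → g ∈ U) ∧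
      ∑ g : Pair n, lam g • bjRow (fun i (b : Fin 4) => t i ^ ((b : ℕ) + 1)) g = 0 := by
  classical
  let R : Pair n → Fin n × Fin 4 → ℝ := bjRow (fun i (b : Fin 4) => t i ^ ((b : ℕ) + 1))
  let Θ : ((U → ℝ) × (Fin 10 → ℝ)) →ₗ[ℝ] (Fin n × Fin 4 → ℝ) :=
    { toFun := fun x ma => ∑ g : U, x.1 g * R g.1 ma + mot x.2 (t ma.1) ma.2
      map_add' := by
        intro x y
        funext ma
        have : mot (x.2 + y.2) (t ma.1) ma.2 = mot x.2 (t ma.1) ma.2 + mot y.2 (t ma.1) ma.2 := by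
          obtain ⟨m, a⟩ := ma
          fin_cases a <;> simp [mot] <;> ring
        simp only [Prod.fst_add, Prod.snd_add, Pi.add_apply, add_mul, Finset.sum_add_distrib, this]
        ring
      map_smul' := by
        intro r x
        funext ma
        have : mot (r • x.2) (t ma.1) ma.2 = r * mot x.2 (t ma.1) ma.2 := by
          obtain ⟨m, a⟩ := ma
          fin_cases a <;> simp [mot] <;> ring
        simp only [Prod.smul_fst, Prod.smul_snd, Pi.smul_apply, smul_eq_mul, this, RingHom.id_apply, mul_add,
          Finset.mul_sum, mul_assoc] }
  have hk : LinearMap.ker Θ ≠ ⊥ := by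
    apply LinearMap.ker_ne_bot_of_finrank_lt
    simp only [Module.finrank_prod, Module.finrank_fintype_fun_eq_card, Fintype.card_prod, Fintype.card_fin,
      Fintype.card_coe]
    omega
  obtain ⟨x, hx, x0⟩ := (Submodule.ne_bot_iff _).1 hk
  have E : ∀ ma, ∑ g : U, x.1 g * R g.1 ma + mot x.2 (t ma.1) ma.2 = 0 := fun ma => congrFun hx ma
  have orth : ∑ ma : Fin n × Fin 4, (∑ g : U, x.1 g * R g.1 ma) * mot x.2 (t ma.1) ma.2 = 0 := by
    simp only [Finset.sum_mul]
    rw [Finset.sum_comm]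
    apply Finset.sum_eq_zero
    intro g _
    simp only [mul_assoc]
    rw [← Finset.mul_sum, row_mot, mul_zero]
  have sq : ∑ ma : Fin n × Fin 4, mot x.2 (t ma.1) ma.2 * mot x.2 (t ma.1) ma.2 = 0 := by
    rw [← neg_eq_zero, ← orth, ← Finset.sum_neg_distrib]
    apply Finset.sum_congr rfl
    intro ma _
    have := E ma
    rw [eq_neg_of_add_eq_zero_left this]
    ring
  have m0 : ∀ ma : Fin n × Fin 4, mot x.2 (t ma.1) ma.2 = 0 := by
    intro ma
    exact mul_self_eq_zero.1 ((Finset.sum_eq_zero_iff_of_nonneg (fun _ _ => mul_self_nonneg _)).1 sq ma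
      (Finset.mem_univ _))
  have c0 : x.2 = 0 := by
    apply mot_zero (x := fun k => t (Fin.castLE hn k))
    · intro a b hab
      exact Fin.castLE_injective hn (ht hab)
    · intro k
      funext a
      exact m0 (Fin.castLE hn k, a)
  have x1 : x.1 ≠ 0 := fun h => x0 (Prod.ext h c0)
  refine ⟨fun g => if h : g ∈ U then x.1 ⟨g, h⟩ else 0, ?_, ?_, ?_⟩
  · intro h
    apply x1
    funext g
    have := congrFun h g.1
    simpa using this
  · intro g hg
    by_contra h
    simp [h] at hg
  · funext ma
    have e1 := E ma
    rw [m0, add_zero] at e1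
    rw [Finset.sum_apply]
    simp only [Pi.smul_apply, smul_eq_mul, Pi.zero_apply]
    refine Eq.trans ?_ e1
    rw [← Finset.sum_subset (Finset.subset_univ U), ← Finset.sum_coe_sort U]
    · apply Finset.sum_congr rfl
      intro g _
      simp [R]
    · intro g _ h
      simp [h]

theorem all_pos {n : ℕ} (T₁ T₂ : Set (Pair n)) (e f : Pair n) (t : ℕ → ℝ)
    (ht : ∀ i j, i < j → j < n → t i < t j)
    (H : ∀ w : ℕ → ℕ → ℝ, (∀ i j, w i j = - w j i) →
        (∀ i j, i < j → w i j ≠ 0 → j < n ∧ (Pn T₁ i j ∨ Pn T₂ i j)) →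
        (∀ i, i < n → ∀ b, b ≤ 3 → ∑ j ∈ Finset.range n, w i j * t j ^ b = 0) → w ≠ 0 →
        0 < w (e.1.1 : ℕ) (e.1.2 : ℕ) * w (f.1.1 : ℕ) (f.1.2 : ℕ))
    (lam : Pair n → ℝ) (l0 : lam ≠ 0) (ls : ∀ g, lam g ≠ 0 → g ∈ T₁ ∪ T₂)
    (hs : ∑ g : Pair n, lam g • bjRow (fun (i : Fin n) (b : Fin 4) => t i ^ ((b : ℕ) + 1)) g = 0) :
    0 < lam e * lam f := by
  classical
  let S : Fin n → Fin n → ℝ := fun i j => LL lam i j + LL lam j i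
  have Slt : ∀ i j (h : i < j), S i j = lam ⟨(i, j), h⟩ := by
    intro i j h
    simp only [S, LL]
    rw [dif_pos h, dif_neg (not_lt.2 h.le), add_zero]
  let w : ℕ → ℕ → ℝ := fun i j => if h : i < n ∧ j < n then S ⟨i, h.1⟩ ⟨j, h.2⟩ * (t j - t i) else 0
  have wF : ∀ i j : Fin n, w i j = S i j * (t j - t i) := by
    intro i j
    simp only [w]
    rw [dif_pos ⟨i.2, j.2⟩]
  have wg : ∀ g : Pair n, w (g.1.1 : ℕ) (g.1.2 : ℕ) = lam g * (t g.1.2 - t g.1.1) := by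
    intro g
    rw [wF, Slt _ _ g.2]
  have tp : ∀ g : Pair n, 0 < t g.1.2 - t g.1.1 := by
    intro g
    have := ht g.1.1 g.1.2 g.2 g.1.2.2
    linarith
  have Z : ∀ (i : Fin n) (B : ℕ), B ≤ 4 → ∑ j : Fin n, S i j * (t j ^ B - t i ^ B) = 0 := by
    intro i B hB
    rcases B with _ | a
    · simp
    · exact row_sum lam _ hs i (⟨a, by omega⟩ : Fin 4)
  have key := H w ?_ ?_ ?_ ?_
  · rw [wg, wg] at key
    have e1 : lam e * (t e.1.2 - t e.1.1) * (lam f * (t f.1.2 - t f.1.1)) =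
        lam e * lam f * ((t e.1.2 - t e.1.1) * (t f.1.2 - t f.1.1)) := by ring
    rw [e1] at key
    exact pos_of_mul_pos_left key (mul_pos (tp e) (tp f)).le
  · intro i j
    by_cases h : i < n ∧ j < n
    · rw [wF ⟨i, h.1⟩ ⟨j, h.2⟩, wF ⟨j, h.2⟩ ⟨i, h.1⟩]
      simp only [S]
      ring
    · simp only [w]
      rw [dif_neg h, dif_neg (fun g => h ⟨g.2, g.1⟩), neg_zero]
  · intro i j hij hw
    by_cases h : i < n ∧ j < n
    · refine ⟨h.2, ?_⟩
      have h1 := wF ⟨i, h.1⟩ ⟨j, h.2⟩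
      rw [Slt _ _ hij] at h1
      have h2 : lam ⟨(⟨i, h.1⟩, ⟨j, h.2⟩), hij⟩ ≠ 0 := by
        intro h3
        rw [h3, zero_mul] at h1
        exact hw h1
      rcases ls _ h2 with g | g
      · exact Or.inl ⟨h.1, h.2, hij, g⟩
      · exact Or.inr ⟨h.1, h.2, hij, g⟩
    · exact (hw (dif_neg h)).elim
  · intro i hi b hb
    rw [Finset.sum_range]
    have r1 := Z ⟨i, hi⟩ (b + 1) (by omega)
    have r2 := Z ⟨i, hi⟩ b (by omega)
    have : ∀ j : Fin n, w i j * t j ^ b = S ⟨i, hi⟩ j * (t j ^ (b + 1) - t i ^ (b + 1)) -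
        t i * (S ⟨i, hi⟩ j * (t j ^ b - t i ^ b)) := by
      intro j
      rw [wF ⟨i, hi⟩ j]
      ring
    simp only [this, Finset.sum_sub_distrib, ← Finset.mul_sum]
    exact (congrArg₂ (fun x y => x - t i * y) r1 r2).trans (by simp)
  · intro h0
    apply l0
    funext g
    have := congrFun (congrFun h0 g.1.1) g.1.2
    rw [wg] at this
    rcases mul_eq_zero.1 this with q | q
    · exact q
    · exact ((tp g).ne' q).elim

theorem indep_of {n : ℕ} (T U : Set (Pair n)) (e f : Pair n) (R : Pair n → Fin n × Fin 4 → ℝ) (hT : T ⊆ U)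
    (hef : e ∉ T ∨ f ∉ T)
    (H : ∀ lam : Pair n → ℝ, lam ≠ 0 → (∀ g, lam g ≠ 0 → g ∈ U) → (∑ g : Pair n, lam g • R g = 0) →
        0 < lam e * lam f) : LinearIndependent ℝ (fun a : T => R a.val) := by
  classical
  rw [Fintype.linearIndependent_iff]
  intro x hx
  by_contra hne
  push Not at hne
  obtain ⟨i, hi⟩ := hne
  have key := H (fun g => if h : g ∈ T then x ⟨g, h⟩ else 0) ?_ ?_ ?_
  · rcases hef with q | q
    · simp [q] at key
    · simp [q] at key
  · intro h
    apply hi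
    have := congrFun h i.1
    simpa using this
  · intro g hg
    by_contra h
    have h2 : g ∉ T := fun q => h (hT q)
    simp [h2] at hg
  · rw [← hx, ← Fintype.sum_subtype_add_sum_subtype (fun g : Pair n => g ∈ T)]
    have z : ∑ g : {g : Pair n // ¬ g ∈ T}, (if h : g.1 ∈ T then x ⟨g.1, h⟩ else 0) • R g.1 = 0 := by
      apply Finset.sum_eq_zero
      intro g _
      rw [dif_neg g.2, zero_smul]
    rw [z, add_zero]
    apply Finset.sum_congr rfl
    intro g _
    rw [dif_pos g.2]

/-- For any flip between two 2-triangulations `T₁`, `T₂` of the `n`-gon there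
are positions `t₁ < … < tₙ` along the moment curve in `ℝ⁴` such that both triangulations index
independent rows of `R(p)` and the unique (up to scalar) dependence `λ` supported on `T₁ ∪ T₂`
satisfies `λ_e · λ_f > 0` for the two flipped edges. -/
theorem stmt19 (n : ℕ) (hn : 5 ≤ n) (T₁ T₂ : Set (Pair n))
    (h₁ : IsTriangulation n 2 T₁) (h₂ : IsTriangulation n 2 T₂)
    (e f : Pair n) (he : T₁ \ T₂ = {e}) (hf : T₂ \ T₁ = {f}) :
    ∃ t : Fin n → ℝ, StrictMono t ∧
      LinearIndependent ℝ
        (fun a : T₁ => bjRow (fun i (b : Fin 4) => t i ^ ((b : ℕ) + 1)) a.val) ∧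
      LinearIndependent ℝ
        (fun a : T₂ => bjRow (fun i (b : Fin 4) => t i ^ ((b : ℕ) + 1)) a.val) ∧
      (∃ lam : Pair n → ℝ, lam ≠ 0 ∧ (∀ g, lam g ≠ 0 → g ∈ T₁ ∪ T₂) ∧
        ∑ g : Pair n, lam g • bjRow (fun i (b : Fin 4) => t i ^ ((b : ℕ) + 1)) g = 0) ∧
      ∀ lam : Pair n → ℝ, lam ≠ 0 → (∀ g, lam g ≠ 0 → g ∈ T₁ ∪ T₂) →
        (∑ g : Pair n, lam g • bjRow (fun i (b : Fin 4) => t i ^ ((b : ℕ) + 1)) g = 0) →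
        0 < lam e * lam f := by
  classical
  have F := mk_flip h₁ h₂ e f he hf
  have ae : e ∈ T₁ \ T₂ := by rw [he]; rfl
  have bf : f ∈ T₂ \ T₁ := by rw [hf]; rfl
  have n6 : 6 ≤ n := by
    by_contra h
    have l1 := F.elt
    have l2 := F.en
    exact F.e2m (F.m2.short F.elt F.en (by omega))
  obtain ⟨t, ht, H⟩ := (Flip.gd n n6 _ _ _ _ _ _ F).norm (by omega) (F.elt.trans F.en) F.en
    (F.flt.trans F.fn) F.fn
  have P := all_pos T₁ T₂ e f t ht H
  have mono : StrictMono (fun i : Fin n => t i) := fun i j hij => ht i j hij j.2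
  refine ⟨fun i => t i, mono, ?_, ?_, ?_, P⟩
  · exact indep_of T₁ (T₁ ∪ T₂) e f _ Set.subset_union_left (Or.inr bf.2) P
  · exact indep_of T₂ (T₁ ∪ T₂) e f _ Set.subset_union_right (Or.inl ae.2) P
  · have big : 4 * n < (Finset.univ.filter (fun g : Pair n => g ∈ T₁ ∪ T₂)).card + 10 := by
      have c1 := card_ge n hn _ F.c1 F.m1
      have fm : ((f.1.1 : ℕ), (f.1.2 : ℕ)) ∉ edg n (Pn T₁) := fun h => F.f1m (mem_edg.1 h).2.2
      have c2 := Finset.card_insert_of_notMem fm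
      have sub : insert ((f.1.1 : ℕ), (f.1.2 : ℕ)) (edg n (Pn T₁)) ⊆
          (Finset.univ.filter (fun g => g ∈ T₁ ∪ T₂)).image (fun g : Pair n => ((g.1.1 : ℕ), (g.1.2 : ℕ))) := by
        intro p hp
        rw [Finset.mem_image]
        rcases Finset.mem_insert.1 hp with rfl | hp
        · exact ⟨f, by simp [bf.1], rfl⟩
        · obtain ⟨_, _, x, y, z, g⟩ := mem_edg.1 hp
          exact ⟨_, Finset.mem_filter.2 ⟨Finset.mem_univ _, Or.inl g⟩, rfl⟩
      have c3 := (Finset.card_le_card sub).trans Finset.card_image_le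
      omega
    obtain ⟨lam, a, b, c⟩ := ex_dep hn (fun i : Fin n => t i) mono.injective _ big
    exact ⟨lam, a, fun g hg => (Finset.mem_filter.1 (b g hg)).2, c⟩
end
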